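/- arXiv:1410.7138 — 2 statements merged into one kernel-verified Lean document; each statement's English description precedes it below -/
import Mathlib

section
/- Let g ≥ 8 be even. Then O(g, ℤ/2) is isomorphic to the presented group with generators a₁, …, a_{g−1}, b, b₀, b₁, …, b_{(g−2)/2} and relators: (1) a_i² for i = 1, …, g−1 and b²; (2) (a_i a_j)² for |i − j| > 1; (3) (a_i a_{i+1})³ for i = 1, …, g−2; (4) (a_i b)² for i ≠ 4; (5) (a₄ b)³; (6) (a₂a₃a₄a₅a₆b)¹²·((a₁a₂a₃a₄a₅a₆b)⁹)⁻¹; (7) b₀·a₁⁻¹, b₁·b⁻¹, and b₂·((a₁a₂a₃a₄a₅b)⁵)⁻¹; (8) b_{i+1}·((b_{i−1} a_{2i} a_{2i+1} a_{2i+2} a_{2i+3} b_i)⁵ (b_{i−1} a_{2i} a_{2i+1} a_{2i+2} a_{2i+3})⁻⁶)⁻¹ for 2 ≤ i ≤ (g−4)/2; (9) the commutator [a_{g−5}, b_{(g−2)/2}]. -/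
/-!
The generators `a_i` and `b` act on `(ℤ/2)^g` as transvections: `a_i` along `e (i - 1) + e i`
(coordinates are counted from `0`) and `b` along `w 4 = e 0 + e 1 + e 2 + e 3`. The fifth power of the
Coxeter element of `D₆` in relators (7) and (8) makes `b_i` the transvection along `w (2 * i + 2)`
(`D6_pow`), so all relators hold in `O(g, ℤ/2)` (`lift_rel`), and relators (7) and (8) express the
`b_i` through `a_1, …, a_{g-1}, b`. Surjectivity is the fact that `O(k, ℤ/2)` is generated by
transvections and those by the adjacent transpositions and `T (w 4)` (`S_le_Γ`); large transvections
are split by the relation `fano` among the seven transvections of a totally isotropic three-space.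

For injectivity, let `H k` be the subgroup of the presented group generated by the generators that
only involve the first `k` coordinates. It is shown by induction on `k` that the homomorphism `ρ` to
`O(g, ℤ/2)` is injective on `H k` (`Setup.P_top`); the cases `k = 3, 4` are direct (`P3`, `P4`).
For the step from `k = n + 2` to `n + 3` (`P_succ`), injectivity on `H k` gives each transvection on
the first `k` coordinates a canonical lift `tau k y`, with all relations of `O(k, ℤ/2)` available.
The new generator `s (n + 1)` commutes with `H (n + 1)`, and satisfies the braid relation with each
lift whose vector involves `e (n + 1)` (`braid`). With these relations the orbit of the base point
of `G ⧸ H k` under `H (n + 3)` is described explicitly (`Good`, `good`) by the orbit of the vector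
`e (n + 2)` under `O(n + 3, ℤ/2)`, so an element of `H (n + 3)` that acts trivially lies in `H k`.

The description needs generators of the stabilizer of `e 0 + e 1` in `O(k, ℤ/2)` (`stab_gen`). The
only delicate one is the transvection along `w k` for even `k`. For `k ≥ 8` it is a product of the
others (`stab_w`, `braid_w`); for `k = 6` it is controlled by relator (6), which says that the longest
element of the Coxeter group `E₇` is trivial (`E7_one`, `d6_cube`, `d6_conj`). The identities in `E₇` used
there are verified by an explicit word-reduction procedure (`reduce`).
-/

/-- The generator `aᵢ` (with `a₀ = b`) of the free group on `Fin g ⊕ Fin (g / 2)`, and `1` if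
`i` is out of range.  For even `g`, the right summand `Fin (g / 2)` indexes the extra
generators `b₀, b₁, …, b_{(g-2)/2}`. -/
def agen (g i : ℕ) : FreeGroup (Fin g ⊕ Fin (g / 2)) :=
  if h : i < g then FreeGroup.of (Sum.inl ⟨i, h⟩) else 1

/-- The extra generator `bᵢ`, for `0 ≤ i ≤ (g-2)/2`, and `1` if `i` is out of range. -/
def bgen (g i : ℕ) : FreeGroup (Fin g ⊕ Fin (g / 2)) :=
  if h : i < g / 2 then FreeGroup.of (Sum.inr ⟨i, h⟩) else 1

/-- The relators (1)–(9) of Theorem 1.1 for even `g ≥ 8`, on the generators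
`a₁, …, a_{g-1}, b (= a₀), b₀, b₁, …, b_{(g-2)/2}`. -/
def relsEven (g : ℕ) : Set (FreeGroup (Fin g ⊕ Fin (g / 2))) :=
  -- (1) aᵢ² for i = 1, …, g−1, and b²
  {r | ∃ i < g, r = agen g i ^ 2} ∪
  -- (2) (aᵢaⱼ)² for |i − j| > 1
  {r | ∃ i j, 1 ≤ i ∧ 1 ≤ j ∧ i < g ∧ j < g ∧ (i + 1 < j ∨ j + 1 < i) ∧
      r = (agen g i * agen g j) ^ 2} ∪
  -- (3) (aᵢa_{i+1})³ for i = 1, …, g−2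
  {r | ∃ i, 1 ≤ i ∧ i + 1 < g ∧ r = (agen g i * agen g (i + 1)) ^ 3} ∪
  -- (4) (aᵢb)² for i ≠ 4
  {r | ∃ i, 1 ≤ i ∧ i < g ∧ i ≠ 4 ∧ r = (agen g i * agen g 0) ^ 2} ∪
  -- (5) (a₄b)³
  {(agen g 4 * agen g 0) ^ 3} ∪
  -- (6) (a₂a₃a₄a₅a₆b)¹²·((a₁a₂a₃a₄a₅a₆b)⁹)⁻¹
  {(agen g 2 * agen g 3 * agen g 4 * agen g 5 * agen g 6 * agen g 0) ^ 12 *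
    ((agen g 1 * agen g 2 * agen g 3 * agen g 4 * agen g 5 * agen g 6 * agen g 0) ^ 9)⁻¹} ∪
  -- (7) b₀·a₁⁻¹, b₁·b⁻¹ and b₂·((a₁a₂a₃a₄a₅b)⁵)⁻¹
  {bgen g 0 * (agen g 1)⁻¹, bgen g 1 * (agen g 0)⁻¹,
    bgen g 2 * (((agen g 1 * agen g 2 * agen g 3 * agen g 4 * agen g 5 * agen g 0) ^ 5)⁻¹)} ∪
  -- (8) b_{i+1}·((b_{i−1} a_{2i} a_{2i+1} a_{2i+2} a_{2i+3} bᵢ)⁵·(b_{i−1} a_{2i} a_{2i+1} a_{2i+2} a_{2i+3})⁻⁶)⁻¹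
  --     for 2 ≤ i ≤ (g−4)/2
  {r | ∃ i, 2 ≤ i ∧ i ≤ (g - 4) / 2 ∧
      r = bgen g (i + 1) *
        ((bgen g (i - 1) * agen g (2 * i) * agen g (2 * i + 1) * agen g (2 * i + 2) *
            agen g (2 * i + 3) * bgen g i) ^ 5 *
          (bgen g (i - 1) * agen g (2 * i) * agen g (2 * i + 1) * agen g (2 * i + 2) *
            agen g (2 * i + 3)) ^ (-6 : ℤ))⁻¹} ∪
  -- (9) the commutator [a_{g−5}, b_{(g−2)/2}]
  {agen g (g - 5) * bgen g ((g - 2) / 2) * (agen g (g - 5))⁻¹ * (bgen g ((g - 2) / 2))⁻¹}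

namespace OrthPres

open Matrix

/-! ### Vectors over the two-element field and transvections -/

/-- The space `(ℤ/2)^g`. -/
abbrev V (g : ℕ) := Fin g → ZMod 2

/-- The group `O(g, ℤ/2)`. -/
abbrev O (g : ℕ) := Matrix.orthogonalGroup (Fin g) (ZMod 2)

variable {g : ℕ}

/-- The `i`-th standard basis vector, counted from `0`; it is `0` when `i ≥ g`. -/
def e (i : ℕ) : V g := fun j => if j.val = i then 1 else 0

/-- The sum of the first `k` standard basis vectors. -/
def w (k : ℕ) : V g := fun j => if j.val < k then 1 else 0

/-- The vector `v` only involves the first `k` coordinates. -/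
def Supp (k : ℕ) (v : V g) : Prop := ∀ j : Fin g, k ≤ j.val → v j = 0

/-- The natural action of `O(g, ℤ/2)` on column vectors. -/
def act (A : O g) (v : V g) : V g := A.1 *ᵥ v

lemma z2 (x : ZMod 2) : x = 0 ∨ x = 1 := by revert x; decide

lemma z2_ne {x : ZMod 2} (h : x ≠ 0) : x = 1 := (z2 x).resolve_left h

lemma z2_add_self (x : ZMod 2) : x + x = 0 := CharTwo.add_self_eq_zero x

lemma z2_mul_self (x : ZMod 2) : x * x = x := by revert x; decide

lemma v_add_self (v : V g) : v + v = 0 := by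
  funext j; exact z2_add_self _

lemma v_add_cancel (u v : V g) : u + (u + v) = v := by
  rw [← add_assoc, v_add_self, zero_add]

@[simp] lemma act_one (v : V g) : act 1 v = v := by simp [act]

lemma act_mul (A B : O g) (v : V g) : act (A * B) v = act A (act B v) := by
  simp [act, Matrix.mulVec_mulVec]

lemma act_add (A : O g) (u v : V g) : act A (u + v) = act A u + act A v :=
  Matrix.mulVec_add _ _ _

@[simp] lemma act_zero (A : O g) : act A (0 : V g) = 0 := Matrix.mulVec_zero _

@[simp] lemma act_inv_act (A : O g) (v : V g) : act A⁻¹ (act A v) = v := by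
  rw [← act_mul]; simp

@[simp] lemma act_act_inv (A : O g) (v : V g) : act A (act A⁻¹ v) = v := by
  rw [← act_mul]; simp

lemma act_inj (A : O g) {u v : V g} (h : act A u = act A v) : u = v := by
  rw [← act_inv_act A u, h, act_inv_act]

lemma act_inv_eq (A : O g) {u v : V g} (h : act A u = v) : act A⁻¹ v = u := by
  rw [← h, act_inv_act]

lemma act_dot (A : O g) (u v : V g) : act A u ⬝ᵥ act A v = u ⬝ᵥ v := by
  have h := (Matrix.mem_orthogonalGroup_iff' (Fin g) (ZMod 2)).1 A.2
  unfold act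
  rw [Matrix.dotProduct_mulVec, ← Matrix.mulVec_transpose, Matrix.mulVec_mulVec, h,
    Matrix.one_mulVec]

lemma act_ext {A B : O g} (h : ∀ v, act A v = act B v) : A = B := by
  apply Subtype.ext
  apply Matrix.mulVec_injective
  funext v
  exact h v

lemma e_of_ge {j : ℕ} (h : g ≤ j) : (e j : V g) = 0 := by
  funext i; simp only [e, Pi.zero_apply, ite_eq_right_iff]; omega

lemma e_eq_single (j : Fin g) : (e j.val : V g) = Pi.single j 1 := by
  funext i; simp [e, Pi.single_apply, Fin.ext_iff]

lemma dot_e (v : V g) (j : Fin g) : v ⬝ᵥ e j.val = v j := by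
  rw [e_eq_single]; simp

lemma dot_e' (v : V g) {j : ℕ} (h : j < g) : v ⬝ᵥ e j = v ⟨j, h⟩ := dot_e v ⟨j, h⟩

lemma e_dot (v : V g) (j : Fin g) : e j.val ⬝ᵥ v = v j := by
  rw [dotProduct_comm, dot_e]

lemma e_dot_e {i j : ℕ} (h : j < g) : (e i : V g) ⬝ᵥ e j = if j = i then 1 else 0 := by
  rw [dot_e' _ h]; simp [e]

lemma w_dot_e {k j : ℕ} (h : j < g) : (w k : V g) ⬝ᵥ e j = if j < k then 1 else 0 := by
  rw [dot_e' _ h]; simp [w]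

lemma v_ext {u v : V g} (h : ∀ j < g, u ⬝ᵥ e j = v ⬝ᵥ e j) : u = v := by
  funext j; rw [← dot_e u j, ← dot_e v j, h _ j.2]

/-- Orthogonal matrices agree as soon as they agree on the standard basis. -/
lemma act_ext_e {A B : O g} (h : ∀ j < g, act A (e j) = act B (e j)) : A = B := by
  apply act_ext
  intro v
  apply v_ext
  intro j hj
  have h1 : ∀ i < g, act A⁻¹ (e j) ⬝ᵥ e i = act B⁻¹ (e j) ⬝ᵥ e i := by
    intro i hi
    rw [← act_dot A, ← act_dot B (act B⁻¹ (e j)), act_act_inv, act_act_inv, h i hi]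
  rw [← act_dot A⁻¹ (act A v), ← act_dot B⁻¹ (act B v), act_inv_act, act_inv_act, v_ext h1]

lemma dot_self (v : V g) : v ⬝ᵥ v = ∑ j, v j := by
  simp [dotProduct, z2_mul_self]

lemma add_even {u v : V g} (h : u ⬝ᵥ u = v ⬝ᵥ v) : (u + v) ⬝ᵥ (u + v) = 0 := by
  rw [add_dotProduct, dotProduct_add, dotProduct_add, h, dotProduct_comm v u, add_comm (u ⬝ᵥ v),
    z2_add_self]

lemma self_add (u v : V g) : (u + v) ⬝ᵥ (u + v) = u ⬝ᵥ u + v ⬝ᵥ v := by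
  rw [add_dotProduct, dotProduct_add, dotProduct_add, dotProduct_comm v u]
  linear_combination z2_add_self (u ⬝ᵥ v)

lemma e_self {j : ℕ} (h : j < g) : (e j : V g) ⬝ᵥ e j = 1 := by simp [e_dot_e h]

lemma ee_even {i j : ℕ} (hi : i < g) (hj : j < g) :
    (e i + e j : V g) ⬝ᵥ (e i + e j) = 0 :=
  add_even (by rw [e_self hi, e_self hj])

lemma w_zero : (w 0 : V g) = 0 := by funext j; simp [w]

lemma w_succ (k : ℕ) : (w (k + 1) : V g) = w k + e k := by
  funext j; simp only [w, e, Pi.add_apply]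
  rcases lt_trichotomy j.val k with h | h | h
  · simp [h, h.ne, h.trans (Nat.lt_succ_self k)]
  · simp [h]
  · simp [not_lt.2 h.le, h.ne', not_lt.2 (Nat.succ_le_of_lt h)]

lemma w_self {k : ℕ} (h : k ≤ g) : (w k : V g) ⬝ᵥ w k = k := by
  induction k with
  | zero => simp [w_zero]
  | succ k ih => rw [w_succ, self_add, ih (by omega), e_self (by omega)]; simp

lemma w_even {k : ℕ} (h : k ≤ g) (hk : Even k) : (w k : V g) ⬝ᵥ w k = 0 := by
  rw [w_self h]; exact (ZMod.natCast_eq_zero_iff_even).2 hk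

/-- The vector `w k` is characteristic for the form on the first `k` coordinates. -/
lemma w_dot {k : ℕ} {v : V g} (hv : Supp k v) : (w k : V g) ⬝ᵥ v = v ⬝ᵥ v := by
  rw [dot_self]
  apply Finset.sum_congr rfl
  intro j _
  by_cases h : j.val < k
  · simp [w, h]
  · simp [hv j (not_lt.1 h)]

lemma Supp.add {k : ℕ} {u v : V g} (hu : Supp k u) (hv : Supp k v) : Supp k (u + v) :=
  fun j hj => by simp [hu j hj, hv j hj]

lemma Supp.mono {k l : ℕ} {u : V g} (hu : Supp k u) (h : k ≤ l) : Supp l u :=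
  fun j hj => hu j (h.trans hj)

lemma supp_e {k j : ℕ} (h : j < k) : Supp k (e j : V g) :=
  fun i hi => by simp only [e, ite_eq_right_iff]; omega

lemma supp_ee {k i j : ℕ} (hi : i < k) (hj : j < k) : Supp k (e i + e j : V g) :=
  (supp_e hi).add (supp_e hj)

lemma supp_w {k l : ℕ} (h : k ≤ l) : Supp l (w k : V g) :=
  fun i hi => by simp only [w, ite_eq_right_iff]; omega

lemma supp_g (v : V g) : Supp g v := fun j hj => by have := j.2; omega

lemma Supp.dot_e_eq {k j : ℕ} {v : V g} (hv : Supp k v) (h : k ≤ j) : v ⬝ᵥ e j = 0 := by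
  by_cases hj : j < g
  · rw [dot_e' _ hj]; exact hv _ h
  · rw [e_of_ge (not_lt.1 hj)]; simp

lemma Supp.of_dot {k : ℕ} {v : V g} (h : ∀ j, k ≤ j → j < g → v ⬝ᵥ e j = 0) : Supp k v :=
  fun j hj => by rw [← dot_e v j]; exact h _ hj j.2

lemma Supp.pred {k : ℕ} {v : V g} (hv : Supp (k + 1) v) (h : v ⬝ᵥ e k = 0) : Supp k v := by
  apply Supp.of_dot
  intro j hj hjg
  rcases hj.eq_or_lt with rfl | hlt
  · exact h
  · exact hv.dot_e_eq hlt

/-- A vector on the first `k` coordinates without zero entry there is `w k`. -/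
lemma eq_w {k : ℕ} {v : V g} (hv : Supp k v) (h : ∀ j < k, j < g → v ⬝ᵥ e j ≠ 0) : v = w k := by
  apply v_ext
  intro j hj
  rw [w_dot_e hj]
  split_ifs with hk
  · exact z2_ne (h j hk hj)
  · exact hv.dot_e_eq (not_lt.1 hk)

/-- The transvection `x ↦ x + (x · y) y` along a vector `y` with `y · y = 0`
(and the identity if `y · y ≠ 0`). -/
def T (y : V g) : O g :=
  if hy : y ⬝ᵥ y = 0 then
    ⟨1 + vecMulVec y y, by
      rw [Matrix.mem_orthogonalGroup_iff, transpose_add, transpose_vecMulVec, transpose_one, add_mul,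
        mul_add, mul_add, vecMulVec_mul_vecMulVec, hy]
      ext i j
      simp [vecMulVec_apply, add_assoc, z2_add_self]⟩
  else 1

lemma act_T {y : V g} (hy : y ⬝ᵥ y = 0) (v : V g) : act (T y) v = v + (v ⬝ᵥ y) • y := by
  unfold act T
  rw [dif_pos hy]
  simp only [add_mulVec, one_mulVec, vecMulVec_mulVec]
  rw [dotProduct_comm]
  simp

lemma act_T_zero {y : V g} (hy : y ⬝ᵥ y = 0) {v : V g} (h : v ⬝ᵥ y = 0) : act (T y) v = v := by
  rw [act_T hy, h]; simp

lemma act_T_one {y : V g} (hy : y ⬝ᵥ y = 0) {v : V g} (h : v ⬝ᵥ y = 1) :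
    act (T y) v = v + y := by
  rw [act_T hy, h]; simp

/-- The transvection along `u + v` exchanges `u` and `v` when `u · (u + v) = 1`. -/
lemma act_T_swap {u v : V g} (h : u ⬝ᵥ u = v ⬝ᵥ v) (h1 : u ⬝ᵥ (u + v) = 1) :
    act (T (u + v)) u = v := by
  rw [act_T_one (add_even h) h1, v_add_cancel]

lemma T_conj {y : V g} (hy : y ⬝ᵥ y = 0) (A : O g) : A * T y * A⁻¹ = T (act A y) := by
  apply act_ext
  intro v
  have hy' : act A y ⬝ᵥ act A y = 0 := by rw [act_dot, hy]
  rw [act_mul, act_mul, act_T hy, act_T hy', act_add, act_act_inv, ← act_dot A (act A⁻¹ v),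
    act_act_inv]
  congr 1
  exact Matrix.mulVec_smul _ _ _

lemma T_sq (y : V g) : T y * T y = 1 := by
  by_cases hy : y ⬝ᵥ y = 0
  · apply act_ext
    intro v
    rw [act_mul, act_T hy, act_T hy, add_dotProduct, smul_dotProduct, hy, act_one, smul_zero,
      add_zero, add_assoc, ← add_smul, z2_add_self, zero_smul, add_zero]
  · unfold T; rw [dif_neg hy, one_mul]

lemma T_inv (y : V g) : (T y)⁻¹ = T y := inv_eq_of_mul_eq_one_left (T_sq y)

lemma T_comm {y z : V g} (hy : y ⬝ᵥ y = 0) (hz : z ⬝ᵥ z = 0) (h : y ⬝ᵥ z = 0) :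
    T y * T z = T z * T y := by
  have := T_conj hy (T z)
  rw [act_T_zero hz h, mul_inv_eq_iff_eq_mul] at this
  exact this.symm

lemma fano_aux : ∀ a b c p q r d : ZMod 2, d + c * r =
      d + (a * p + b * p + c * p + (a * q + b * q + c * q) + (a * r + b * r + c * r)) +
                (b * q + c * q + (b * r + c * r)) +
              (a * p + c * p + (a * r + c * r)) +
            (a * p + b * p + (a * q + b * q)) +
          b * q +
        a * p := by decide

/-- The seven transvections along the nonzero vectors of a totally isotropic three-dimensional
space of vectors with `y · y = 0` commute and have trivial product. -/
lemma fano {u v z : V g} (hu : u ⬝ᵥ u = 0) (hv : v ⬝ᵥ v = 0) (hz : z ⬝ᵥ z = 0)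
    (huv : u ⬝ᵥ v = 0) (huz : u ⬝ᵥ z = 0) (hvz : v ⬝ᵥ z = 0) :
    T z = T u * T v * T (u + v) * T (u + z) * T (v + z) * T (u + v + z) := by
  have hvu : v ⬝ᵥ u = 0 := by rw [dotProduct_comm, huv]
  have hzu : z ⬝ᵥ u = 0 := by rw [dotProduct_comm, huz]
  have hzv : z ⬝ᵥ v = 0 := by rw [dotProduct_comm, hvz]
  have h1 : (u + v) ⬝ᵥ (u + v) = 0 := add_even (by rw [hu, hv])
  have h2 : (u + z) ⬝ᵥ (u + z) = 0 := add_even (by rw [hu, hz])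
  have h3 : (v + z) ⬝ᵥ (v + z) = 0 := add_even (by rw [hv, hz])
  have h4 : (u + v + z) ⬝ᵥ (u + v + z) = 0 := add_even (by rw [h1, hz])
  apply act_ext
  intro x
  simp only [act_mul, act_T hu, act_T hv, act_T hz, act_T h1, act_T h2, act_T h3, act_T h4,
    add_dotProduct, dotProduct_add, smul_dotProduct, hu, hv, hz, huv, huz, hvz, hvu, hzu, hzv,
    smul_add, add_smul, smul_zero, add_zero]
  funext j
  simp only [Pi.add_apply, Pi.smul_apply, smul_eq_mul]
  exact fano_aux _ _ _ _ _ _ _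

/-! ### The subgroups fixing the last coordinates and their generators -/

/-- The subgroup `O(k, ℤ/2)` of `O(g, ℤ/2)`: the isometries fixing all basis vectors of index
at least `k`. -/
def S (k : ℕ) : Subgroup (O g) where
  carrier := {A | ∀ j, k ≤ j → act A (e j) = e j}
  mul_mem' := fun {A B} hA hB j hj => by rw [act_mul, hB j hj, hA j hj]
  one_mem' := fun j _ => act_one _
  inv_mem' := fun {A} hA j hj => act_inv_eq A (hA j hj)

lemma mem_S {k : ℕ} {A : O g} : A ∈ S k ↔ ∀ j, k ≤ j → act A (e j) = e j := Iff.rfl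

lemma S_mono {k l : ℕ} (h : k ≤ l) : (S k : Subgroup (O g)) ≤ S l :=
  fun _ hA j hj => hA j (h.trans hj)

lemma S_act_supp {k : ℕ} {A : O g} (hA : A ∈ S k) {v : V g} (hv : Supp k v) :
    Supp k (act A v) := by
  apply Supp.of_dot
  intro j hj _
  rw [← hA j hj, act_dot]
  exact hv.dot_e_eq hj

lemma T_mem_S {k : ℕ} {y : V g} (hy : y ⬝ᵥ y = 0) (h : Supp k y) : T y ∈ S k := by
  intro j hj
  rw [act_T_zero hy]
  rw [dotProduct_comm]; exact h.dot_e_eq hj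

lemma S_pred {k : ℕ} {A : O g} (hA : A ∈ S (k + 1)) (h : act A (e k) = e k) : A ∈ S k := by
  intro j hj
  rcases hj.eq_or_lt with rfl | hlt
  · exact h
  · exact hA j hlt

lemma S_act_w {k : ℕ} {A : O g} (hA : A ∈ S k) : act A (w k) = w k := by
  apply v_ext
  intro j hj
  by_cases hk : j < k
  · have h1 := S_act_supp ((S k).inv_mem hA) (supp_e (g := g) hk)
    rw [← act_dot A⁻¹ (act A (w k)), act_inv_act, w_dot h1, act_dot, e_self hj, w_dot_e hj,
      if_pos hk]
  · nth_rw 1 [← hA j (not_lt.1 hk)]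
    rw [act_dot]

lemma S_zero {A : O g} (hA : A ∈ S 0) : A = 1 :=
  act_ext_e fun j _ => by rw [hA j (Nat.zero_le j), act_one]

/-- The subgroup generated by the transvections along vectors on the first `k` coordinates. -/
def TG (k : ℕ) : Subgroup (O g) := Subgroup.closure {A | ∃ y, Supp k y ∧ y ⬝ᵥ y = 0 ∧ A = T y}

lemma T_mem_TG {k : ℕ} {y : V g} (h : Supp k y) (hy : y ⬝ᵥ y = 0) : T y ∈ TG k :=
  Subgroup.subset_closure ⟨y, h, hy, rfl⟩

lemma TG_le_S (k : ℕ) : (TG k : Subgroup (O g)) ≤ S k := by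
  unfold TG
  rw [Subgroup.closure_le]
  rintro _ ⟨y, h, hy, rfl⟩
  exact T_mem_S hy h

/-- Transitivity on vectors with `v · v = 1`; for odd `k + 1` the vector `w (k + 1)` is fixed by the
group and has to be excluded. -/
lemma tr_odd {k : ℕ} (hk : k < g) {v : V g} (hs : Supp (k + 1) v) (hv : v ⬝ᵥ v = 1)
    (hw : v = w (k + 1) → v = e k) : ∃ A ∈ TG (k + 1), act A (e k) = v := by
  rcases z2 (v ⬝ᵥ e k) with h | h
  · refine ⟨T (e k + v), T_mem_TG ((supp_e (by omega)).add hs) (add_even ?_), act_T_swap ?_ ?_⟩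
    · rw [e_self hk, hv]
    · rw [e_self hk, hv]
    · rw [dotProduct_add, e_self hk, dotProduct_comm, h, add_zero]
  · by_cases hve : v = e k
    · exact ⟨1, one_mem _, by rw [act_one, hve]⟩
    have : ∃ j < k + 1, j < g ∧ v ⬝ᵥ e j = 0 := by
      by_contra hcon
      push Not at hcon
      exact hve (hw (eq_w hs hcon))
    obtain ⟨j, hj, hjg, hvj⟩ := this
    have hjk : j ≠ k := by rintro rfl; rw [h] at hvj; exact one_ne_zero hvj
    -- the image passes through the basis vector `e j`, which is orthogonal to both ends
    refine ⟨T (e j + v) * T (e k + e j), mul_mem (T_mem_TG ((supp_e hj).add hs) (add_even ?_))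
      (T_mem_TG (supp_ee (by omega) hj) (ee_even hk hjg)), ?_⟩
    · rw [e_self hjg, hv]
    · rw [act_mul, act_T_swap (by rw [e_self hk, e_self hjg]), act_T_swap]
      · rw [e_self hjg, hv]
      · rw [dotProduct_add, e_self hjg, dotProduct_comm, hvj, add_zero]
      · rw [dotProduct_add, e_self hk, e_dot_e hjg, if_neg hjk, add_zero]

lemma act_e_ne_w {k : ℕ} {A : O g} (hA : A ∈ S k) {u : V g} (hu : u ≠ w k) : act A u ≠ w k := by
  intro h
  rw [← S_act_w hA] at h
  exact hu (act_inj A h)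

lemma S_le_TG {k : ℕ} (hk : k ≤ g) : (S k : Subgroup (O g)) ≤ TG k := by
  induction k with
  | zero => intro A hA; rw [S_zero hA]; exact one_mem _
  | succ k ih =>
    intro A hA
    have hkg : k < g := hk
    obtain ⟨B, hB, hBe⟩ := tr_odd hkg (S_act_supp hA (supp_e (Nat.lt_succ_self k)))
      (by rw [act_dot, e_self hkg]) (by
        intro h
        by_cases hw : (e k : V g) = w (k + 1)
        · rw [h, hw]
        · exact absurd h (act_e_ne_w hA hw))
    have h1 : B⁻¹ * A ∈ S k := by
      apply S_pred (mul_mem (inv_mem (TG_le_S _ hB)) hA)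
      rw [act_mul, ← hBe, act_inv_act]
    have h2 : (TG k : Subgroup (O g)) ≤ TG (k + 1) :=
      Subgroup.closure_mono fun _ ⟨y, h, h'⟩ => ⟨y, h.mono (Nat.le_succ k), h'⟩
    have := mul_mem hB (h2 (ih hkg.le h1))
    rwa [mul_inv_cancel_left] at this

/-- The subgroup generated by the adjacent transpositions of the first `k` coordinates and, when
`k ≥ 4`, by the transvection along `w 4`. -/
def Γ (k : ℕ) : Subgroup (O g) := Subgroup.closure
  ({A | ∃ i, i + 1 < k ∧ A = T (e i + e (i + 1))} ∪ {A | 4 ≤ k ∧ A = T (w 4)})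

lemma Γ_mono {k l : ℕ} (h : k ≤ l) : (Γ k : Subgroup (O g)) ≤ Γ l := by
  apply Subgroup.closure_mono
  rintro A (⟨i, hi, hA⟩ | ⟨hi, hA⟩)
  · exact Or.inl ⟨i, by omega, hA⟩
  · exact Or.inr ⟨by omega, hA⟩

lemma T_act_mem {N : Subgroup (O g)} {A : O g} (hA : A ∈ N) {y : V g} (hy : y ⬝ᵥ y = 0) :
    T (act A y) ∈ N ↔ T y ∈ N := by
  rw [← T_conj hy]
  constructor
  · intro h
    have := mul_mem (mul_mem (inv_mem hA) h) hA
    simpa [mul_assoc] using this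
  · intro h
    exact mul_mem (mul_mem hA h) (inv_mem hA)

lemma swap_mem_Γ {k i : ℕ} (d : ℕ) (hk : k ≤ g) (h : i + d + 1 < k) :
    T (e i + e (i + d + 1) : V g) ∈ Γ k := by
  induction d with
  | zero => exact Subgroup.subset_closure (Or.inl ⟨i, h, rfl⟩)
  | succ d ih =>
    have h1 := ih (by omega)
    have h2 : T (e (i + d + 1) + e (i + d + 1 + 1) : V g) ∈ Γ k :=
      Subgroup.subset_closure (Or.inl ⟨_, by omega, rfl⟩)
    rw [← T_act_mem h2 (ee_even (by omega) (by omega)), act_add, act_T_zero, act_T_swap] at h1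
    · exact h1
    · rw [e_self (by omega), e_self (by omega)]
    · rw [dotProduct_add, e_self (by omega), e_dot_e (by omega), if_neg (by omega), add_zero]
    · exact ee_even (by omega) (by omega)
    · rw [dotProduct_add, e_dot_e (by omega), e_dot_e (by omega), if_neg (by omega),
        if_neg (by omega), add_zero]

lemma T_mem_Γ {k : ℕ} (hk : k ≤ g) {y : V g} (hs : Supp k y) (hy : y ⬝ᵥ y = 0) : T y ∈ Γ k := by
  induction k generalizing y with
  | zero =>
    have : y = 0 := by funext j; exact hs j (Nat.zero_le _)
    have hT : T y = 1 := act_ext fun v => by rw [act_T hy, this]; simp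
    rw [hT]; exact one_mem _
  | succ k ih =>
    have hlow : ∀ z : V g, Supp k z → z ⬝ᵥ z = 0 → T z ∈ Γ (k + 1) :=
      fun z h1 h2 => Γ_mono (Nat.le_succ k) (ih (by omega) h1 h2)
    have key : ∀ z : V g, Supp (k + 1) z → z ⬝ᵥ z = 0 → ∀ j < k + 1, z ⬝ᵥ e j = 0 →
        T z ∈ Γ (k + 1) := by
      intro z h1 h2 j hj hz
      rcases z2 (z ⬝ᵥ e k) with h | h
      · exact hlow z (h1.pred h) h2
      have hjk : j < k := by
        rcases Nat.lt_succ_iff_lt_or_eq.1 hj with h' | rfl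
        · exact h'
        · rw [h] at hz; exact absurd hz one_ne_zero
      have hmem := swap_mem_Γ (g := g) (i := j) (k - j - 1) hk (by omega)
      rw [show j + (k - j - 1) + 1 = k by omega] at hmem
      rw [← T_act_mem hmem h2]
      have hee := ee_even (g := g) (i := j) (j := k) (by omega) (by omega)
      have h3 : z ⬝ᵥ (e j + e k) = 1 := by rw [dotProduct_add, hz, h, zero_add]
      apply hlow
      · rw [act_T_one hee h3]
        apply (h1.add (supp_ee hj (Nat.lt_succ_self k))).pred
        rw [add_dotProduct, h, add_dotProduct, e_self (by omega), e_dot_e (by omega),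
          if_neg (by omega), zero_add, z2_add_self]
      · rw [act_dot, h2]
    by_cases hz : ∃ j < k + 1, j < g ∧ y ⬝ᵥ e j = 0
    · obtain ⟨j, hj, -, h⟩ := hz
      exact key y hs hy j hj h
    have hyw : y = w (k + 1) := eq_w hs (by push Not at hz; exact hz)
    have hev : Even (k + 1) := by
      rw [hyw, w_self hk] at hy
      exact (ZMod.natCast_eq_zero_iff_even).1 hy
    rw [hyw]
    rw [hyw] at hy
    by_cases h2 : k + 1 = 2
    · have : (w (k + 1) : V g) = e 0 + e (0 + 1) := by
        rw [h2, w_succ, w_succ, w_zero, zero_add]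
      rw [this]
      exact Subgroup.subset_closure (Or.inl ⟨0, by omega, rfl⟩)
    by_cases h4 : k + 1 = 4
    · rw [h4]
      exact Subgroup.subset_closure (Or.inr ⟨le_rfl, rfl⟩)
    obtain ⟨r, hr⟩ := hev
    have hk6 : 6 ≤ k + 1 := by omega
    -- a totally isotropic three-space containing `w (k + 1)` whose other vectors have a zero entry
    have hu := ee_even (g := g) (i := 0) (j := 1) (by omega) (by omega)
    have hv := ee_even (g := g) (i := 2) (j := 3) (by omega) (by omega)
    have huv : (e 0 + e 1 : V g) ⬝ᵥ (e 2 + e 3) = 0 := by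
      simp [dotProduct_add, add_dotProduct, e_dot_e (show 2 < g by omega),
        e_dot_e (show 3 < g by omega)]
    have hsu : Supp (k + 1) (e 0 + e 1 : V g) := supp_ee (by omega) (by omega)
    have hsv : Supp (k + 1) (e 2 + e 3 : V g) := supp_ee (by omega) (by omega)
    have huw : (e 0 + e 1 : V g) ⬝ᵥ w (k + 1) = 0 := by
      rw [dotProduct_comm, w_dot hsu, hu]
    have hvw : (e 2 + e 3 : V g) ⬝ᵥ w (k + 1) = 0 := by
      rw [dotProduct_comm, w_dot hsv, hv]
    have hsw : Supp (k + 1) (w (k + 1) : V g) := supp_w le_rfl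
    have huv' : (e 0 + e 1 + (e 2 + e 3) : V g) ⬝ᵥ (e 0 + e 1 + (e 2 + e 3)) = 0 :=
      add_even (by rw [hu, hv])
    rw [fano hu hv hy huv huw hvw]
    refine mul_mem (mul_mem (mul_mem (mul_mem (mul_mem ?_ ?_) ?_) ?_) ?_) ?_
    · refine key _ hsu hu 4 (by omega) ?_
      simp [add_dotProduct, e_dot_e (show 4 < g by omega)]
    · refine key _ hsv hv 4 (by omega) ?_
      simp [add_dotProduct, e_dot_e (show 4 < g by omega)]
    · refine key _ (hsu.add hsv) huv' 4 (by omega) ?_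
      simp [add_dotProduct, e_dot_e (show 4 < g by omega)]
    · refine key _ (hsu.add hsw) (add_even (by rw [hu, hy])) 0 (by omega) ?_
      simp [add_dotProduct, e_dot_e (show 0 < g by omega), w_dot_e (show 0 < g by omega),
        z2_add_self]
    · refine key _ (hsv.add hsw) (add_even (by rw [hv, hy])) 2 (by omega) ?_
      simp [add_dotProduct, e_dot_e (show 2 < g by omega), w_dot_e (show 2 < g by omega),
        z2_add_self, show 2 < k + 1 by omega]
    · refine key _ ((hsu.add hsv).add hsw) (add_even (by rw [huv', hy])) 0 (by omega) ?_
      simp [add_dotProduct, e_dot_e (show 0 < g by omega), w_dot_e (show 0 < g by omega),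
        z2_add_self]

lemma S_le_Γ {k : ℕ} (hk : k ≤ g) : (S k : Subgroup (O g)) ≤ Γ k := by
  refine (S_le_TG hk).trans ?_
  unfold TG
  rw [Subgroup.closure_le]
  rintro _ ⟨y, hs, hy, rfl⟩
  exact T_mem_Γ hk hs hy

end OrthPres

namespace OrthPres
open Matrix
variable {g : ℕ}

/-! ### The stabilizer of `e 0 + e 1` -/

lemma e_ne {i j : ℕ} (hj : j < g) (h : i ≠ j) : (e i : V g) ⬝ᵥ e j = 0 := by
  rw [e_dot_e hj, if_neg h.symm]

lemma w_lt {k j : ℕ} (hj : j < g) (h : j < k) : (w k : V g) ⬝ᵥ e j = 1 := by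
  rw [w_dot_e hj, if_pos h]

lemma w_ge {k j : ℕ} (hj : j < g) (h : k ≤ j) : (w k : V g) ⬝ᵥ e j = 0 := by
  rw [w_dot_e hj, if_neg (not_lt.2 h)]

lemma e_w_lt {k j : ℕ} (hj : j < g) (h : j < k) : (e j : V g) ⬝ᵥ w k = 1 := by
  rw [dotProduct_comm, w_lt hj h]

lemma e_w_ge {k j : ℕ} (hj : j < g) (h : k ≤ j) : (e j : V g) ⬝ᵥ w k = 0 := by
  rw [dotProduct_comm, w_ge hj h]

lemma e_dot_comm (v : V g) (j : ℕ) : (e j : V g) ⬝ᵥ v = v ⬝ᵥ e j := dotProduct_comm _ _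

/-- Transitivity on vectors with `u · u = 0`, apart from `0` and `w k`. -/
lemma tr_even {k : ℕ} (h4 : 3 ≤ k) (hk : k ≤ g) {u : V g} (hs : Supp k u) (hu : u ⬝ᵥ u = 0)
    (h0 : u ≠ 0) (hw : u ≠ w k) : ∃ A ∈ S k, act A (e 0 + e 1) = u := by
  have h00 : (e 0 + e 1 : V g) ⬝ᵥ (e 0 + e 1) = 0 := ee_even (by omega) (by omega)
  have hs0 : Supp k (e 0 + e 1 : V g) := supp_ee (by omega) (by omega)
  rcases z2 ((e 0 + e 1) ⬝ᵥ u) with h | h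
  · have hz : ∃ j < k, u ⬝ᵥ e j ≠ u ⬝ᵥ e 0 := by
      by_contra hcon
      push Not at hcon
      rcases z2 (u ⬝ᵥ e 0) with h' | h'
      · apply h0
        apply v_ext
        intro j hj
        by_cases hjk : j < k
        · rw [hcon j hjk, h']; simp
        · rw [hs.dot_e_eq (not_lt.1 hjk)]; simp
      · apply hw
        apply eq_w hs
        intro j hj _
        rw [hcon j hj, h']
        exact one_ne_zero
    obtain ⟨j, hj, hne⟩ := hz
    have h1 : u ⬝ᵥ e 0 = u ⬝ᵥ e 1 := by
      rw [add_dotProduct, e_dot_comm, e_dot_comm] at h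
      exact CharTwo.add_eq_zero.1 h
    have hj0 : j ≠ 0 := by rintro rfl; exact hne rfl
    have hj1 : j ≠ 1 := by rintro rfl; exact hne h1.symm
    have hzz : (e 0 + e j : V g) ⬝ᵥ (e 0 + e j) = 0 := ee_even (by omega) (by omega)
    have hzu : (e 0 + e j : V g) ⬝ᵥ u = 1 := by
      rw [add_dotProduct, e_dot_comm, e_dot_comm]
      revert hne
      generalize u ⬝ᵥ e 0 = a
      generalize u ⬝ᵥ e j = b
      revert a b
      decide
    have hsz : Supp k (e 0 + e j : V g) := supp_ee (by omega) hj
    refine ⟨T (e 0 + e j + u) * T (e 0 + e 1 + (e 0 + e j)), mul_mem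
      (T_mem_S (add_even (by rw [hzz, hu])) (hsz.add hs))
      (T_mem_S (add_even (by rw [h00, hzz])) (hs0.add hsz)), ?_⟩
    rw [act_mul, act_T_swap (by rw [h00, hzz]), act_T_swap (by rw [hzz, hu])]
    · rw [dotProduct_add, hzz, hzu, zero_add]
    · simp (disch := omega) only [add_dotProduct, dotProduct_add, e_self, e_ne]
      decide
  · refine ⟨T (e 0 + e 1 + u), T_mem_S (add_even (by rw [h00, hu])) (hs0.add hs),
      act_T_swap (by rw [h00, hu]) ?_⟩
    rw [dotProduct_add, h00, h, zero_add]

/-- The vectors orthogonal to `e 0 + e 1` without zero entry beyond the first two. -/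
lemma exceptional {n : ℕ} (hn : 2 ≤ n) {v : V g} (hs : Supp (n + 2) v) (h0 : (e 0 + e 1) ⬝ᵥ v = 0)
    (hj : ∀ j, 2 ≤ j → j < n + 2 → v ⬝ᵥ e j ≠ 0) :
    v = w (n + 2) ∨ v = e 0 + e 1 + w (n + 2) := by
  have h01 : v ⬝ᵥ e 0 = v ⬝ᵥ e 1 := by
    rw [add_dotProduct, e_dot_comm, e_dot_comm] at h0
    exact CharTwo.add_eq_zero.1 h0
  rcases z2 (v ⬝ᵥ e 0) with h | h
  · right
    apply v_ext
    intro j hjg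
    by_cases hjk : n + 2 ≤ j
    · rw [hs.dot_e_eq hjk]
      simp (disch := omega) only [add_dotProduct, e_ne, w_ge]
      decide
    by_cases hj2 : 2 ≤ j
    · rw [z2_ne (hj j hj2 (by omega))]
      simp (disch := omega) only [add_dotProduct, e_ne, w_lt]
      decide
    obtain rfl | rfl : j = 0 ∨ j = 1 := by omega
    · rw [h]
      simp (disch := omega) only [add_dotProduct, e_ne, e_self, w_lt]
      decide
    · rw [← h01, h]
      simp (disch := omega) only [add_dotProduct, e_ne, e_self, w_lt]
      decide
  · left
    apply eq_w hs
    intro j hjk _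
    by_cases hj2 : 2 ≤ j
    · exact hj j hj2 hjk
    obtain rfl | rfl : j = 0 ∨ j = 1 := by omega
    · rw [h]; exact one_ne_zero
    · rw [← h01, h]; exact one_ne_zero

section stab

variable {n : ℕ} (hn : 2 ≤ n) (hg : n + 2 ≤ g) {N : Subgroup (O g)}
  (h1 : ∀ A ∈ S (n + 1), act A (e 0 + e 1) = e 0 + e 1 → A ∈ N)
  (h2 : T (e n + e (n + 1)) ∈ N)

include hn hg h1 h2

/-- The transvections in the stabilizer along vectors with a zero entry beyond the first two. -/
lemma stab_T {y : V g} (hs : Supp (n + 2) y) (hy : y ⬝ᵥ y = 0) (h0 : (e 0 + e 1) ⬝ᵥ y = 0)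
    (hj : ∃ j, 2 ≤ j ∧ j < n + 2 ∧ y ⬝ᵥ e j = 0) : T y ∈ N := by
  have hlow : ∀ z : V g, Supp (n + 1) z → z ⬝ᵥ z = 0 → (e 0 + e 1) ⬝ᵥ z = 0 → T z ∈ N :=
    fun z hz hzz hz0 => h1 _ (T_mem_S hzz hz) (act_T_zero hzz hz0)
  have hmid : ∀ z : V g, Supp (n + 2) z → z ⬝ᵥ z = 0 → (e 0 + e 1) ⬝ᵥ z = 0 →
      z ⬝ᵥ e n = 0 → z ⬝ᵥ e (n + 1) = 1 → T z ∈ N := by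
    intro z hz hzz hz0 hzn hzn1
    have hx : Supp (n + 1) (z + e (n + 1)) := by
      apply (hz.add (supp_e (by omega))).pred
      rw [add_dotProduct, hzn1, e_self (by omega), z2_add_self]
    have hxx : (z + e (n + 1)) ⬝ᵥ (z + e (n + 1)) = 1 := by
      rw [self_add, hzz, e_self (by omega), zero_add]
    have hyy : (e n + (z + e (n + 1))) ⬝ᵥ (e n + (z + e (n + 1))) = 0 :=
      add_even (by rw [hxx, e_self (by omega)])
    have hA : T (e n + (z + e (n + 1))) ∈ N := by
      apply hlow _ ((supp_e (by omega)).add hx) hyy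
      rw [dotProduct_add, dotProduct_add, hz0]
      simp (disch := omega) only [add_dotProduct, e_ne]
      simp
    rw [← T_act_mem hA (ee_even (by omega) (by omega)), act_add, act_T_swap, act_T_zero hyy] at h2
    · rwa [add_assoc, v_add_self, add_zero] at h2
    · rw [dotProduct_add, dotProduct_add, e_dot_comm z, hzn1]
      simp (disch := omega) only [e_ne, e_self]
      decide
    · rw [hxx, e_self (by omega)]
    · rw [dotProduct_add, dotProduct_add, e_dot_comm z, hzn]
      simp (disch := omega) only [e_ne, e_self]
      decide
  rcases z2 (y ⬝ᵥ e (n + 1)) with h | h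
  · exact hlow y (hs.pred h) hy h0
  rcases z2 (y ⬝ᵥ e n) with h' | h'
  · exact hmid y hs hy h0 h' h
  obtain ⟨j, hj2, hjn, hyj⟩ := hj
  have hj1 : j ≠ n := by rintro rfl; rw [h'] at hyj; exact one_ne_zero hyj
  have hj3 : j ≠ n + 1 := by rintro rfl; rw [h] at hyj; exact one_ne_zero hyj
  have hee : (e j + e n : V g) ⬝ᵥ (e j + e n) = 0 := ee_even (by omega) (by omega)
  have hB : T (e j + e n) ∈ N := by
    apply hlow _ (supp_ee (by omega) (by omega)) hee
    simp (disch := omega) only [add_dotProduct, dotProduct_add, e_ne]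
    simp
  rw [← T_act_mem hB hy, act_T_one hee (by rw [dotProduct_add, hyj, h', zero_add])]
  apply hmid
  · exact hs.add (supp_ee (by omega) (by omega))
  · rw [self_add, hy, hee, zero_add]
  · rw [dotProduct_add, h0]
    simp (disch := omega) only [add_dotProduct, dotProduct_add, e_ne]
    simp
  · simp (disch := omega) only [add_dotProduct, e_ne, e_self, h']
    decide
  · simp (disch := omega) only [add_dotProduct, e_ne, h]
    decide

/-- For even `k = n + 2 ≥ 8`, the transvection along `w k` is a product of the previous ones. -/
lemma stab_w (hn6 : 6 ≤ n) (hev : Even (n + 2)) : T (w (n + 2)) ∈ N := by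
  have hu := ee_even (g := g) (i := 2) (j := 3) (by omega) (by omega)
  have hv := ee_even (g := g) (i := 4) (j := 5) (by omega) (by omega)
  have huv : (e 2 + e 3 : V g) ⬝ᵥ (e 4 + e 5) = 0 := by
    simp (disch := omega) only [add_dotProduct, dotProduct_add, e_ne]
    simp
  have hsu : Supp (n + 2) (e 2 + e 3 : V g) := supp_ee (by omega) (by omega)
  have hsv : Supp (n + 2) (e 4 + e 5 : V g) := supp_ee (by omega) (by omega)
  have hsw : Supp (n + 2) (w (n + 2) : V g) := supp_w le_rfl
  have hw := w_even (g := g) hg hev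
  have huw : (e 2 + e 3 : V g) ⬝ᵥ w (n + 2) = 0 := by rw [dotProduct_comm, w_dot hsu, hu]
  have hvw : (e 4 + e 5 : V g) ⬝ᵥ w (n + 2) = 0 := by rw [dotProduct_comm, w_dot hsv, hv]
  have huv' : (e 2 + e 3 + (e 4 + e 5) : V g) ⬝ᵥ (e 2 + e 3 + (e 4 + e 5)) = 0 :=
    add_even (by rw [hu, hv])
  rw [fano hu hv hw huv huw hvw]
  have key : ∀ y : V g, Supp (n + 2) y → y ⬝ᵥ y = 0 → (e 0 + e 1) ⬝ᵥ y = 0 →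
    ∀ j, 2 ≤ j → j < n + 2 → y ⬝ᵥ e j = 0 → T y ∈ N := fun y ha hb hc j hj hj' hd =>
      stab_T hn hg h1 h2 ha hb hc ⟨j, hj, hj', hd⟩
  refine mul_mem (mul_mem (mul_mem (mul_mem (mul_mem ?_ ?_) ?_) ?_) ?_) ?_
  · refine key _ hsu hu ?_ 4 (by omega) (by omega) ?_ <;>
    · simp (disch := omega) only [add_dotProduct, dotProduct_add, e_ne]
      decide
  · refine key _ hsv hv ?_ 2 (by omega) (by omega) ?_ <;>
    · simp (disch := omega) only [add_dotProduct, dotProduct_add, e_ne]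
      decide
  · refine key _ (hsu.add hsv) huv' ?_ 6 (by omega) (by omega) ?_ <;>
    · simp (disch := omega) only [add_dotProduct, dotProduct_add, e_ne]
      decide
  · refine key _ (hsu.add hsw) (add_even (by rw [hu, hw])) ?_ 2 (by omega) (by omega) ?_ <;>
    · simp (disch := omega) only [add_dotProduct, dotProduct_add, e_ne, e_self, w_lt, e_w_lt]
      decide
  · refine key _ (hsv.add hsw) (add_even (by rw [hv, hw])) ?_ 4 (by omega) (by omega) ?_ <;>
    · simp (disch := omega) only [add_dotProduct, dotProduct_add, e_ne, e_self, w_lt, e_w_lt]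
      decide
  · refine key _ ((hsu.add hsv).add hsw) (add_even (by rw [huv', hw])) ?_ 4 (by omega)
      (by omega) ?_ <;>
    · simp (disch := omega) only [add_dotProduct, dotProduct_add, e_ne, e_self, w_lt, e_w_lt]
      decide

/-- The stabilizer of `e 0 + e 1` in `O(n + 2)` is generated by its intersection with `O(n + 1)`, the
transvection along `e n + e (n + 1)` and, for even `n`, the transvection along `w (n + 2)`. -/
lemma stab_gen (h3 : Even (n + 2) → T (w (n + 2)) ∈ N) {A : O g} (hA : A ∈ S (n + 2))
    (hA0 : act A (e 0 + e 1) = e 0 + e 1) : A ∈ N := by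
  have hT : ∀ y : V g, Supp (n + 2) y → y ⬝ᵥ y = 0 → (e 0 + e 1) ⬝ᵥ y = 0 → T y ∈ N := by
    intro y hs hy h0
    by_cases hj : ∃ j, 2 ≤ j ∧ j < n + 2 ∧ y ⬝ᵥ e j = 0
    · exact stab_T hn hg h1 h2 hs hy h0 hj
    push Not at hj
    have hu := ee_even (g := g) (i := 0) (j := 1) (by omega) (by omega)
    have hsu : Supp (n + 2) (e 0 + e 1 : V g) := supp_ee (by omega) (by omega)
    have huw : (e 0 + e 1 : V g) ⬝ᵥ w (n + 2) = 0 := by rw [dotProduct_comm, w_dot hsu, hu]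
    rcases exceptional hn hs h0 hj with rfl | rfl
    · apply h3
      rw [w_self hg] at hy
      exact (ZMod.natCast_eq_zero_iff_even).1 hy
    · have hev : Even (n + 2) := by
        rw [self_add, hu, zero_add, w_self hg] at hy
        exact (ZMod.natCast_eq_zero_iff_even).1 hy
      by_cases hn2 : n = 2
      · subst hn2
        have : (e 0 + e 1 + w (2 + 2) : V g) = e 2 + e (2 + 1) := by
          rw [w_succ, w_succ, w_succ, w_succ, w_zero, zero_add]
          rw [add_assoc (e 0 + e 1 : V g), v_add_cancel]
        rw [this]
        exact h2
      have hn4 : 4 ≤ n := by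
        obtain ⟨r, hr⟩ := hev
        omega
      have hv := ee_even (g := g) (i := 2) (j := 3) (by omega) (by omega)
      have hsv : Supp (n + 2) (e 2 + e 3 : V g) := supp_ee (by omega) (by omega)
      have huv : (e 0 + e 1 : V g) ⬝ᵥ (e 2 + e 3) = 0 := by
        simp (disch := omega) only [add_dotProduct, dotProduct_add, e_ne]
        simp
      have hvz : (e 2 + e 3 : V g) ⬝ᵥ (e 0 + e 1 + w (n + 2)) = 0 := by
        rw [dotProduct_add, dotProduct_comm, huv, dotProduct_comm, w_dot hsv, hv, zero_add]
      have hw := w_even (g := g) hg hev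
      rw [fano hu hv hy huv h0 hvz, v_add_cancel]
      have huv' : (e 0 + e 1 + (e 2 + e 3) : V g) ⬝ᵥ (e 0 + e 1 + (e 2 + e 3)) = 0 :=
        add_even (by rw [hu, hv])
      refine mul_mem (mul_mem (mul_mem (mul_mem (mul_mem ?_ ?_) ?_) (h3 hev)) ?_) ?_
      · refine stab_T hn hg h1 h2 hsu hu ?_ ⟨2, by omega, by omega, ?_⟩ <;>
        · simp (disch := omega) only [add_dotProduct, dotProduct_add, e_ne, e_self]
          decide
      · refine stab_T hn hg h1 h2 hsv hv ?_ ⟨4, by omega, by omega, ?_⟩ <;>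
        · simp (disch := omega) only [add_dotProduct, dotProduct_add, e_ne]
          decide
      · refine stab_T hn hg h1 h2 (hsu.add hsv) huv' ?_ ⟨4, by omega, by omega, ?_⟩ <;>
        · simp (disch := omega) only [add_dotProduct, dotProduct_add, e_ne, e_self]
          decide
      · refine stab_T hn hg h1 h2 (hsv.add hs) (add_even (by rw [hv, hy])) ?_
          ⟨2, by omega, by omega, ?_⟩ <;>
        · simp (disch := omega) only [add_dotProduct, dotProduct_add, e_ne, e_self, w_lt, e_w_lt]
          decide
      · refine stab_T hn hg h1 h2 ((hsu.add hsv).add hs) (add_even (by rw [huv', hy])) ?_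
          ⟨2, by omega, by omega, ?_⟩ <;>
        · simp (disch := omega) only [add_dotProduct, dotProduct_add, e_ne, e_self, w_lt, e_w_lt]
          decide
  have hx : (e (n + 1) : V g) ⬝ᵥ e (n + 1) = 1 := e_self (by omega)
  obtain ⟨v, hv⟩ : ∃ v, act A (e (n + 1)) = v := ⟨_, rfl⟩
  have hvv : v ⬝ᵥ v = 1 := by rw [← hv, act_dot, hx]
  have hsv : Supp (n + 2) v := by rw [← hv]; exact S_act_supp hA (supp_e (by omega))
  have hv0 : (e 0 + e 1) ⬝ᵥ v = 0 := by
    rw [← hv, ← hA0, act_dot]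
    simp (disch := omega) only [add_dotProduct, e_ne]
    simp
  have hx0 : (e 0 + e 1 : V g) ⬝ᵥ e (n + 1) = 0 := by
    simp (disch := omega) only [add_dotProduct, e_ne]
    simp
  suffices hC : ∃ C ∈ N, C ∈ S (n + 2) ∧ act C (e 0 + e 1) = e 0 + e 1 ∧ act C (e (n + 1)) = v by
    obtain ⟨C, hCN, hCS, hC0, hCx⟩ := hC
    have h5 : C⁻¹ * A ∈ N := by
      apply h1
      · apply S_pred (mul_mem (inv_mem hCS) hA)
        rw [act_mul, hv, ← hCx, act_inv_act]
      · rw [act_mul, hA0]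
        exact act_inv_eq C hC0
    have := mul_mem hCN h5
    rwa [mul_inv_cancel_left] at this
  rcases z2 (v ⬝ᵥ e (n + 1)) with h | h
  · have h6 : (e (n + 1) + v) ⬝ᵥ (e (n + 1) + v) = 0 := add_even (by rw [hx, hvv])
    have h7 : (e 0 + e 1) ⬝ᵥ (e (n + 1) + v) = 0 := by rw [dotProduct_add, hx0, hv0, zero_add]
    have h8 : Supp (n + 2) (e (n + 1) + v) := (supp_e (by omega)).add hsv
    refine ⟨T (e (n + 1) + v), hT _ h8 h6 h7, T_mem_S h6 h8, act_T_zero h6 h7,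
      act_T_swap (by rw [hx, hvv]) ?_⟩
    rw [dotProduct_add, hx, e_dot_comm, h, add_zero]
  by_cases hvx : v = e (n + 1)
  · exact ⟨1, one_mem _, one_mem _, act_one _, by rw [act_one, hvx]⟩
  by_cases hj : ∃ j, 2 ≤ j ∧ j < n + 2 ∧ v ⬝ᵥ e j = 0
  · obtain ⟨j, hj2, hjn, hvj⟩ := hj
    have hjn1 : n + 1 ≠ j := by rintro rfl; rw [h] at hvj; exact one_ne_zero hvj
    have hjj : (e j : V g) ⬝ᵥ e j = 1 := e_self (by omega)
    have hj0 : (e 0 + e 1 : V g) ⬝ᵥ e j = 0 := by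
      simp (disch := omega) only [add_dotProduct, e_ne]
      simp
    have a6 : (e j + v) ⬝ᵥ (e j + v) = 0 := add_even (by rw [hjj, hvv])
    have a7 : (e 0 + e 1) ⬝ᵥ (e j + v) = 0 := by rw [dotProduct_add, hj0, hv0, zero_add]
    have a8 : Supp (n + 2) (e j + v) := (supp_e (by omega)).add hsv
    have b6 : (e (n + 1) + e j : V g) ⬝ᵥ (e (n + 1) + e j) = 0 := add_even (by rw [hx, hjj])
    have b7 : (e 0 + e 1 : V g) ⬝ᵥ (e (n + 1) + e j) = 0 := by
      rw [dotProduct_add, hx0, hj0, zero_add]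
    have b8 : Supp (n + 2) (e (n + 1) + e j : V g) := supp_ee (by omega) (by omega)
    refine ⟨T (e j + v) * T (e (n + 1) + e j), mul_mem (hT _ a8 a6 a7) (hT _ b8 b6 b7),
      mul_mem (T_mem_S a6 a8) (T_mem_S b6 b8), ?_, ?_⟩
    · rw [act_mul, act_T_zero b6 b7, act_T_zero a6 a7]
    · rw [act_mul, act_T_swap (by rw [hx, hjj]), act_T_swap (by rw [hjj, hvv])]
      · rw [dotProduct_add, hjj, e_dot_comm, hvj, add_zero]
      · rw [dotProduct_add, hx, e_ne (by omega) hjn1, add_zero]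
  push Not at hj
  exfalso
  rcases exceptional hn hsv hv0 hj with hvw | hvw
  · apply hvx
    rw [hvw, ← S_act_w hA] at hv
    rw [hvw, act_inj A hv]
  · have h9 : act A (e 0 + e 1 + w (n + 2)) = v := by rw [act_add, hA0, S_act_w hA, hvw]
    rw [← h9] at hv
    have := congrArg (· ⬝ᵥ e 2) (act_inj A hv)
    simp (disch := omega) only [add_dotProduct, e_ne, w_lt] at this
    exact absurd this (by decide)

end stab
end OrthPres

namespace OrthPres

/-! ### Words in the Coxeter group of type `E₇` -/

/-- Adjacency in the Coxeter graph `E₇`: the path `0 - 1 - 2 - 3 - 4 - 5` with a further vertex `6`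
attached to `3`. -/
def adj (x y : ℕ) : Bool :=
  (x + 1 == y && decide (y < 6)) || (y + 1 == x && decide (x < 6)) ||
    (x == 3 && y == 6) || (x == 6 && y == 3)

/-- For a reduced word `l` in the Coxeter group, `bring n s l = some l'` if `l` can be
transformed by braid moves into `s :: l'`, which is the case exactly when `s` is a left descent of
`l`. The number `n` bounds the depth of the recursion. -/
def bring : ℕ → ℕ → List ℕ → Option (List ℕ)
  | 0, _, _ => none
  | _ + 1, _, [] => none
  | n + 1, s, t :: l =>
    if s == t then some l
    else
      match bring n s l with
      | none => none
      | some l₁ =>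
        if adj s t then
          match bring n t l₁ with
          | none => none
          | some l₂ => some (t :: s :: l₂)
        else some (t :: l₁)

/-- Reduce a word, inserting its letters from the right to the left. -/
def reduce : List ℕ → List ℕ
  | [] => []
  | s :: l =>
    match bring 100 s (reduce l) with
    | none => s :: reduce l
    | some l' => l'

section

variable {G : Type*} [Group G] {f : ℕ → G} (h1 : ∀ x, f x * f x = 1)
  (h2 : ∀ x y, adj x y = false → f x * f y = f y * f x)
  (h3 : ∀ x y, adj x y = true → f x * f y * f x = f y * f x * f y)

include h2 h3 in
lemma bring_prod (n s : ℕ) (l l' : List ℕ) (h : bring n s l = some l') :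
    (l.map f).prod = f s * (l'.map f).prod := by
  induction n generalizing s l l' with
  | zero => simp [bring] at h
  | succ n ih =>
    cases l with
    | nil => simp [bring] at h
    | cons t l =>
      rw [bring] at h
      by_cases hst : (s == t) = true
      · rw [if_pos hst] at h
        have : s = t := by simpa using hst
        cases h
        simp [this]
      · rw [if_neg hst] at h
        cases hb : bring n s l with
        | none => rw [hb] at h; simp at h
        | some l₁ =>
          rw [hb] at h
          have e1 := ih _ _ _ hb
          simp only at h
          by_cases ha : adj s t = true
          · rw [if_pos ha] at h
            cases hc : bring n t l₁ with
            | none => rw [hc] at h; simp at h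
            | some l₂ =>
              rw [hc] at h
              have e2 := ih _ _ _ hc
              cases h
              simp only [List.map_cons, List.prod_cons, e1, e2]
              simp only [← mul_assoc]
              rw [h3 s t ha]
          · rw [if_neg ha] at h
            cases h
            simp only [List.map_cons, List.prod_cons, e1, ← mul_assoc]
            rw [h2 s t (by simpa using ha)]

include h1 h2 h3 in
lemma reduce_prod (l : List ℕ) : ((reduce l).map f).prod = (l.map f).prod := by
  induction l with
  | nil => rfl
  | cons s l ih =>
    rw [reduce]
    cases hb : bring 100 s (reduce l) with
    | none => simp [ih]
    | some l' =>
      simp only [List.map_cons, List.prod_cons, ← ih]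
      rw [bring_prod h2 h3 _ _ _ _ hb, ← mul_assoc, h1, one_mul]

end

/-- The Coxeter element of `E₆` has order dividing `12`. -/
lemma cox1 : reduce (List.replicate 12 [1, 2, 3, 4, 5, 6]).flatten = [] := by decide +kernel

/-- Modulo the longest element of `E₇`, the generator `5` and the fifth power of the Coxeter element
of `D₆` satisfy a braid relation. -/
lemma cox2 : reduce ((List.replicate 3 (5 :: (List.replicate 5 [0, 1, 2, 3, 4, 6]).flatten)).flatten
      ++ (List.replicate 9 [6, 5, 4, 3, 2, 1, 0]).flatten) = [] := by decide +kernel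

/-- Modulo the longest element of `E₇`, a conjugate of the fifth power of the Coxeter element of
`D₆` is a word without the letter `5`. -/
lemma cox3 : reduce ([5, 4, 3, 2, 4, 3, 6, 3, 4, 2, 3, 5] ++
      (List.replicate 5 [0, 1, 2, 3, 4, 6]).flatten ++ [5, 3, 2, 4, 3, 6, 3, 4, 2, 3, 4, 5] ++
      [1, 0, 2, 1, 3, 2, 4, 3, 6, 3, 4, 2, 3, 1, 2, 0, 1] ++
      (List.replicate 9 [6, 5, 4, 3, 2, 1, 0]).flatten) = [] := by decide +kernel
end OrthPres

namespace OrthPres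
open Matrix
variable {g : ℕ}

/-! ### Groups with generators satisfying the relations -/

lemma act_swap_left {i : ℕ} (h : i + 1 < g) :
    act (T (e i + e (i + 1))) (e i : V g) = e (i + 1) := by
  apply act_T_swap
  · rw [e_self (by omega), e_self h]
  · rw [dotProduct_add, e_self (by omega), e_ne h (by omega), add_zero]

lemma act_swap_right {i : ℕ} (h : i + 1 < g) :
    act (T (e i + e (i + 1))) (e (i + 1) : V g) = e i := by
  rw [add_comm]
  apply act_T_swap
  · rw [e_self h, e_self (by omega)]
  · rw [dotProduct_add, e_self (by omega), e_ne (by omega) (by omega), add_zero]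

lemma act_swap_ne {i j : ℕ} (h : i + 1 < g) (h1 : j ≠ i) (h2 : j ≠ i + 1) :
    act (T (e i + e (i + 1))) (e j : V g) = e j := by
  apply act_T_zero (ee_even (by omega) h)
  rw [dotProduct_add, e_ne (by omega) h1, e_ne h h2, add_zero]

/-- A group `G` with a homomorphism `ρ` to `O(g, ℤ/2)` and elements `s i` and `b` lying over the
adjacent transpositions and the transvection along `w 4` and satisfying the relators (1)–(6). In
terms of the presentation, `s i` is `a_{i+1}`. -/
structure Setup (g : ℕ) (G : Type*) [Group G] where
  /-- the homomorphism to the orthogonal group -/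
  ρ : G →* O g
  /-- the lifts of the adjacent transpositions -/
  s : ℕ → G
  /-- the lift of the transvection along `w 4` -/
  b : G
  hg : 8 ≤ g
  ρ_s : ∀ i, i + 1 < g → ρ (s i) = T (e i + e (i + 1))
  ρ_b : ρ b = T (w 4)
  s_sq : ∀ i, i + 1 < g → s i * s i = 1
  b_sq : b * b = 1
  s_comm : ∀ i j, i + 1 < j → j + 1 < g → s i * s j = s j * s i
  s_braid : ∀ i, i + 2 < g → s i * s (i + 1) * s i = s (i + 1) * s i * s (i + 1)
  b_comm : ∀ i, i + 1 < g → i ≠ 3 → b * s i = s i * b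
  b_braid : b * s 3 * b = s 3 * b * s 3
  e7 : (s 1 * s 2 * s 3 * s 4 * s 5 * b) ^ 12 = (s 0 * s 1 * s 2 * s 3 * s 4 * s 5 * b) ^ 9

namespace Setup

variable {G : Type*} [Group G] (X : Setup g G)

/-- The subgroup generated by the generators supported on the first `k` coordinates. -/
def H (k : ℕ) : Subgroup G := Subgroup.closure
  ({x | ∃ i, i + 1 < k ∧ x = X.s i} ∪ {x | 4 ≤ k ∧ x = X.b})

/-- The homomorphism `ρ` is injective on `H k`. -/
def P (k : ℕ) : Prop := ∀ h ∈ X.H k, X.ρ h = 1 → h = 1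

lemma s_mem {k i : ℕ} (h : i + 1 < k) : X.s i ∈ X.H k :=
  Subgroup.subset_closure (Or.inl ⟨i, h, rfl⟩)

lemma b_mem {k : ℕ} (h : 4 ≤ k) : X.b ∈ X.H k := Subgroup.subset_closure (Or.inr ⟨h, rfl⟩)

lemma H_mono {k l : ℕ} (h : k ≤ l) : X.H k ≤ X.H l := by
  apply Subgroup.closure_mono
  rintro A (⟨i, hi, hA⟩ | ⟨hi, hA⟩)
  · exact Or.inl ⟨i, by omega, hA⟩
  · exact Or.inr ⟨by omega, hA⟩

lemma s_inv {i : ℕ} (h : i + 1 < g) : (X.s i)⁻¹ = X.s i := inv_eq_of_mul_eq_one_left (X.s_sq i h)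

lemma b_inv : X.b⁻¹ = X.b := inv_eq_of_mul_eq_one_left X.b_sq

lemma s_mul_s {i : ℕ} (h : i + 1 < g) (x : G) : X.s i * (X.s i * x) = x := by
  rw [← mul_assoc, X.s_sq i h, one_mul]

lemma H_S {k : ℕ} (hk : k ≤ g) {h : G} (hh : h ∈ X.H k) : X.ρ h ∈ S k := by
  have : X.H k ≤ (S k).comap X.ρ := by
    unfold H
    rw [Subgroup.closure_le]
    rintro A (⟨i, hi, rfl⟩ | ⟨hi, rfl⟩)
    · rw [SetLike.mem_coe, Subgroup.mem_comap, X.ρ_s i (by omega)]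
      exact T_mem_S (ee_even (by omega) (by omega)) (supp_ee (by omega) hi)
    · rw [SetLike.mem_coe, Subgroup.mem_comap, X.ρ_b]
      exact T_mem_S (w_even (by omega) (by decide)) (supp_w hi)
  exact this hh

lemma lift {k : ℕ} (hk : k ≤ g) {A : O g} (hA : A ∈ S k) : ∃ h ∈ X.H k, X.ρ h = A := by
  have : Γ k ≤ (X.H k).map X.ρ := by
    unfold Γ
    rw [Subgroup.closure_le]
    rintro A (⟨i, hi, rfl⟩ | ⟨hi, rfl⟩)
    · exact ⟨X.s i, X.s_mem hi, X.ρ_s i (by omega)⟩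
    · exact ⟨X.b, X.b_mem hi, X.ρ_b⟩
  exact this (S_le_Γ hk hA)

variable {X} in
lemma P.inj {k : ℕ} (hP : X.P k) {h h' : G} (hh : h ∈ X.H k) (hh' : h' ∈ X.H k)
    (he : X.ρ h = X.ρ h') : h = h' := by
  rw [← mul_inv_eq_one]
  apply hP _ (mul_mem hh (inv_mem hh'))
  rw [map_mul, map_inv, he, mul_inv_cancel]

variable {X} in
lemma P.mono {k l : ℕ} (hP : X.P l) (h : k ≤ l) : X.P k :=
  fun x hx => hP x (X.H_mono h hx)

/-- Elements of `H k` commute with the generators whose support is disjoint from the first `k`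
coordinates. -/
lemma H_comm {k i : ℕ} (hk : k ≤ i) (hi : i + 1 < g) {h : G} (hh : h ∈ X.H k) :
    h * X.s i = X.s i * h := by
  have : X.H k ≤ Subgroup.centralizer {X.s i} := by
    unfold H
    rw [Subgroup.closure_le]
    rintro A (⟨j, hj, rfl⟩ | ⟨hj, rfl⟩)
    · rw [SetLike.mem_coe, Subgroup.mem_centralizer_singleton_iff]
      exact (X.s_comm j i (by omega) hi)
    · rw [SetLike.mem_coe, Subgroup.mem_centralizer_singleton_iff]
      exact (X.b_comm i hi (by omega))
  have := this hh
  rw [Subgroup.mem_centralizer_singleton_iff] at this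
  exact this

/-- The transversal `1, s₂, s₁s₂, s₀s₁s₂`, times `1` or `b`, of `H 3` in `H 4`. -/
lemma H4_cases {h : G} (hh : h ∈ X.H 4) : ∃ β r x, (β = 1 ∨ β = X.b) ∧
    (r = 1 ∨ r = X.s 2 ∨ r = X.s 1 * X.s 2 ∨ r = X.s 0 * (X.s 1 * X.s 2)) ∧ x ∈ X.H 3 ∧
    h = β * (r * x) := by
  have hg := X.hg
  have m0 : X.s 0 ∈ X.H 3 := X.s_mem (by omega)
  have m1 : X.s 1 ∈ X.H 3 := X.s_mem (by omega)
  have c02 : X.s 2 * X.s 0 = X.s 0 * X.s 2 := (X.s_comm 0 2 (by omega) (by omega)).symm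
  have b01 : X.s 1 * (X.s 0 * X.s 1) = X.s 0 * (X.s 1 * X.s 0) := by
    rw [← mul_assoc, ← mul_assoc]; exact (X.s_braid 0 (by omega)).symm
  have b12 : X.s 2 * (X.s 1 * X.s 2) = X.s 1 * (X.s 2 * X.s 1) := by
    rw [← mul_assoc, ← mul_assoc]; exact (X.s_braid 1 (by omega)).symm
  -- left multiplication by `s i` commutes past the central factor `β`
  have hs : ∀ i < 3, ∀ y, (∃ β r x, (β = 1 ∨ β = X.b) ∧
      (r = 1 ∨ r = X.s 2 ∨ r = X.s 1 * X.s 2 ∨ r = X.s 0 * (X.s 1 * X.s 2)) ∧ x ∈ X.H 3 ∧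
      y = β * (r * x)) → ∃ β r x, (β = 1 ∨ β = X.b) ∧
      (r = 1 ∨ r = X.s 2 ∨ r = X.s 1 * X.s 2 ∨ r = X.s 0 * (X.s 1 * X.s 2)) ∧ x ∈ X.H 3 ∧
      X.s i * y = β * (r * x) := by
    rintro i hi y ⟨β, r, x, hβ, hr, hx, rfl⟩
    have hc : X.s i * β = β * X.s i := by
      rcases hβ with rfl | rfl
      · simp
      · exact (X.b_comm i (by omega) (by omega)).symm
    suffices h : ∃ r' x', (r' = 1 ∨ r' = X.s 2 ∨ r' = X.s 1 * X.s 2 ∨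
        r' = X.s 0 * (X.s 1 * X.s 2)) ∧ x' ∈ X.H 3 ∧ X.s i * (r * x) = r' * x' by
      obtain ⟨r', x', hr', hx', he⟩ := h
      exact ⟨β, r', x', hβ, hr', hx', by rw [← mul_assoc, hc, mul_assoc, he]⟩
    obtain rfl | rfl | rfl : i = 0 ∨ i = 1 ∨ i = 2 := by omega
    · rcases hr with rfl | rfl | rfl | rfl
      · exact ⟨1, X.s 0 * x, by simp, mul_mem m0 hx, by simp⟩
      · refine ⟨X.s 2, X.s 0 * x, by simp, mul_mem m0 hx, ?_⟩
        rw [← mul_assoc, ← mul_assoc, c02]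
      · exact ⟨X.s 0 * (X.s 1 * X.s 2), x, by simp, hx, by simp [mul_assoc]⟩
      · refine ⟨X.s 1 * X.s 2, x, by simp, hx, ?_⟩
        rw [← mul_assoc, X.s_mul_s (by omega)]
    · rcases hr with rfl | rfl | rfl | rfl
      · exact ⟨1, X.s 1 * x, by simp, mul_mem m1 hx, by simp⟩
      · exact ⟨X.s 1 * X.s 2, x, by simp, hx, by simp [mul_assoc]⟩
      · refine ⟨X.s 2, x, by simp, hx, ?_⟩
        rw [← mul_assoc, X.s_mul_s (by omega)]
      · refine ⟨X.s 0 * (X.s 1 * X.s 2), X.s 0 * x, by simp, mul_mem m0 hx, ?_⟩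
        calc X.s 1 * (X.s 0 * (X.s 1 * X.s 2) * x)
            = X.s 1 * (X.s 0 * X.s 1) * (X.s 2 * x) := by simp only [mul_assoc]
          _ = X.s 0 * X.s 1 * (X.s 0 * X.s 2) * x := by rw [b01]; simp only [mul_assoc]
          _ = _ := by rw [← c02]; simp only [mul_assoc]
    · rcases hr with rfl | rfl | rfl | rfl
      · exact ⟨X.s 2, x, by simp, hx, by simp⟩
      · refine ⟨1, x, by simp, hx, ?_⟩
        rw [X.s_mul_s (by omega), one_mul]
      · refine ⟨X.s 1 * X.s 2, X.s 1 * x, by simp, mul_mem m1 hx, ?_⟩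
        rw [← mul_assoc, b12]; simp only [mul_assoc]
      · refine ⟨X.s 0 * (X.s 1 * X.s 2), X.s 1 * x, by simp, mul_mem m1 hx, ?_⟩
        calc X.s 2 * (X.s 0 * (X.s 1 * X.s 2) * x)
            = X.s 2 * X.s 0 * (X.s 1 * X.s 2) * x := by simp only [mul_assoc]
          _ = X.s 0 * (X.s 2 * (X.s 1 * X.s 2)) * x := by rw [c02]; simp only [mul_assoc]
          _ = _ := by rw [b12]; simp only [mul_assoc]
  have hb : ∀ y, (∃ β r x, (β = 1 ∨ β = X.b) ∧
      (r = 1 ∨ r = X.s 2 ∨ r = X.s 1 * X.s 2 ∨ r = X.s 0 * (X.s 1 * X.s 2)) ∧ x ∈ X.H 3 ∧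
      y = β * (r * x)) → ∃ β r x, (β = 1 ∨ β = X.b) ∧
      (r = 1 ∨ r = X.s 2 ∨ r = X.s 1 * X.s 2 ∨ r = X.s 0 * (X.s 1 * X.s 2)) ∧ x ∈ X.H 3 ∧
      X.b * y = β * (r * x) := by
    rintro y ⟨β, r, x, hβ, hr, hx, rfl⟩
    rcases hβ with rfl | rfl
    · exact ⟨X.b, r, x, by simp, hr, hx, by simp⟩
    · exact ⟨1, r, x, by simp, hr, hx, by rw [← mul_assoc, X.b_sq]⟩
  induction hh using Subgroup.closure_induction_left with
  | one => exact ⟨1, 1, 1, by simp, by simp, one_mem _, by simp⟩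
  | mul_left z hz y hy ih =>
    rcases hz with ⟨i, hi, rfl⟩ | ⟨-, rfl⟩
    · exact hs i (by omega) y ih
    · exact hb y ih
  | inv_mul_cancel z hz y hy ih =>
    rcases hz with ⟨i, hi, rfl⟩ | ⟨-, rfl⟩
    · rw [X.s_inv (by omega)]
      exact hs i (by omega) y ih
    · rw [X.b_inv]
      exact hb y ih

/-- The transversal `1, s₁, s₀s₁` of `{1, s₀}` in `H 3`. -/
lemma H3_cases {h : G} (hh : h ∈ X.H 3) : ∃ r x,
    (r = 1 ∨ r = X.s 1 ∨ r = X.s 0 * X.s 1) ∧ (x = 1 ∨ x = X.s 0) ∧ h = r * x := by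
  have hg := X.hg
  have q0 : X.s 0 * X.s 0 = 1 := X.s_sq 0 (by omega)
  have b01 : X.s 1 * (X.s 0 * X.s 1) = X.s 0 * (X.s 1 * X.s 0) := by
    rw [← mul_assoc, ← mul_assoc]; exact (X.s_braid 0 (by omega)).symm
  have b01' : X.s 1 * (X.s 0 * (X.s 1 * X.s 0)) = X.s 0 * X.s 1 := by
    rw [← mul_assoc, ← mul_assoc, mul_assoc (X.s 1), b01]
    simp only [mul_assoc, q0, mul_one]
  have hs : ∀ i < 2, ∀ y, (∃ r x, (r = 1 ∨ r = X.s 1 ∨ r = X.s 0 * X.s 1) ∧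
      (x = 1 ∨ x = X.s 0) ∧ y = r * x) → ∃ r x, (r = 1 ∨ r = X.s 1 ∨ r = X.s 0 * X.s 1) ∧
      (x = 1 ∨ x = X.s 0) ∧ X.s i * y = r * x := by
    rintro i hi y ⟨r, x, hr, hx, rfl⟩
    obtain rfl | rfl : i = 0 ∨ i = 1 := by omega
    · rcases hr with rfl | rfl | rfl
      · rcases hx with rfl | rfl
        · exact ⟨1, X.s 0, by simp, by simp, by simp⟩
        · exact ⟨1, 1, by simp, by simp, by simp [q0]⟩
      · exact ⟨X.s 0 * X.s 1, x, by simp, hx, by simp [mul_assoc]⟩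
      · exact ⟨X.s 1, x, by simp, hx, by rw [mul_assoc, X.s_mul_s (by omega)]⟩
    · rcases hr with rfl | rfl | rfl
      · exact ⟨X.s 1, x, by simp, hx, by simp⟩
      · exact ⟨1, x, by simp, hx, by rw [X.s_mul_s (by omega), one_mul]⟩
      · rcases hx with rfl | rfl
        · exact ⟨X.s 0 * X.s 1, X.s 0, by simp, by simp, by rw [mul_one, b01, mul_assoc]⟩
        · exact ⟨X.s 0 * X.s 1, 1, by simp, by simp, by rw [mul_assoc, b01', mul_one]⟩
  induction hh using Subgroup.closure_induction_left with
  | one => exact ⟨1, 1, by simp, by simp, by simp⟩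
  | mul_left z hz y hy ih =>
    rcases hz with ⟨i, hi, rfl⟩ | ⟨h4, -⟩
    · exact hs i (by omega) y ih
    · omega
  | inv_mul_cancel z hz y hy ih =>
    rcases hz with ⟨i, hi, rfl⟩ | ⟨h4, -⟩
    · rw [X.s_inv (by omega)]
      exact hs i (by omega) y ih
    · omega

lemma e_inj {i j : ℕ} (hi : i < g) (h : (e i : V g) = e j) : i = j := by
  by_contra hne
  have := congrArg (· ⬝ᵥ e i) h
  simp only [e_self hi, e_ne hi (Ne.symm hne)] at this
  exact one_ne_zero this

lemma P3 : X.P 3 := by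
  have hg := X.hg
  intro h hh h1
  obtain ⟨r, x, hr, hx, rfl⟩ := X.H3_cases hh
  rw [map_mul] at h1
  have hx2 : act (X.ρ x) (e 2 : V g) = e 2 := by
    rcases hx with rfl | rfl
    · simp
    · rw [X.ρ_s 0 (by omega), act_swap_ne (by omega) (by omega) (by omega)]
  have h2 : act (X.ρ r) (e 2 : V g) = e 2 := by
    have := congrArg (fun A => act A (e 2 : V g)) h1
    simpa only [act_mul, hx2, act_one] using this
  have hr1 : r = 1 := by
    rcases hr with rfl | rfl | rfl
    · rfl
    · rw [X.ρ_s 1 (by omega), act_swap_right (by omega)] at h2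
      exact absurd (e_inj (by omega) h2) (by omega)
    · rw [map_mul, act_mul, X.ρ_s 1 (by omega), act_swap_right (by omega), X.ρ_s 0 (by omega),
        act_swap_right (by omega)] at h2
      exact absurd (e_inj (by omega) h2) (by omega)
  subst hr1
  rcases hx with rfl | rfl
  · simp
  · have := congrArg (fun A => act A (e 1 : V g)) h1
    simp only [map_one, one_mul, X.ρ_s 0 (show 0 + 1 < g by omega), act_one] at this
    rw [act_swap_right (by omega)] at this
    exact absurd (e_inj (by omega) this) (by omega)

lemma P4 : X.P 4 := by
  have hg := X.hg
  intro h hh h1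
  obtain ⟨β, r, x, hβ, hr, hx, rfl⟩ := X.H4_cases hh
  have hx3 : act (X.ρ x) (e 3 : V g) = e 3 := X.H_S (by omega) hx 3 le_rfl
  rw [map_mul, map_mul] at h1
  have h2 : act (X.ρ β) (act (X.ρ r) (e 3 : V g)) = e 3 := by
    have := congrArg (fun A => act A (e 3 : V g)) h1
    simpa only [act_mul, hx3, act_one] using this
  obtain ⟨i, hi, hri, hr1⟩ : ∃ i < 4, act (X.ρ r) (e 3 : V g) = e i ∧ (i = 3 → r = 1) := by
    rcases hr with rfl | rfl | rfl | rfl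
    · exact ⟨3, by omega, by simp, fun _ => rfl⟩
    · exact ⟨2, by omega, by rw [X.ρ_s 2 (by omega), act_swap_right (by omega)], by omega⟩
    · exact ⟨1, by omega, by rw [map_mul, act_mul, X.ρ_s 2 (by omega), act_swap_right (by omega),
        X.ρ_s 1 (by omega), act_swap_right (by omega)], by omega⟩
    · exact ⟨0, by omega, by rw [map_mul, map_mul, act_mul, act_mul, X.ρ_s 2 (by omega),
        act_swap_right (by omega), X.ρ_s 1 (by omega), act_swap_right (by omega),
        X.ρ_s 0 (by omega), act_swap_right (by omega)], by omega⟩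
  rw [hri] at h2
  rcases hβ with rfl | rfl
  · rw [map_one, act_one] at h2
    have := hr1 (e_inj (by omega) h2)
    subst this
    rw [one_mul, one_mul]
    rw [map_one, one_mul, one_mul] at h1
    exact X.P3 x hx h1
  · exfalso
    rw [X.ρ_b, act_T_one (w_even (by omega) (by decide)) (e_w_lt (by omega) hi)] at h2
    -- some index below `3` differs from `i`, and `e i + w 4` does not vanish there
    obtain ⟨j, hj, hji⟩ : ∃ j < 3, j ≠ i := by
      by_cases h0 : i = 0
      · exact ⟨1, by omega, by omega⟩
      · exact ⟨0, by omega, by omega⟩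
    have := congrArg (· ⬝ᵥ e j) h2
    simp only [add_dotProduct] at this
    rw [e_ne (by omega) hji.symm, w_lt (by omega) (by omega), e_ne (by omega) (by omega)] at this
    exact absurd this (by decide)

end Setup
end OrthPres

namespace OrthPres
open Matrix
variable {g : ℕ}

/-! ### Evaluation of words in transvections -/

/-- The linear combination of `v 0, …, v (m - 1)` with the binary digits of `c` as coefficients. -/
def comb (m : ℕ) (v : ℕ → V g) (c : ℕ) : V g :=
  ∑ i ∈ Finset.range m, if c.testBit i then v i else 0

/-- Apply the transvection along `v i`. The state `(p, c)` encodes the vector `x + comb m v c` for a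
fixed `x`, the digits of `p` being its products with the `v j`; the digits of `row i` are
the products of `v i` with the `v j`. -/
def simStep (row : ℕ → ℕ) (i : ℕ) (q : ℕ × ℕ) : ℕ × ℕ :=
  if q.1.testBit i then (q.1 ^^^ row i, q.2 ^^^ 2 ^ i) else q

/-- Apply a word in the transvections, starting with its last letter. -/
def sim (row : ℕ → ℕ) (l : List ℕ) (p : ℕ) : ℕ × ℕ := l.foldr (simStep row) (p, 0)

lemma comb_xor (m : ℕ) (v : ℕ → V g) (c : ℕ) {i : ℕ} (hi : i < m) :
    comb m v (c ^^^ 2 ^ i) = comb m v c + v i := by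
  unfold comb
  rw [← Finset.add_sum_erase _ _ (Finset.mem_range.2 hi),
    ← Finset.add_sum_erase (f := fun j => if c.testBit j then v j else 0) _
      (Finset.mem_range.2 hi), add_right_comm]
  congr 1
  · rw [Nat.testBit_xor, Nat.testBit_two_pow_self]
    cases c.testBit i
    · simp
    · simp [v_add_self]
  · apply Finset.sum_congr rfl
    intro j hj
    rw [Nat.testBit_xor, Nat.testBit_two_pow_of_ne (Finset.ne_of_mem_erase hj).symm, Bool.xor_false]

/-- The element of `ℤ/2` given by a truth value. -/
def bit (x : Bool) : ZMod 2 := if x then 1 else 0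

lemma bit_xor (x y : Bool) : bit (x ^^ y) = bit x + bit y := by revert x y; decide

lemma sim_spec {m : ℕ} {v : ℕ → V g} {row : ℕ → ℕ}
    (hrow : ∀ i < m, ∀ j < m, v i ⬝ᵥ v j = bit ((row i).testBit j))
    (hev : ∀ i < m, v i ⬝ᵥ v i = 0) {p : ℕ} {x : V g}
    (hp : ∀ j < m, x ⬝ᵥ v j = bit (p.testBit j)) (l : List ℕ) (hl : ∀ i ∈ l, i < m) :
    act (l.map fun i => T (v i)).prod x = x + comb m v (sim row l p).2 ∧
    ∀ j < m, act (l.map fun i => T (v i)).prod x ⬝ᵥ v j = bit ((sim row l p).1.testBit j) := by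
  induction l with
  | nil => simpa [sim, comb] using hp
  | cons i l ih =>
    obtain ⟨h1, h2⟩ := ih fun j hj => hl j (List.mem_cons_of_mem _ hj)
    have hi := hl i List.mem_cons_self
    simp only [List.map_cons, List.prod_cons, act_mul]
    have hs : sim row (i :: l) p = simStep row i (sim row l p) := rfl
    have h3 := h2 i hi
    rw [hs, simStep]
    by_cases hb : (sim row l p).1.testBit i
    · rw [hb] at h3
      rw [if_pos hb, act_T_one (hev i hi) h3]
      refine ⟨?_, fun j hj => ?_⟩
      · rw [comb_xor _ _ _ hi, h1, add_assoc]
      · rw [add_dotProduct, h2 j hj, hrow i hi j hj, Nat.testBit_xor, bit_xor]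
    · rw [Bool.not_eq_true] at hb
      rw [hb] at h3
      rw [hb, act_T_zero (hev i hi) h3]
      exact ⟨h1, h2⟩

lemma exists_profile (m : ℕ) (v : ℕ → V g) (x : V g) :
    ∃ p < 2 ^ m, ∀ j < m, x ⬝ᵥ v j = bit (p.testBit j) := by
  refine ⟨Nat.ofBits fun j : Fin m => decide (x ⬝ᵥ v j = 1), Nat.ofBits_lt_two_pow _, ?_⟩
  intro j hj
  rw [Nat.testBit_ofBits_lt _ _ hj]
  rcases z2 (x ⬝ᵥ v j) with h | h <;> simp [h, bit]

lemma prod_flatten_replicate {G : Type*} [Monoid G] (f : ℕ → G) (n : ℕ) (l : List ℕ) :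
    ((List.replicate n l).flatten.map f).prod = (l.map f).prod ^ n := by
  rw [List.map_flatten, List.prod_flatten, List.map_replicate, List.map_replicate,
    List.prod_replicate]

/-- The vectors of the word in relator (8). -/
def v8 (j : ℕ) : ℕ → V g
  | 0 => w (2 * j + 2)
  | 1 => e (2 * j + 1) + e (2 * j + 2)
  | 2 => e (2 * j + 2) + e (2 * j + 3)
  | 3 => e (2 * j + 3) + e (2 * j + 4)
  | 4 => e (2 * j + 4) + e (2 * j + 5)
  | _ => w (2 * j + 4)

/-- The Gram matrix of `v8`, a Coxeter graph of type `D₆`, as bit masks. -/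
def row8 : ℕ → ℕ
  | 0 => 2
  | 1 => 5
  | 2 => 10
  | 3 => 52
  | 4 => 8
  | _ => 8

lemma w_dot_ee {k i : ℕ} (h : i + 1 < g) (hk : i + 1 ≠ k) :
    (w k : V g) ⬝ᵥ (e i + e (i + 1)) = 0 := by
  rw [dotProduct_add, w_dot_e (by omega), w_dot_e h]
  by_cases h' : i + 1 < k
  · rw [if_pos h', if_pos (by omega)]; decide
  · rw [if_neg h', if_neg (by omega)]; decide

lemma w_dot_w {k l : ℕ} (hk : Even k) (hkl : k ≤ l) (h : k ≤ g) : (w k : V g) ⬝ᵥ w l = 0 := by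
  rw [dotProduct_comm, ← w_even h hk]
  have hs : Supp l (w k : V g) := supp_w hkl
  rw [w_dot hs]

lemma row8_spec {j : ℕ} (h : 2 * j + 6 ≤ g) : ∀ i < 6, ∀ i' < 6,
    (v8 j i : V g) ⬝ᵥ v8 j i' = bit ((row8 i).testBit i') := by
  have h1 : Even (2 * j + 2) := ⟨j + 1, by ring⟩
  have h2 : Even (2 * j + 4) := ⟨j + 2, by ring⟩
  have a1 := w_dot_w (g := g) h1 le_rfl (by omega)
  have a2 := w_dot_w (g := g) h2 le_rfl (by omega)
  have a3 := w_dot_w (g := g) h1 (show 2 * j + 2 ≤ 2 * j + 4 by omega) (by omega)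
  have a4 : (w (2 * j + 4) : V g) ⬝ᵥ w (2 * j + 2) = 0 := by rw [dotProduct_comm, a3]
  intro i hi i' hi'
  interval_cases i <;> interval_cases i' <;>
  · simp (disch := omega) only [v8, a1, a2, a3, a4, add_dotProduct, dotProduct_add, e_self, e_ne,
      w_lt, w_ge, e_w_lt, e_w_ge]
    decide

/-- The hypothesis on `p` reflects the dependency `v8 j 5 = v8 j 0 + v8 j 2`. -/
lemma D6_aux1 : ∀ p < 2 ^ 6, (p.testBit 0 ^^ p.testBit 2) = p.testBit 5 →
    (sim row8 (List.replicate 5 [0, 1, 2, 3, 4, 5]).flatten p).2 =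
      if p.testBit 4 ^^ p.testBit 5 then 21 else 0 := by decide +kernel

lemma D6_aux2 : ∀ p < 2 ^ 6, (sim row8 (List.replicate 6 [0, 1, 2, 3, 4]).flatten p).2 = 0 := by
  decide +kernel

lemma D6_pow {j : ℕ} (h : 2 * j + 6 ≤ g) :
    (T (w (2 * j + 2) : V g) * T (e (2 * j + 1) + e (2 * j + 2)) *
      T (e (2 * j + 2) + e (2 * j + 3)) * T (e (2 * j + 3) + e (2 * j + 4)) *
      T (e (2 * j + 4) + e (2 * j + 5)) * T (w (2 * j + 4))) ^ 5 = T (w (2 * j + 6)) := by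
  have hw4 : (w (2 * j + 4) : V g) = v8 j 0 + v8 j 2 := by
    rw [w_succ, w_succ, add_assoc]; rfl
  have hw : (w (2 * j + 6) : V g) = w (2 * j + 4) + v8 j 4 := by
    rw [w_succ, w_succ, add_assoc]; rfl
  have hww := w_even (g := g) h ⟨j + 3, by ring⟩
  suffices hk : ((List.replicate 5 [0, 1, 2, 3, 4, 5]).flatten.map fun i => T (v8 j i : V g)).prod =
      T (w (2 * j + 6)) by
    rw [prod_flatten_replicate] at hk
    simpa [v8, mul_assoc] using hk
  apply act_ext
  intro x
  obtain ⟨p, hp, hpx⟩ := exists_profile 6 (v8 j) x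
  rw [(sim_spec (row8_spec h) (fun i hi => by
    rw [row8_spec h i hi i hi]; interval_cases i <;> decide) hpx _ (by decide)).1,
    act_T hww]
  have h5 : x ⬝ᵥ w (2 * j + 4) = bit (p.testBit 5) := hpx 5 (by omega)
  have h02 : (p.testBit 0 ^^ p.testBit 2) = p.testBit 5 := by
    have hinj : Function.Injective bit := by decide
    apply hinj
    rw [bit_xor, ← hpx 0 (by omega), ← hpx 2 (by omega), ← h5, hw4, dotProduct_add]
  rw [D6_aux1 p hp h02]
  congr 1
  have h6 : x ⬝ᵥ w (2 * j + 6) = bit (p.testBit 4 ^^ p.testBit 5) := by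
    rw [hw, dotProduct_add, h5, hpx 4 (by omega), bit_xor, add_comm]
  rw [h6]
  cases (p.testBit 4 ^^ p.testBit 5)
  · simp [comb, bit]
  · rw [hw, hw4]
    simp [comb, Finset.sum_range_succ, Nat.testBit, bit]

lemma A5_pow {j : ℕ} (h : 2 * j + 6 ≤ g) :
    (T (w (2 * j + 2) : V g) * T (e (2 * j + 1) + e (2 * j + 2)) *
      T (e (2 * j + 2) + e (2 * j + 3)) * T (e (2 * j + 3) + e (2 * j + 4)) *
      T (e (2 * j + 4) + e (2 * j + 5))) ^ 6 = 1 := by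
  suffices hk : ((List.replicate 6 [0, 1, 2, 3, 4]).flatten.map fun i => T (v8 j i : V g)).prod =
      1 by
    rw [prod_flatten_replicate] at hk
    simpa [v8, mul_assoc] using hk
  apply act_ext
  intro x
  obtain ⟨p, hp, hpx⟩ := exists_profile 6 (v8 j) x
  rw [(sim_spec (row8_spec h) (fun i hi => by
    rw [row8_spec h i hi i hi]; interval_cases i <;> decide) hpx _ (by decide)).1,
    D6_aux2 p hp]
  simp [comb]

/-- The vectors of the word in relator (6). -/
def v7 : ℕ → V g
  | 0 => e 0 + e 1
  | 1 => e 1 + e 2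
  | 2 => e 2 + e 3
  | 3 => e 3 + e 4
  | 4 => e 4 + e 5
  | 5 => e 5 + e 6
  | _ => w 4

/-- The Gram matrix of `v7`, the Coxeter graph `E₇`, as bit masks. -/
def row7 : ℕ → ℕ
  | 0 => 2
  | 1 => 5
  | 2 => 10
  | 3 => 84
  | 4 => 40
  | 5 => 16
  | _ => 8

lemma row7_spec (h : 8 ≤ g) : ∀ i < 7, ∀ i' < 7,
    (v7 i : V g) ⬝ᵥ v7 i' = bit ((row7 i).testBit i') := by
  have a1 := w_even (g := g) (show 4 ≤ g by omega) (by decide)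
  intro i hi i' hi'
  interval_cases i <;> interval_cases i' <;>
  · simp (disch := omega) only [v7, a1, add_dotProduct, dotProduct_add, e_self, e_ne,
      w_lt, w_ge, e_w_lt, e_w_ge]
    decide

lemma E7_aux1 : ∀ p < 2 ^ 7,
    (sim row7 (List.replicate 12 [1, 2, 3, 4, 5, 6]).flatten p).2 = 0 := by decide +kernel

/-- The digits of `69` give the combination `(e 0 + e 1) + (e 2 + e 3) + w 4 = 0`. -/
lemma E7_aux2 : ∀ p < 2 ^ 7,
    (sim row7 (List.replicate 9 [0, 1, 2, 3, 4, 5, 6]).flatten p).2 = 0 ∨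
    (sim row7 (List.replicate 9 [0, 1, 2, 3, 4, 5, 6]).flatten p).2 = 69 := by decide +kernel

lemma E6_pow (h : 8 ≤ g) : (T (e 1 + e 2 : V g) * T (e 2 + e 3) * T (e 3 + e 4) * T (e 4 + e 5) *
    T (e 5 + e 6) * T (w 4)) ^ 12 = 1 := by
  suffices hk : ((List.replicate 12 [1, 2, 3, 4, 5, 6]).flatten.map fun i => T (v7 i : V g)).prod =
      1 by
    rw [prod_flatten_replicate] at hk
    simpa [v7, mul_assoc] using hk
  apply act_ext
  intro x
  obtain ⟨p, hp, hpx⟩ := exists_profile 7 v7 x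
  rw [(sim_spec (row7_spec h) (fun i hi => by
    rw [row7_spec h i hi i hi]; interval_cases i <;> decide) hpx _ (by decide)).1,
    E7_aux1 p hp]
  simp [comb]

lemma E7_pow (h : 8 ≤ g) : (T (e 0 + e 1 : V g) * T (e 1 + e 2) * T (e 2 + e 3) * T (e 3 + e 4) *
    T (e 4 + e 5) * T (e 5 + e 6) * T (w 4)) ^ 9 = 1 := by
  suffices hk : ((List.replicate 9 [0, 1, 2, 3, 4, 5, 6]).flatten.map fun i => T (v7 i : V g)).prod =
      1 by
    rw [prod_flatten_replicate] at hk
    simpa [v7, mul_assoc] using hk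
  apply act_ext
  intro x
  obtain ⟨p, hp, hpx⟩ := exists_profile 7 v7 x
  rw [(sim_spec (row7_spec h) (fun i hi => by
    rw [row7_spec h i hi i hi]; interval_cases i <;> decide) hpx _ (by decide)).1, act_one]
  rcases E7_aux2 p hp with h0 | h0
  · rw [h0]; simp [comb]
  · have hw : (w 4 : V g) = e 0 + e 1 + (e 2 + e 3) := by
      rw [w_succ, w_succ, w_succ, w_succ, w_zero, zero_add, add_assoc (e 0 + e 1)]
    rw [h0, add_eq_left, comb]
    simp [Finset.sum_range_succ, Nat.testBit, v7, hw, v_add_self]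

end OrthPres

namespace OrthPres
open Matrix
variable {g : ℕ}
namespace Setup
variable {G : Type*} [Group G] (X : Setup g G)

/-! ### Consequences of the Coxeter relations -/

/-- The generators indexed by the vertices of the graph `E₇`. -/
def letter (x : ℕ) : G := if x < 6 then X.s x else if x = 6 then X.b else 1

lemma letter_sq (x : ℕ) : X.letter x * X.letter x = 1 := by
  have hg := X.hg
  unfold letter
  split_ifs
  · exact X.s_sq x (by omega)
  · exact X.b_sq
  · simp

lemma letter_comm (x y : ℕ) (h : adj x y = false) :
    X.letter x * X.letter y = X.letter y * X.letter x := by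
  have hg := X.hg
  simp only [adj, Bool.or_eq_false_iff, Bool.and_eq_false_iff, beq_eq_false_iff_ne,
    decide_eq_false_iff_not] at h
  unfold letter
  split_ifs <;> try simp
  · rcases lt_trichotomy x y with hxy | rfl | hxy
    · exact X.s_comm x y (by omega) (by omega)
    · rfl
    · exact (X.s_comm y x (by omega) (by omega)).symm
  · exact (X.b_comm x (by omega) (by omega)).symm
  · exact X.b_comm y (by omega) (by omega)

lemma letter_braid (x y : ℕ) (h : adj x y = true) :
    X.letter x * X.letter y * X.letter x = X.letter y * X.letter x * X.letter y := by
  have hg := X.hg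
  simp only [adj, Bool.or_eq_true, Bool.and_eq_true, beq_iff_eq, decide_eq_true_eq] at h
  rcases h with ((⟨rfl, h⟩ | ⟨rfl, h⟩) | ⟨rfl, rfl⟩) | ⟨rfl, rfl⟩
  · simp only [letter, h, show x < 6 by omega, if_true]
    exact X.s_braid x (by omega)
  · simp only [letter, h, show y < 6 by omega, if_true]
    exact (X.s_braid y (by omega)).symm
  · simpa [letter] using X.b_braid.symm
  · simpa [letter] using X.b_braid

lemma word_eq_one {l : List ℕ} (h : reduce l = []) : (l.map X.letter).prod = 1 := by
  rw [← reduce_prod X.letter_sq X.letter_comm X.letter_braid l, h]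
  rfl

/-- The lift of the transvection along `w 6` occurring in relator (7). -/
def d6 : G := (X.s 0 * X.s 1 * X.s 2 * X.s 3 * X.s 4 * X.b) ^ 5

lemma d6_mem : X.d6 ∈ X.H 6 :=
  pow_mem (mul_mem (mul_mem (mul_mem (mul_mem (mul_mem (X.s_mem (by omega)) (X.s_mem (by omega)))
    (X.s_mem (by omega))) (X.s_mem (by omega))) (X.s_mem (by omega))) (X.b_mem (by omega))) 5

lemma ρ_d6 : X.ρ X.d6 = T (w 6) := by
  have hg := X.hg
  unfold d6
  have h2 : (w (2 * 0 + 2) : V g) = e 0 + e 1 := by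
    rw [w_succ, w_succ, w_zero, zero_add]
  have := D6_pow (g := g) (j := 0) (by omega)
  rw [h2] at this
  simp only [map_pow, map_mul, X.ρ_b, X.ρ_s 0 (show 0 + 1 < g by omega),
    X.ρ_s 1 (show 1 + 1 < g by omega), X.ρ_s 2 (show 2 + 1 < g by omega),
    X.ρ_s 3 (show 3 + 1 < g by omega), X.ρ_s 4 (show 4 + 1 < g by omega)]
  exact this

lemma d6_prod : (((List.replicate 5 [0, 1, 2, 3, 4, 6]).flatten).map X.letter).prod = X.d6 := by
  rw [prod_flatten_replicate]
  simp [letter, d6, mul_assoc]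

/-- The longest element of the Coxeter group `E₇` becomes trivial by relator (6), since the Coxeter
element of `E₆` has order `12`. -/
lemma E7_one : (((List.replicate 9 [6, 5, 4, 3, 2, 1, 0]).flatten).map X.letter).prod = 1 := by
  have hg := X.hg
  have h := X.word_eq_one cox1
  rw [prod_flatten_replicate] at h
  have h12 : (X.s 1 * X.s 2 * X.s 3 * X.s 4 * X.s 5 * X.b) ^ 12 = 1 := by
    simpa [letter, mul_assoc] using h
  rw [X.e7] at h12
  rw [prod_flatten_replicate, ← inv_eq_one, ← inv_pow]
  have : (([6, 5, 4, 3, 2, 1, 0].map X.letter).prod)⁻¹ =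
      X.s 0 * X.s 1 * X.s 2 * X.s 3 * X.s 4 * X.s 5 * X.b := by
    simp only [letter, List.map_cons, List.map_nil, List.prod_cons, List.prod_nil, mul_one,
      _root_.mul_inv_rev]
    simp [X.b_inv, X.s_inv (show 0 + 1 < g by omega), X.s_inv (show 1 + 1 < g by omega),
      X.s_inv (show 2 + 1 < g by omega), X.s_inv (show 3 + 1 < g by omega),
      X.s_inv (show 4 + 1 < g by omega), X.s_inv (show 5 + 1 < g by omega), mul_assoc]
  rw [this, h12]

/-- By relator (6), the generator `s 5` satisfies the braid relation with `d6`. -/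
lemma d6_cube : (X.s 5 * X.d6) ^ 3 = 1 := by
  have h := X.word_eq_one cox2
  rw [List.map_append, List.prod_append, X.E7_one, mul_one, prod_flatten_replicate, List.map_cons,
    List.prod_cons, d6_prod] at h
  exact h

/-- The lift of the transvection along `e 0 + e 1 + e 4 + e 5`. -/
def δ6 : G := X.s 3 * X.s 2 * X.s 4 * X.s 3 * X.b * X.s 3 * X.s 4 * X.s 2 * X.s 3

/-- By relator (6), the conjugate of `d6` by the coset representative of `e 0 + e 1 + e 6` lies in
`H 6`. -/
lemma d6_conj : (X.s 5 * X.δ6 * X.s 4 * X.s 5)⁻¹ * X.d6 * (X.s 5 * X.δ6 * X.s 4 * X.s 5) ∈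
    X.H 6 := by
  have hg := X.hg
  have h := X.word_eq_one cox3
  rw [List.map_append, List.prod_append, X.E7_one, mul_one, List.map_append, List.prod_append,
    mul_eq_one_iff_eq_inv, List.map_append, List.prod_append, List.map_append, List.prod_append,
    d6_prod] at h
  have h1 : ([5, 4, 3, 2, 4, 3, 6, 3, 4, 2, 3, 5].map X.letter).prod =
      (X.s 5 * X.δ6 * X.s 4 * X.s 5)⁻¹ := by
    unfold δ6
    simp only [_root_.mul_inv_rev]
    simp [letter, X.b_inv, X.s_inv (show 2 + 1 < g by omega), X.s_inv (show 3 + 1 < g by omega),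
      X.s_inv (show 4 + 1 < g by omega), X.s_inv (show 5 + 1 < g by omega), mul_assoc]
  have h2 : ([5, 3, 2, 4, 3, 6, 3, 4, 2, 3, 4, 5].map X.letter).prod =
      X.s 5 * X.δ6 * X.s 4 * X.s 5 := by
    simp [letter, δ6, mul_assoc]
  rw [h1, h2] at h
  rw [h]
  apply inv_mem
  apply list_prod_mem
  intro x hx
  obtain ⟨i, hi, rfl⟩ := List.mem_map.1 hx
  have : i < 5 ∨ i = 6 := by
    clear hx
    revert i
    decide
  rcases this with h5 | rfl
  · rw [letter, if_pos (by omega)]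
    exact X.s_mem (by omega)
  · simpa [letter] using X.b_mem (by omega)

/-! ### Lifts of transvections -/

open Classical in
/-- A lift to `H k` of the transvection along `y` (and `1` if there is none). -/
noncomputable def tau (k : ℕ) (y : V g) : G :=
  if h : ∃ x ∈ X.H k, X.ρ x = T y then h.choose else 1

section tau

variable {k : ℕ} (hk : k ≤ g)

include hk

lemma tau_spec {y : V g} (hs : Supp k y) (hy : y ⬝ᵥ y = 0) :
    X.tau k y ∈ X.H k ∧ X.ρ (X.tau k y) = T y := by
  have h := X.lift hk (T_mem_S hy hs)
  unfold tau
  rw [dif_pos h]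
  exact h.choose_spec

variable {X} (hP : X.P k)

include hP

lemma tau_eq {y : V g} (hs : Supp k y) (hy : y ⬝ᵥ y = 0) {t : G} (ht : t ∈ X.H k)
    (h : X.ρ t = T y) : X.tau k y = t :=
  hP.inj (X.tau_spec hk hs hy).1 ht (by rw [h, (X.tau_spec hk hs hy).2])

lemma tau_conj {y : V g} (hs : Supp k y) (hy : y ⬝ᵥ y = 0) {h : G} (hh : h ∈ X.H k) :
    h * X.tau k y * h⁻¹ = X.tau k (act (X.ρ h) y) := by
  symm
  apply tau_eq hk hP (S_act_supp (X.H_S hk hh) hs) (by rw [act_dot, hy])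
    (mul_mem (mul_mem hh (X.tau_spec hk hs hy).1) (inv_mem hh))
  rw [map_mul, map_mul, map_inv, (X.tau_spec hk hs hy).2, T_conj hy]

lemma tau_sq {y : V g} (hs : Supp k y) (hy : y ⬝ᵥ y = 0) : X.tau k y * X.tau k y = 1 := by
  have := (X.tau_spec hk hs hy)
  apply hP _ (mul_mem this.1 this.1)
  rw [map_mul, this.2, T_sq]

lemma tau_inv {y : V g} (hs : Supp k y) (hy : y ⬝ᵥ y = 0) : (X.tau k y)⁻¹ = X.tau k y :=
  inv_eq_of_mul_eq_one_left (tau_sq hk hP hs hy)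

lemma tau_comm {y z : V g} (hs : Supp k y) (hy : y ⬝ᵥ y = 0) (hs' : Supp k z) (hz : z ⬝ᵥ z = 0)
    (h : y ⬝ᵥ z = 0) : X.tau k y * X.tau k z = X.tau k z * X.tau k y := by
  have a1 := X.tau_spec hk hs hy
  have a2 := X.tau_spec hk hs' hz
  apply hP.inj (mul_mem a1.1 a2.1) (mul_mem a2.1 a1.1)
  rw [map_mul, map_mul, a1.2, a2.2, T_comm hy hz h]

lemma tau_s {i : ℕ} (hi : i + 1 < k) : X.tau k (e i + e (i + 1)) = X.s i :=
  tau_eq hk hP (supp_ee (by omega) hi) (ee_even (by omega) (by omega)) (X.s_mem hi)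
    (X.ρ_s i (by omega))

lemma tau_fano {u v z : V g} (su : Supp k u) (sv : Supp k v) (sz : Supp k z)
    (hu : u ⬝ᵥ u = 0) (hv : v ⬝ᵥ v = 0) (hz : z ⬝ᵥ z = 0)
    (huv : u ⬝ᵥ v = 0) (huz : u ⬝ᵥ z = 0) (hvz : v ⬝ᵥ z = 0) :
    X.tau k z = X.tau k u * X.tau k v * X.tau k (u + v) * X.tau k (u + z) * X.tau k (v + z) *
      X.tau k (u + v + z) := by
  have hs : (u + v) ⬝ᵥ (u + v) = 0 := add_even (by rw [hu, hv])
  have a1 := X.tau_spec hk su hu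
  have a2 := X.tau_spec hk sv hv
  have a3 := X.tau_spec hk (su.add sv) hs
  have a4 := X.tau_spec hk (su.add sz) (add_even (by rw [hu, hz]))
  have a5 := X.tau_spec hk (sv.add sz) (add_even (by rw [hv, hz]))
  have a6 := X.tau_spec hk ((su.add sv).add sz) (add_even (by rw [hs, hz]))
  apply tau_eq hk hP sz hz
  · exact mul_mem (mul_mem (mul_mem (mul_mem (mul_mem a1.1 a2.1) a3.1) a4.1) a5.1) a6.1
  · simp only [map_mul, a1.2, a2.2, a3.2, a4.2, a5.2, a6.2]
    exact (fano hu hv hz huv huz hvz).symm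

/-- Lifts do not depend on the size of the subgroup. -/
lemma tau_mono {l : ℕ} (hl : l ≤ k) {y : V g} (hs : Supp l y) (hy : y ⬝ᵥ y = 0) :
    X.tau k y = X.tau l y := by
  have := X.tau_spec (hl.trans hk) hs hy
  exact tau_eq hk hP (hs.mono hl) hy (X.H_mono hl this.1) this.2

end tau

end Setup
end OrthPres

namespace OrthPres
open Matrix
variable {g : ℕ}

/-! ### The braid relation with the new generator -/

/-- Transport of the braid relation from `c` to `W`, where `c` and `W` are products of transvections
as in `fano` whose factors are matched by conjugation. -/
lemma braid_of_fano {G : Type*} [Group G] {a c A W p₁ p₂ p₃ q₁ q₂ q₃ : G} (ha : a * a = 1)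
    (hc : c * c = 1) (hW : W * W = 1) (hac : c * a * c = a * c * a) (hAa : A * a = a * A)
    (hAc : A * c = c * A) (hAW : A * W = W * A) (hp : c = A * p₁ * p₂ * p₃)
    (hq : W = A * q₁ * q₂ * q₃) (h₁ : a * q₁ * a = W * (c * a * p₁ * a * c) * W)
    (h₂ : a * q₂ * a = W * (c * a * p₂ * a * c) * W)
    (h₃ : a * q₃ * a = W * (c * a * p₃ * a * c) * W) : a * W * a = W * a * W := by
  have ha' : ∀ x, a * (a * x) = x := fun x => by rw [← mul_assoc, ha, one_mul]
  have hc' : ∀ x, c * (c * x) = x := fun x => by rw [← mul_assoc, hc, one_mul]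
  have hW' : ∀ x, W * (W * x) = x := fun x => by rw [← mul_assoc, hW, one_mul]
  have e1 : a = A * (c * a * p₁ * a * c) * (c * a * p₂ * a * c) * (c * a * p₃ * a * c) := by
    calc a = a * c * a * a * c := by simp only [mul_assoc, ha', hc, mul_one]
      _ = c * a * c * a * c := by rw [← hac]
      _ = c * a * (A * p₁ * p₂ * p₃) * a * c := by rw [← hp]
      _ = (c * (a * A)) * p₁ * p₂ * p₃ * a * c := by simp only [mul_assoc]
      _ = A * c * a * p₁ * p₂ * p₃ * a * c := by
        rw [← hAa, ← mul_assoc c, ← hAc]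
      _ = _ := by simp only [mul_assoc, ha', hc']
  calc a * W * a = a * (A * q₁ * q₂ * q₃) * a := by rw [← hq]
    _ = (a * A) * q₁ * q₂ * q₃ * a := by simp only [mul_assoc]
    _ = A * (a * q₁ * a) * (a * q₂ * a) * (a * q₃ * a) := by
      rw [← hAa]; simp only [mul_assoc, ha']
    _ = (A * W) * (c * a * p₁ * a * c) * (c * a * p₂ * a * c) * (c * a * p₃ * a * c) * W := by
      rw [h₁, h₂, h₃]; simp only [mul_assoc, hW']
    _ = W * (A * (c * a * p₁ * a * c) * (c * a * p₂ * a * c) * (c * a * p₃ * a * c)) * W := by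
      rw [hAW]; simp only [mul_assoc]
    _ = _ := by rw [← e1]

namespace Setup
variable {G : Type*} [Group G] {X : Setup g G}

section step

variable {n : ℕ} (hng : n + 3 ≤ g) (hP : X.P (n + 2))

include hng hP

lemma mem_of_fix {h : G} (hh : h ∈ X.H (n + 2))
    (hf : act (X.ρ h) (e (n + 1)) = e (n + 1)) : h ∈ X.H (n + 1) := by
  obtain ⟨h', hh', he⟩ := X.lift (by omega) (S_pred (X.H_S (by omega) hh) hf)
  rwa [← hP.inj (X.H_mono (by omega) hh') hh he]

/-- The conjugate of the new generator by `h ∈ H (n + 2)` depends only on the image of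
`e (n + 1)`. -/
lemma conj_eq {h h' : G} (hh : h ∈ X.H (n + 2)) (hh' : h' ∈ X.H (n + 2))
    (hf : act (X.ρ h) (e (n + 1)) = act (X.ρ h') (e (n + 1))) :
    h * X.s (n + 1) * h⁻¹ = h' * X.s (n + 1) * h'⁻¹ := by
  have := X.H_comm le_rfl (by omega) (mem_of_fix hng hP (mul_mem (inv_mem hh') hh) (by
    rw [map_mul, map_inv, act_mul, hf, act_inv_act]))
  rw [mul_inv_eq_iff_eq_mul]
  calc h * X.s (n + 1) = h' * (h'⁻¹ * h * X.s (n + 1)) := by group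
    _ = _ := by rw [this]; group

/-- For `y ≠ w (n + 2)` the braid relation with the lift of the transvection along `y` is conjugate,
under an element of `H (n + 1)`, to the one between the last two adjacent transpositions. -/
lemma braid_generic {y : V g} (hs : Supp (n + 2) y) (hy : y ⬝ᵥ y = 0) (hx : y ⬝ᵥ e (n + 1) = 1)
    (hw : y ≠ w (n + 2)) :
    X.s (n + 1) * X.tau (n + 2) y * X.s (n + 1) =
      X.tau (n + 2) y * X.s (n + 1) * X.tau (n + 2) y := by
  have hz1 : Supp (n + 1) (y + e (n + 1)) := by
    apply (hs.add (supp_e (by omega))).pred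
    rw [add_dotProduct, hx, e_self (by omega)]; decide
  have hz2 : (y + e (n + 1)) ⬝ᵥ (y + e (n + 1)) = 1 := by
    rw [self_add, hy, e_self (by omega), zero_add]
  obtain ⟨A, hA, hAz⟩ := tr_odd (by omega) hz1 hz2 (fun h => by
    exfalso
    apply hw
    rw [w_succ, ← h, add_assoc, v_add_self, add_zero])
  obtain ⟨h, hh, rfl⟩ := X.lift (by omega) (TG_le_S _ hA)
  have hy' : act (X.ρ h) (e n + e (n + 1)) = y := by
    rw [act_add, hAz, X.H_S (by omega) hh _ le_rfl, add_assoc, v_add_self, add_zero]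
  have h1 := tau_conj (k := n + 2) (by omega) hP (supp_ee (by omega) (by omega))
    (ee_even (by omega) (by omega)) (y := e n + e (n + 1)) (X.H_mono (by omega) hh)
  rw [hy', tau_s (by omega) hP (by omega)] at h1
  have h2 : h * X.s (n + 1) * h⁻¹ = X.s (n + 1) := by
    rw [X.H_comm le_rfl (by omega) hh, mul_inv_cancel_right]
  have h3 := congrArg (fun x => h * x * h⁻¹) (X.s_braid n (by omega))
  rw [← h1]
  nth_rewrite 1 2 3 [← h2]
  simp only [mul_assoc, inv_mul_cancel_left] at h3 ⊢
  exact h3.symm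

lemma braid_w_aux (hn6 : 6 ≤ n) (hev : Even (n + 2)) {r : V g} (hs : Supp 4 r) (hr : r ⬝ᵥ r = 0)
    (h0 : r ≠ 0) :
    X.s (n + 1) * X.tau (n + 2) (r + w (n + 2)) * X.s (n + 1) =
      X.tau (n + 2) (w (n + 2)) * (X.s n * X.s (n + 1) * X.tau (n + 2) (r + (e n + e (n + 1))) *
        X.s (n + 1) * X.s n) * X.tau (n + 2) (w (n + 2)) := by
  have hs' : Supp (n + 2) r := hs.mono (by omega)
  have hW : (w (n + 2) : V g) ⬝ᵥ w (n + 2) = 0 := w_even (by omega) hev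
  have hsW : Supp (n + 2) (r + w (n + 2)) := hs'.add (supp_w le_rfl)
  have hqW : (r + w (n + 2)) ⬝ᵥ (r + w (n + 2)) = 0 := add_even (by rw [hr, hW])
  have hrn : r ⬝ᵥ e n = 0 := hs.dot_e_eq (by omega)
  have hrn1 : r ⬝ᵥ e (n + 1) = 0 := hs.dot_e_eq (by omega)
  obtain ⟨A, hA, hAz⟩ := tr_odd (k := n) (v := e n + r) (by omega)
    ((supp_e (by omega)).add (hs.mono (by omega))) (by rw [self_add, hr, e_self (by omega), add_zero])
    (fun h => by
      exfalso
      have := congrArg (· ⬝ᵥ e 5) h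
      simp only [add_dotProduct] at this
      rw [e_ne (by omega) (by omega), w_lt (by omega) (by omega), hs.dot_e_eq (by omega)] at this
      exact absurd this (by decide))
  obtain ⟨m, hm, rfl⟩ := X.lift (by omega) (TG_le_S _ hA)
  have hm' := X.H_mono (show n + 1 ≤ n + 2 by omega) hm
  have hy' : act (X.ρ m) (e n + e (n + 1)) = r + (e n + e (n + 1)) := by
    rw [act_add, hAz, X.H_S (by omega) hm _ le_rfl]
    abel
  have h1 := tau_conj (k := n + 2) (by omega) hP (supp_ee (by omega) (by omega))
    (ee_even (by omega) (by omega)) (y := e n + e (n + 1)) hm'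
  rw [hy', tau_s (by omega) hP (by omega)] at h1
  have hma := X.H_comm le_rfl (by omega) hm
  have hma' : m⁻¹ * X.s (n + 1) = X.s (n + 1) * m⁻¹ := X.H_comm le_rfl (by omega) (inv_mem hm)
  have hc := X.s_inv (show n + 1 < g by omega)
  have hcm : X.s n ∈ X.H (n + 2) := X.s_mem (by omega)
  have hh : X.s n * m * X.s n ∈ X.H (n + 2) := mul_mem (mul_mem hcm hm') hcm
  have h2 : X.s n * X.s (n + 1) * X.tau (n + 2) (r + (e n + e (n + 1))) * X.s (n + 1) * X.s n =
      X.s n * m * X.s n * X.s (n + 1) * (X.s n * m * X.s n)⁻¹ := by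
    rw [← h1]
    calc X.s n * X.s (n + 1) * (m * X.s n * m⁻¹) * X.s (n + 1) * X.s n
        = X.s n * (X.s (n + 1) * m) * X.s n * (m⁻¹ * X.s (n + 1)) * X.s n := by
          simp only [mul_assoc]
      _ = X.s n * m * (X.s (n + 1) * X.s n * X.s (n + 1)) * m⁻¹ * X.s n := by
          rw [← hma, hma']; simp only [mul_assoc]
      _ = _ := by rw [← X.s_braid n (by omega)]; simp only [_root_.mul_inv_rev, hc, mul_assoc]
  have hτW := X.tau_spec (k := n + 2) (by omega) (supp_w le_rfl) hW
  have hτr := X.tau_spec (k := n + 2) (by omega) hsW hqW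
  have hrW : r ⬝ᵥ w (n + 2) = 0 := by rw [dotProduct_comm, w_dot hs', hr]
  rw [braid_generic hng hP hsW hqW
    (by rw [add_dotProduct, hrn1, w_lt (by omega) (by omega), zero_add])
    (fun h => h0 (by simpa using h)), h2]
  have h3 := conj_eq hng hP hτr.1 (mul_mem hτW.1 hh) (by
    rw [hτr.2, act_T_one hqW, map_mul, act_mul, map_mul, map_mul, X.ρ_s n (by omega), act_mul,
      act_mul, act_swap_right (by omega), hAz, act_add, act_swap_left (by omega), hτW.2,
      act_T_zero (v := r) (ee_even (by omega) (by omega)), act_T_one hW]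
    · abel
    · rw [add_dotProduct, e_w_lt (by omega) (by omega), hrW, add_zero]
    · rw [dotProduct_add, hrn, hrn1, add_zero]
    · rw [dotProduct_add, e_w_lt (by omega) (by omega), dotProduct_comm, hrn1, zero_add])
  rw [tau_inv (by omega) hP hsW hqW] at h3
  rw [h3, _root_.mul_inv_rev (X.tau (n + 2) (w (n + 2))),
    tau_inv (by omega) hP (supp_w le_rfl) hW]
  simp only [mul_assoc]

lemma braid_w (hn6 : 6 ≤ n) (hev : Even (n + 2)) :
    X.s (n + 1) * X.tau (n + 2) (w (n + 2)) * X.s (n + 1) =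
      X.tau (n + 2) (w (n + 2)) * X.s (n + 1) * X.tau (n + 2) (w (n + 2)) := by
  have hW : (w (n + 2) : V g) ⬝ᵥ w (n + 2) = 0 := w_even (by omega) hev
  have hu : (e 0 + e 1 : V g) ⬝ᵥ (e 0 + e 1) = 0 := ee_even (by omega) (by omega)
  have hv : (e 2 + e 3 : V g) ⬝ᵥ (e 2 + e 3) = 0 := ee_even (by omega) (by omega)
  have huv : (e 0 + e 1 + (e 2 + e 3) : V g) ⬝ᵥ (e 0 + e 1 + (e 2 + e 3)) = 0 :=
    add_even (by rw [hu, hv])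
  have hd : (e 0 + e 1 : V g) ⬝ᵥ (e 2 + e 3) = 0 := by
    simp (disch := omega) only [add_dotProduct, dotProduct_add, e_ne]; decide
  have su : Supp 4 (e 0 + e 1 : V g) := supp_ee (by omega) (by omega)
  have sv : Supp 4 (e 2 + e 3 : V g) := supp_ee (by omega) (by omega)
  have su' := su.mono (show 4 ≤ n + 2 by omega)
  have sv' := sv.mono (show 4 ≤ n + 2 by omega)
  have hz : (e n + e (n + 1) : V g) ⬝ᵥ (e n + e (n + 1)) = 0 := ee_even (by omega) (by omega)
  have hk : n + 2 ≤ g := by omega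
  have ne0 : ∀ {r : V g} {j : ℕ}, r ⬝ᵥ e j = 1 → r ≠ 0 := by
    rintro r j h rfl
    rw [zero_dotProduct] at h
    exact zero_ne_one h
  have dW : ∀ {r : V g}, Supp (n + 2) r → r ⬝ᵥ r = 0 → r ⬝ᵥ w (n + 2) = 0 := fun hs h => by
    rw [dotProduct_comm, w_dot hs, h]
  have hcm : ∀ {i : ℕ}, 4 ≤ i → i + 1 < g → ∀ {r : V g}, Supp 4 r → r ⬝ᵥ r = 0 →
      X.tau (n + 2) r * X.s i = X.s i * X.tau (n + 2) r := by
    intro i h4 hi r hs h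
    rw [tau_mono hk hP (show 4 ≤ n + 2 by omega) hs h]
    exact X.H_comm h4 hi (X.tau_spec (by omega) hs h).1
  have com3 : ∀ {x y z t : G}, x * t = t * x → y * t = t * y → z * t = t * z →
      x * y * z * t = t * (x * y * z) := fun {x y z t} h1 h2 h3 => by
    rw [mul_assoc, h3, ← mul_assoc, mul_assoc x, h2, ← mul_assoc, h1]; simp only [mul_assoc]
  refine braid_of_fano (c := X.s n)
    (A := X.tau (n + 2) (e 0 + e 1) * X.tau (n + 2) (e 2 + e 3) *
      X.tau (n + 2) (e 0 + e 1 + (e 2 + e 3))) (X.s_sq _ (by omega)) (X.s_sq _ (by omega))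
    (tau_sq hk hP (supp_w le_rfl) hW) (X.s_braid n (by omega))
    (com3 (hcm (by omega) (by omega) su hu) (hcm (by omega) (by omega) sv hv)
      (hcm (by omega) (by omega) (su.add sv) huv))
    (com3 (hcm (by omega) (by omega) su hu) (hcm (by omega) (by omega) sv hv)
      (hcm (by omega) (by omega) (su.add sv) huv))
    (com3 (tau_comm hk hP su' hu (supp_w le_rfl) hW (dW su' hu))
      (tau_comm hk hP sv' hv (supp_w le_rfl) hW (dW sv' hv))
      (tau_comm hk hP (su'.add sv') huv (supp_w le_rfl) hW (dW (su'.add sv') huv)))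
    ?_ (tau_fano hk hP su' sv' (supp_w le_rfl) hu hv hW hd (dW su' hu) (dW sv' hv))
    (braid_w_aux hng hP hn6 hev su hu (ne0 (j := 0) ?_))
    (braid_w_aux hng hP hn6 hev sv hv (ne0 (j := 2) ?_))
    (braid_w_aux hng hP hn6 hev (su.add sv) huv (ne0 (j := 0) ?_))
  · rw [← tau_s hk hP (by omega)]
    apply tau_fano hk hP su' sv' (supp_ee (by omega) (by omega)) hu hv hz hd
    · rw [dotProduct_add, su.dot_e_eq (by omega), su.dot_e_eq (by omega), add_zero]
    · rw [dotProduct_add, sv.dot_e_eq (by omega), sv.dot_e_eq (by omega), add_zero]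
  all_goals
    simp (disch := omega) only [add_dotProduct, e_self, e_ne]; decide

/-- The new generator satisfies the braid relation with the lift of every transvection that does
not fix `e (n + 1)`. -/
lemma braid (hn : 2 ≤ n) {y : V g} (hs : Supp (n + 2) y) (hy : y ⬝ᵥ y = 0) (hx : y ⬝ᵥ e (n + 1) = 1) :
    X.s (n + 1) * X.tau (n + 2) y * X.s (n + 1) =
      X.tau (n + 2) y * X.s (n + 1) * X.tau (n + 2) y := by
  by_cases hw : y = w (n + 2)
  · subst hw
    have hev : Even (n + 2) := by
      rw [w_self (by omega)] at hy
      exact ZMod.natCast_eq_zero_iff_even.1 hy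
    obtain rfl | rfl | h6 : n = 2 ∨ n = 4 ∨ 6 ≤ n := by
      obtain ⟨m, hm⟩ := hev
      omega
    · rw [tau_eq (by omega) hP hs hy (X.b_mem le_rfl) X.ρ_b]
      exact X.b_braid.symm
    · rw [tau_eq (by omega) hP hs hy X.d6_mem X.ρ_d6]
      have h := X.d6_cube
      have hd := tau_sq (by omega) hP hs hy
      rw [tau_eq (by omega) hP hs hy X.d6_mem X.ρ_d6] at hd
      have hi : X.d6⁻¹ = X.d6 := inv_eq_of_mul_eq_one_left hd
      have h' : (X.s 5 * X.d6 * X.s 5) * (X.d6 * X.s 5 * X.d6) = 1 := by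
        rw [← h]; simp only [pow_succ, pow_zero, one_mul, mul_assoc]
      rw [mul_eq_one_iff_eq_inv] at h'
      rw [h']
      simp only [_root_.mul_inv_rev, hi, X.s_inv (show 5 + 1 < g by omega), mul_assoc]
    · exact braid_w hng hP h6 hev
  · exact braid_generic hng hP hs hy hx hw

end step
end Setup
end OrthPres

namespace OrthPres
open Matrix
variable {g : ℕ}

/-! ### Enlarging the subgroup by one generator -/

/-- The vector `e 0 + e 1 + e n + e (n + 1)`. -/
def dvec (n : ℕ) : V g := e 0 + e 1 + (e n + e (n + 1))

namespace Setup
variable {G : Type*} [Group G] {X : Setup g G}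

variable (X) in
/-- An element of `H (n + 3)` whose image moves `e (n + 2)` to `e 0 + e 1 + e (n + 2)`. -/
noncomputable def E (n : ℕ) : G :=
  X.s (n + 1) * (X.tau (n + 2) (dvec n) * (X.s n * X.s (n + 1)))

section step

variable {n : ℕ} (hng : n + 3 ≤ g) (hP : X.P (n + 2)) (hn : 2 ≤ n)

include hng

lemma u0_even : (e 0 + e 1 : V g) ⬝ᵥ (e 0 + e 1) = 0 := ee_even (by omega) (by omega)

lemma dvec_even : (dvec n : V g) ⬝ᵥ dvec n = 0 :=
  add_even (by rw [ee_even (by omega) (by omega), ee_even (by omega) (by omega)])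

omit hng in
lemma dvec_supp : Supp (n + 2) (dvec n : V g) :=
  (supp_ee (by omega) (by omega)).add (supp_ee (by omega) (by omega))

include hn

lemma dvec_dot : (dvec n : V g) ⬝ᵥ e (n + 1) = 1 ∧ (e n : V g) ⬝ᵥ dvec n = 1 ∧
    (dvec n : V g) ⬝ᵥ (e n + e (n + 1)) = 0 := by
  unfold dvec
  refine ⟨?_, ?_, ?_⟩ <;>
  · simp (disch := omega) only [add_dotProduct, dotProduct_add, e_self, e_ne]; decide

lemma act_dvec : act (X.ρ (X.tau (n + 2) (dvec n))) (e n : V g) = e 0 + e 1 + e (n + 1) := by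
  rw [(X.tau_spec (by omega) dvec_supp (dvec_even hng)).2,
    act_T_one (dvec_even hng) (dvec_dot hng hn).2.1, dvec]
  rw [add_left_comm, ← add_assoc (e n), v_add_self, zero_add]

omit hng hn in
lemma act_H_e {k j : ℕ} (hk : k ≤ g) (hj : k ≤ j) {h : G} (hh : h ∈ X.H k) :
    act (X.ρ h) (e j : V g) = e j := X.H_S hk hh j hj

lemma act_dc : act (X.ρ (X.tau (n + 2) (dvec n) * X.s n)) (e (n + 1) : V g) =
    e 0 + e 1 + e (n + 1) := by
  rw [map_mul, act_mul, X.ρ_s n (by omega), act_swap_right (by omega), act_dvec hng hn]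

omit hn in
lemma dc_mem : X.tau (n + 2) (dvec n) * X.s n ∈ X.H (n + 2) :=
  mul_mem (X.tau_spec (by omega) dvec_supp (dvec_even hng)).1 (X.s_mem (by omega))

variable {α : Type*} [MulAction G α] {x₀ : α} (h0 : ∀ h ∈ X.H (n + 2), h • x₀ = x₀)

include hP

omit hn in
include h0 in
/-- The point `h a x₀` depends only on the image of `e (n + 1)` under `h`. -/
lemma smul_eq {h h' : G} (hh : h ∈ X.H (n + 2)) (hh' : h' ∈ X.H (n + 2))
    (hf : act (X.ρ h) (e (n + 1)) = act (X.ρ h') (e (n + 1))) :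
    h • X.s (n + 1) • x₀ = h' • X.s (n + 1) • x₀ := by
  have key : ∀ k ∈ X.H (n + 2), k • X.s (n + 1) • x₀ = (k * X.s (n + 1) * k⁻¹) • x₀ := by
    intro k hk
    rw [mul_smul, h0 _ (inv_mem hk), mul_smul]
  rw [key h hh, key h' hh', conj_eq hng hP hh hh' hf]

include h0 in
lemma smul_fix {y : V g} (hs : Supp (n + 2) y) (hy : y ⬝ᵥ y = 0) (hx : y ⬝ᵥ e (n + 1) = 1) :
    X.s (n + 1) • X.tau (n + 2) y • X.s (n + 1) • x₀ = X.tau (n + 2) y • X.s (n + 1) • x₀ := by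
  rw [← mul_smul, ← mul_smul, braid hng hP hn hs hy hx, mul_smul,
    h0 _ (X.tau_spec (by omega) hs hy).1, mul_smul]

omit hP hng hn in
lemma E_smul : X.E n • x₀ =
    X.s (n + 1) • (X.tau (n + 2) (dvec n) * X.s n) • X.s (n + 1) • x₀ := by
  simp only [E, mul_smul]

omit hP hn hng in
lemma s_smul {i : ℕ} (hi : i + 1 < g) (x : α) : X.s i • X.s i • x = x := by
  rw [← mul_smul, X.s_sq i hi, one_smul]

omit hP hng hn in
lemma comm_smul {x y : G} (h : x * y = y * x) (z : α) : x • y • z = y • x • z := by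
  rw [← mul_smul, h, mul_smul]

omit hP hng hn in
lemma braid_smul {x y : G} (h : x * y * x = y * x * y) (z : α) :
    x • y • x • z = y • x • y • z := by
  rw [← mul_smul, ← mul_smul, h, mul_smul, mul_smul]

omit hn hng hP in
lemma ρ_δ6 : X.ρ X.δ6 = T (dvec 4) := by
  have hg := X.hg
  have hw : (w 4 : V g) = e 0 + e 1 + e 2 + e 3 := by
    simp only [w_succ, w_zero, zero_add]
  have : X.δ6 = (X.s 3 * X.s 2 * X.s 4 * X.s 3) * X.b * (X.s 3 * X.s 2 * X.s 4 * X.s 3)⁻¹ := by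
    simp only [δ6, _root_.mul_inv_rev, X.s_inv (show 3 + 1 < g by omega),
      X.s_inv (show 2 + 1 < g by omega), X.s_inv (show 4 + 1 < g by omega), mul_assoc]
  rw [this, map_mul, map_mul, map_inv, X.ρ_b, T_conj (w_even (by omega) (by decide))]
  congr 1
  have key : ∀ i j : ℕ, i + 1 < g → act (X.ρ (X.s i)) (e j : V g) =
      e (if j = i then i + 1 else if j = i + 1 then i else j) := by
    intro i j hi
    rw [X.ρ_s i hi]
    split_ifs with h1 h2
    · rw [h1, act_swap_left hi]
    · rw [h2, act_swap_right hi]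
    · exact act_swap_ne hi h1 h2
  simp [act_mul, hw, act_add, key 3 _ (show 3 + 1 < g by omega),
    key 2 _ (show 2 + 1 < g by omega), key 4 _ (show 4 + 1 < g by omega), dvec, add_assoc]

include h0 in
/-- The stabilizer of `e 0 + e 1` in `H (n + 2)` fixes the point `E x₀`. -/
lemma stab_fix {h : G} (hh : h ∈ X.H (n + 2))
    (hf : act (X.ρ h) (e 0 + e 1) = e 0 + e 1) : h • X.E n • x₀ = X.E n • x₀ := by
  have hD := X.tau_spec (k := n + 2) (by omega) dvec_supp (dvec_even hng)
  have ha : X.s (n + 1) * X.s (n + 1) = 1 := X.s_sq _ (by omega)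
  have hb := X.s_braid n (by omega)
  set N := (X.H (n + 2) ⊓ MulAction.stabilizer G (X.E n • x₀)).map X.ρ with hN
  have mN : ∀ h ∈ X.H (n + 2), h • X.E n • x₀ = X.E n • x₀ → X.ρ h ∈ N :=
    fun h hh hs => ⟨h, ⟨hh, hs⟩, rfl⟩
  have h1 : ∀ A ∈ S (n + 1), act A (e 0 + e 1) = e 0 + e 1 → A ∈ N := by
    intro A hA hA0
    obtain ⟨m, hm, rfl⟩ := X.lift (by omega) hA
    have hm' := X.H_mono (show n + 1 ≤ n + 2 by omega) hm
    apply mN m hm'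
    rw [E_smul, comm_smul (X.H_comm le_rfl (by omega) hm), ← mul_smul m]
    congr 1
    apply smul_eq hng hP h0 (mul_mem hm' (dc_mem hng)) (dc_mem hng)
    rw [map_mul, act_mul, act_dc hng hn, act_add, hA0, act_H_e (by omega) le_rfl hm]
  have h2 : T (e n + e (n + 1)) ∈ N := by
    rw [← X.ρ_s n (by omega)]
    apply mN _ (X.s_mem (by omega))
    have hc : X.tau (n + 2) (dvec n) * X.s n = X.s n * X.tau (n + 2) (dvec n) := by
      rw [← tau_s (k := n + 2) (by omega) hP (by omega)]
      exact tau_comm (by omega) hP dvec_supp (dvec_even hng) (supp_ee (by omega) (by omega))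
        (ee_even (by omega) (by omega)) (dvec_dot hng hn).2.2
    rw [E_smul, hc, mul_smul, braid_smul hb, smul_fix hng hP hn h0 dvec_supp (dvec_even hng)
      (dvec_dot hng hn).1]
  have h3 : Even (n + 2) → T (w (n + 2)) ∈ N := by
    intro hev
    obtain rfl | rfl | h6 : n = 2 ∨ n = 4 ∨ 6 ≤ n := by
      obtain ⟨m, hm⟩ := hev
      omega
    · have hw : (w (2 + 2) : V g) = dvec 2 := by
        simp only [w_succ, w_zero, zero_add, dvec, add_assoc]
      rw [hw, ← hD.2]
      apply mN _ hD.1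
      rw [E_smul, mul_smul, ← braid_smul (braid hng hP hn dvec_supp (dvec_even hng)
        (dvec_dot hng hn).1), ← braid_smul hb, h0 _ (X.s_mem (by omega))]
    · rw [← X.ρ_d6]
      apply mN _ X.d6_mem
      have hE : X.E 4 = X.s 5 * X.δ6 * X.s 4 * X.s 5 := by
        have hδ : X.δ6 ∈ X.H 6 := by
          unfold δ6
          repeat' first | apply mul_mem | exact X.s_mem (by omega) | exact X.b_mem (by omega)
        rw [E, tau_eq (k := 6) (by omega) hP dvec_supp (dvec_even hng) hδ ρ_δ6]
        simp only [mul_assoc]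
      have := h0 _ (X.d6_conj)
      rw [← hE, mul_smul, mul_smul, inv_smul_eq_iff] at this
      exact this
    · exact stab_w hn (by omega) h1 h2 h6 hev
  obtain ⟨h', ⟨hh', hs'⟩, he⟩ := stab_gen hn (by omega) h1 h2 h3 (X.H_S (by omega) hh) hf
  rw [← hP.inj hh' hh he]
  exact hs'

include h0 in
/-- The point `h E x₀` depends only on the image of `e 0 + e 1` under `h`. -/
lemma E_eq {h h' : G} (hh : h ∈ X.H (n + 2)) (hh' : h' ∈ X.H (n + 2))
    (hf : act (X.ρ h) (e 0 + e 1) = act (X.ρ h') (e 0 + e 1)) :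
    h • X.E n • x₀ = h' • X.E n • x₀ := by
  have := stab_fix hng hP hn h0 (mul_mem (inv_mem hh') hh) (by
    rw [map_mul, map_inv, act_mul, hf, act_inv_act])
  rw [mul_smul, inv_smul_eq_iff] at this
  exact this

omit hng hP hn in
lemma u0_ne {k : ℕ} (hk : 3 ≤ k) (hk' : 2 < g) : (e 0 + e 1 : V g) ≠ w k := by
  intro h
  have := congrArg (· ⬝ᵥ e 2) h
  simp only [add_dotProduct] at this
  rw [e_ne hk' (by omega), e_ne hk' (by omega), w_lt hk' (by omega)] at this
  exact absurd this (by decide)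

include h0 in
/-- A point over `u + e (n + 2)` is fixed by the new generator when `u` involves `e (n + 1)`, that is,
when the transposition of the last two coordinates fixes `u + e (n + 2)`. -/
lemma E_fix {h : G} (hh : h ∈ X.H (n + 2)) (hx : act (X.ρ h) (e 0 + e 1) ⬝ᵥ e (n + 1) = 1) :
    X.s (n + 1) • h • X.E n • x₀ = h • X.E n • x₀ := by
  -- the point over `e 0 + e (n + 1)` is fixed
  have hy1 : (e 1 + e n : V g) ⬝ᵥ (e 1 + e n) = 0 := ee_even (by omega) (by omega)
  obtain ⟨f, hf, hfT⟩ := X.lift (k := n + 1) (by omega)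
    (T_mem_S hy1 (supp_ee (by omega) (by omega)))
  have hf' := X.H_mono (show n + 1 ≤ n + 2 by omega) hf
  have hcm : X.s n ∈ X.H (n + 2) := X.s_mem (by omega)
  have hfu : act (X.ρ f) (e 0 + e 1) = e 0 + e n := by
    rw [hfT, act_add, act_T_zero hy1, act_T_swap]
    · rw [e_self (by omega), e_self (by omega)]
    · rw [dotProduct_add, e_self (by omega), e_ne (by omega) (by omega), add_zero]
    · rw [dotProduct_add, e_ne (by omega) (by omega), e_ne (by omega) (by omega), add_zero]
  have hp := mul_mem hf' (dc_mem (X := X) hng)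
  have hfix : X.s (n + 1) • X.s n • f • X.E n • x₀ = X.s n • f • X.E n • x₀ := by
    rw [E_smul, comm_smul (X.H_comm le_rfl (by omega) hf), ← mul_smul f,
      ← braid_smul (X.s_braid n (by omega)), ← mul_smul (X.s n) (f * _)]
    congr 2
    apply smul_eq hng hP h0 (mul_mem hcm hp) hp
    rw [map_mul, act_mul, map_mul, act_mul, act_dc hng hn, act_add, hfu,
      act_H_e (by omega) le_rfl hf, X.ρ_s n (by omega), act_add, act_add,
      act_swap_ne (by omega) (by omega) (by omega), act_swap_left (by omega),
      act_swap_right (by omega)]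
    abel
  -- every other point is reached from it by an element of `H (n + 1)`
  have hu := u0_even hng
  set u := act (X.ρ h) (e 0 + e 1) with hu_def
  have hue : u ⬝ᵥ u = 0 := by rw [hu_def, act_dot, hu]
  have hus : Supp (n + 2) u := S_act_supp (X.H_S (by omega) hh) (supp_ee (by omega) (by omega))
  have huw : u ≠ w (n + 2) :=
    act_e_ne_w (X.H_S (by omega) hh) (u0_ne (by omega) (by omega))
  have hz1 : Supp (n + 1) (u + e (n + 1)) := by
    apply (hus.add (supp_e (by omega))).pred
    rw [add_dotProduct, hx, e_self (by omega)]; decide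
  have hz2 : (u + e (n + 1)) ⬝ᵥ (u + e (n + 1)) = 1 := by
    rw [self_add, hue, e_self (by omega), zero_add]
  obtain ⟨A, hA, hAz⟩ := tr_odd (by omega) hz1 hz2 (fun h => by
    exfalso
    apply huw
    rw [w_succ, ← h, add_assoc, v_add_self, add_zero])
  obtain ⟨B, hB, hBz⟩ := tr_odd (k := n) (by omega) (supp_e (g := g) (k := n + 1) (j := 0) (by omega))
    (e_self (by omega)) (fun h => by
      exfalso
      have := congrArg (· ⬝ᵥ e 1) h
      beta_reduce at this
      rw [e_ne (by omega) (by omega), w_lt (by omega) (by omega)] at this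
      exact absurd this (by decide))
  obtain ⟨m, hm, hmA⟩ := X.lift (by omega) (TG_le_S _ (mul_mem hA (inv_mem hB)))
  have hm' := X.H_mono (show n + 1 ≤ n + 2 by omega) hm
  have he : h • X.E n • x₀ = m • X.s n • f • X.E n • x₀ := by
    rw [← mul_smul m, ← mul_smul _ f]
    apply E_eq hng hP hn h0 hh (mul_mem (mul_mem hm' hcm) hf')
    rw [← hu_def, map_mul, act_mul, hfu, map_mul, act_mul, X.ρ_s n (by omega), act_add,
      act_swap_ne (by omega) (by omega) (by omega), act_swap_left (by omega), act_add,
      act_H_e (by omega) le_rfl hm, hmA, act_mul, act_inv_eq B hBz, hAz,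
      add_assoc, v_add_self, add_zero]
  rw [he, ← comm_smul (X.H_comm le_rfl (by omega) hm), hfix]

include h0 in
/-- For odd `n`, the last orbit of `H (n + 2)` consists of a single point. -/
lemma last_fix (hodd : Odd n) {h : G} (hh : h ∈ X.H (n + 2))
    (hx : act (X.ρ h) (e 0 + e 1) = w (n + 1)) {m : G} (hm : m ∈ X.H (n + 2)) :
    m • X.s (n + 1) • h • X.E n • x₀ = X.s (n + 1) • h • X.E n • x₀ := by
  have hn3 : 3 ≤ n := by
    obtain ⟨j, hj⟩ := hodd
    omega
  have low : ∀ m ∈ X.H (n + 1),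
      m • X.s (n + 1) • h • X.E n • x₀ = X.s (n + 1) • h • X.E n • x₀ := by
    intro m hm
    have hm' := X.H_mono (show n + 1 ≤ n + 2 by omega) hm
    rw [comm_smul (X.H_comm le_rfl (by omega) hm), ← mul_smul m]
    congr 1
    apply E_eq hng hP hn h0 (mul_mem hm' hh) hh
    rw [map_mul, act_mul, hx, S_act_w (X.H_S (by omega) hm)]
  have hwn : (w n : V g) ⬝ᵥ w n = 1 := by
    rw [w_self (by omega)]
    exact ZMod.natCast_eq_one_iff_odd.2 hodd
  have hys : Supp (n + 2) (w n + e (n + 1) : V g) := (supp_w (by omega)).add (supp_e (by omega))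
  have hye : (w n + e (n + 1) : V g) ⬝ᵥ (w n + e (n + 1)) = 0 :=
    add_even (by rw [hwn, e_self (by omega)])
  have hyx : (w n + e (n + 1) : V g) ⬝ᵥ e (n + 1) = 1 := by
    rw [add_dotProduct, w_ge (by omega) (by omega), e_self (by omega), zero_add]
  have hy := X.tau_spec (k := n + 2) (by omega) hys hye
  have htau : X.tau (n + 2) (w n + e (n + 1)) • X.s (n + 1) • h • X.E n • x₀ =
      X.s (n + 1) • h • X.E n • x₀ := by
    have hd : (e n + e (n + 1) : V g) ⬝ᵥ (w n + e (n + 1)) = 1 := by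
      simp (disch := omega) only [add_dotProduct, dotProduct_add, e_self, e_ne, e_w_ge]; decide
    have hd' : (w (n + 1) : V g) ⬝ᵥ (w n + e (n + 1)) = 1 := by
      rw [w_succ, add_dotProduct, dotProduct_add, dotProduct_add, hwn, w_ge (by omega) (by omega),
        e_w_ge (by omega) le_rfl, e_ne (by omega) (by omega)]
      decide
    have hq := mul_mem hy.1 hh
    have hqu : act (X.ρ (X.tau (n + 2) (w n + e (n + 1)) * h)) (e 0 + e 1) = e n + e (n + 1) := by
      rw [map_mul, act_mul, hx, hy.2, act_T_one hye hd', w_succ, add_right_comm, ← add_assoc,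
        v_add_self, zero_add, add_comm]
    have h1 := E_fix hng hP hn h0 hq (by
      rw [hqu, add_dotProduct, e_ne (by omega) (by omega), e_self (by omega), zero_add])
    rw [mul_smul] at h1
    have h2 := braid_smul (braid hng hP hn hys hye hyx) (h • X.E n • x₀)
    rw [h1, ← mul_smul (X.tau _ _) (X.tau _ _), tau_sq (by omega) hP hys hye, one_smul] at h2
    have h3 := congrArg (fun x => X.s (n + 1) • x) h2
    beta_reduce at h3
    rwa [s_smul (by omega)] at h3
  have hle : X.H (n + 2) ≤ MulAction.stabilizer G (X.s (n + 1) • h • X.E n • x₀) := by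
    unfold H
    rw [Subgroup.closure_le]
    rintro A (⟨i, hi, rfl⟩ | ⟨-, rfl⟩)
    · rcases (show i ≤ n by omega).eq_or_lt with rfl | hlt
      · obtain ⟨A, hA, hAz⟩ := tr_odd (k := i) (by omega) (supp_w (k := i) (by omega)) hwn
          (fun hh => by
            exfalso
            have := congrArg (· ⬝ᵥ e i) hh
            beta_reduce at this
            rw [w_ge (by omega) le_rfl, w_lt (by omega) (by omega)] at this
            exact absurd this (by decide))
        obtain ⟨m, hm, rfl⟩ := X.lift (by omega) (TG_le_S _ hA)
        have h1 := tau_conj (k := i + 2) (by omega) hP (supp_ee (by omega) (by omega))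
          (ee_even (by omega) (by omega)) (y := e i + e (i + 1)) (X.H_mono (by omega) hm)
        rw [act_add, hAz, act_H_e (by omega) le_rfl hm, tau_s (by omega) hP (by omega)] at h1
        rw [← h1, mul_smul, mul_smul, low _ (inv_mem hm)] at htau
        have h2 := congrArg (fun x => m⁻¹ • x) htau
        simp only [inv_smul_smul, low _ (inv_mem hm)] at h2
        exact h2
      · exact low _ (X.s_mem (by omega))
    · exact low _ (X.b_mem (by omega))
  exact hle hm

/-- A list of points containing the orbit of `x₀` under `H (n + 3)`. With `x₀` the base point of
`G ⧸ H (n + 2)`, it mirrors the orbit of `e (n + 2)` under `O(n + 3)`: the vector `e (n + 2)` itself,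
the orbit of `e (n + 1)` under `O(n + 2)`, the vectors `u + e (n + 2)` with `u` in the orbit of
`e 0 + e 1` under `O(n + 2)` and, for odd `n`, the vector `w (n + 2)`. -/
def Good (X : Setup g G) (n : ℕ) {α : Type*} [MulAction G α] (x₀ x : α) : Prop :=
  x = x₀ ∨ (∃ h ∈ X.H (n + 2), x = h • X.s (n + 1) • x₀) ∨
  (∃ h ∈ X.H (n + 2), x = h • X.E n • x₀) ∨
  (Odd n ∧ ∃ h ∈ X.H (n + 2), act (X.ρ h) (e 0 + e 1) = w (n + 1) ∧
    x = X.s (n + 1) • h • X.E n • x₀)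

include h0 in
lemma Good.smul_H {x : α} (hx : Good X n x₀ x) {m : G} (hm : m ∈ X.H (n + 2)) :
    Good X n x₀ (m • x) := by
  rcases hx with rfl | ⟨h, hh, rfl⟩ | ⟨h, hh, rfl⟩ | ⟨ho, h, hh, hu, rfl⟩
  · exact Or.inl (h0 m hm)
  · exact Or.inr (Or.inl ⟨m * h, mul_mem hm hh, by rw [mul_smul]⟩)
  · exact Or.inr (Or.inr (Or.inl ⟨m * h, mul_mem hm hh, by rw [mul_smul]⟩))
  · exact Or.inr (Or.inr (Or.inr ⟨ho, h, hh, hu, last_fix hng hP hn h0 ho hh hu hm⟩))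

include h0 in
lemma Good.smul_s {x : α} (hx : Good X n x₀ x) : Good X n x₀ (X.s (n + 1) • x) := by
  have hk : n + 2 ≤ g := by omega
  rcases hx with rfl | ⟨h, hh, rfl⟩ | ⟨h, hh, rfl⟩ | ⟨ho, h, hh, hu, rfl⟩
  · exact Or.inr (Or.inl ⟨1, one_mem _, by rw [one_smul]⟩)
  · have hvs : Supp (n + 2) (act (X.ρ h) (e (n + 1))) :=
      S_act_supp (X.H_S hk hh) (supp_e (by omega))
    have hve : (act (X.ρ h) (e (n + 1))) ⬝ᵥ (act (X.ρ h) (e (n + 1))) = 1 := by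
      rw [act_dot, e_self (by omega)]
    have hvw : act (X.ρ h) (e (n + 1)) ≠ w (n + 2) := by
      apply act_e_ne_w (X.H_S hk hh)
      intro hE
      have := congrArg (· ⬝ᵥ e 0) hE
      beta_reduce at this
      rw [e_ne (by omega) (by omega), w_lt (by omega) (by omega)] at this
      exact absurd this (by decide)
    set v := act (X.ρ h) (e (n + 1)) with hv
    have hus : Supp (n + 2) (v + e (n + 1)) := hvs.add (supp_e (by omega))
    have hue : (v + e (n + 1)) ⬝ᵥ (v + e (n + 1)) = 0 :=
      add_even (by rw [hve, e_self (by omega)])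
    rcases z2 (v ⬝ᵥ e (n + 1)) with hvx | hvx
    · have hux : (v + e (n + 1)) ⬝ᵥ e (n + 1) = 1 := by
        rw [add_dotProduct, hvx, e_self (by omega), zero_add]
      have ht := X.tau_spec hk hus hue
      have : h • X.s (n + 1) • x₀ = X.tau (n + 2) (v + e (n + 1)) • X.s (n + 1) • x₀ := by
        apply smul_eq hng hP h0 hh ht.1
        rw [ht.2, act_T_one hue (by rw [dotProduct_comm, hux]), ← hv, add_comm v, v_add_cancel]
      refine Or.inr (Or.inl ⟨_, ht.1, ?_⟩)
      rw [this, smul_fix hng hP hn h0 hus hue hux]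
    · have hus' : Supp (n + 1) (v + e (n + 1)) := by
        apply hus.pred
        rw [add_dotProduct, hvx, e_self (by omega)]; decide
      by_cases hu0 : v + e (n + 1) = 0
      · have : h • X.s (n + 1) • x₀ = (1 : G) • X.s (n + 1) • x₀ := by
          apply smul_eq hng hP h0 hh (one_mem _)
          rw [map_one, act_one, ← hv, ← v_add_cancel (e (n + 1)) v, add_comm (e (n + 1)) v, hu0,
            add_zero]
        refine Or.inl ?_
        rw [this, one_smul, s_smul (by omega)]
      · obtain ⟨A, hA, hAu⟩ := tr_even (by omega) (by omega) hus' hue hu0 (fun hE => hvw (by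
          rw [w_succ, ← hE, add_assoc, v_add_self, add_zero]))
        obtain ⟨m, hm, rfl⟩ := X.lift (by omega) hA
        have hm' := X.H_mono (show n + 1 ≤ n + 2 by omega) hm
        have : h • X.s (n + 1) • x₀ =
            (m * (X.tau (n + 2) (dvec n) * X.s n)) • X.s (n + 1) • x₀ := by
          apply smul_eq hng hP h0 hh (mul_mem hm' (dc_mem hng))
          rw [map_mul, act_mul, act_dc hng hn, act_add, hAu, act_H_e (by omega) le_rfl hm, ← hv,
            add_assoc, v_add_self, add_zero]
        refine Or.inr (Or.inr (Or.inl ⟨m, hm', ?_⟩))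
        rw [this, mul_smul m, ← comm_smul (X.H_comm le_rfl (by omega) hm), E_smul]
  · have hus : Supp (n + 2) (act (X.ρ h) (e 0 + e 1)) :=
      S_act_supp (X.H_S hk hh) (supp_ee (by omega) (by omega))
    have hue : (act (X.ρ h) (e 0 + e 1)) ⬝ᵥ (act (X.ρ h) (e 0 + e 1)) = 0 := by
      rw [act_dot, u0_even hng]
    rcases z2 (act (X.ρ h) (e 0 + e 1) ⬝ᵥ e (n + 1)) with hux | hux
    · have hus' := hus.pred hux
      by_cases huw : act (X.ρ h) (e 0 + e 1) = w (n + 1)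
      · refine Or.inr (Or.inr (Or.inr ⟨?_, h, hh, huw, rfl⟩))
        rw [huw, w_self (by omega)] at hue
        have := ZMod.natCast_eq_zero_iff_even.1 hue
        rw [Nat.even_add_one, Nat.not_even_iff_odd] at this
        exact this
      · obtain ⟨A, hA, hAu⟩ := tr_even (by omega) (by omega) hus' hue (fun hE => by
          have : (e 0 + e 1 : V g) = 0 := act_inj (X.ρ h) (by rw [hE, act_zero])
          have := congrArg (· ⬝ᵥ e 0) this
          simp only [add_dotProduct, zero_dotProduct] at this
          rw [e_self (by omega), e_ne (by omega) (by omega)] at this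
          exact absurd this (by decide)) huw
        obtain ⟨m, hm, rfl⟩ := X.lift (by omega) hA
        have hm' := X.H_mono (show n + 1 ≤ n + 2 by omega) hm
        refine Or.inr (Or.inl ⟨m * (X.tau (n + 2) (dvec n) * X.s n),
          mul_mem hm' (dc_mem hng), ?_⟩)
        rw [E_eq hng hP hn h0 hh hm' hAu.symm, ← comm_smul (X.H_comm le_rfl (by omega) hm),
          E_smul, s_smul (by omega), mul_smul m]
    · exact Or.inr (Or.inr (Or.inl ⟨h, hh, E_fix hng hP hn h0 hh hux⟩))
  · exact Or.inr (Or.inr (Or.inl ⟨h, hh, s_smul (by omega) _⟩))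

include h0 in
lemma good {h : G} (hh : h ∈ X.H (n + 3)) : Good X n x₀ (h • x₀) := by
  have key : ∀ z ∈ ({x | ∃ i, i + 1 < n + 3 ∧ x = X.s i} ∪ {x | 4 ≤ n + 3 ∧ x = X.b} : Set G),
      ∀ x : α, Good X n x₀ x → Good X n x₀ (z • x) := by
    rintro z (⟨i, hi, rfl⟩ | ⟨-, rfl⟩) x hx
    · rcases (show i ≤ n + 1 by omega).eq_or_lt with rfl | hlt
      · exact Good.smul_s hng hP hn h0 hx
      · exact Good.smul_H hng hP hn h0 hx (X.s_mem (by omega))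
    · exact Good.smul_H hng hP hn h0 hx (X.b_mem (by omega))
  induction hh using Subgroup.closure_induction_left with
  | one => exact Or.inl (one_smul _ _)
  | mul_left z hz y hy ih =>
    rw [mul_smul]
    exact key z hz _ ih
  | inv_mul_cancel z hz y hy ih =>
    have : z⁻¹ = z := by
      rcases hz with ⟨i, hi, rfl⟩ | ⟨-, rfl⟩
      · exact X.s_inv (by omega)
      · exact X.b_inv
    rw [mul_smul, this]
    exact key z hz _ ih

omit hP in
lemma act_E : act (X.ρ (X.E n)) (e (n + 2) : V g) = e 0 + e 1 + e (n + 2) := by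
  have h : n + 1 + 1 < g := by omega
  rw [E, map_mul, map_mul, map_mul, act_mul, act_mul, act_mul, X.ρ_s (n + 1) h,
    act_swap_right h, X.ρ_s n (by omega), act_swap_right (by omega), act_dvec hng hn, act_add,
    act_add, act_swap_ne h (by omega) (by omega), act_swap_ne h (by omega) (by omega),
    act_swap_left h]

/-- The injectivity of `ρ` on `H k` propagates from `k = n + 2` to `k = n + 3`. -/
lemma P_succ : X.P (n + 3) := by
  intro h hh h1
  have hk : n + 2 ≤ g := by omega
  have hsw : n + 1 + 1 < g := by omega
  have h0 : ∀ h ∈ X.H (n + 2), h • ((1 : G) : G ⧸ X.H (n + 2)) = ((1 : G) : G ⧸ X.H (n + 2)) := by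
    intro h hh
    rw [MulAction.Quotient.smul_coe, QuotientGroup.eq]
    simpa using hh
  -- a coset representative of `h` fixes `e (n + 2)`
  have key : ∀ r : G, h • ((1 : G) : G ⧸ X.H (n + 2)) = r • ((1 : G) : G ⧸ X.H (n + 2)) →
      act (X.ρ r) (e (n + 2) : V g) = e (n + 2) := by
    intro r hr
    rw [MulAction.Quotient.smul_coe, MulAction.Quotient.smul_coe, QuotientGroup.eq] at hr
    have := act_H_e hk le_rfl hr
    simpa [h1] using this
  rcases good hng hP hn h0 hh with hc | ⟨m, hm, hc⟩ | ⟨m, hm, hc⟩ | ⟨-, m, hm, hu, hc⟩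
  · rw [MulAction.Quotient.smul_coe, eq_comm, QuotientGroup.eq] at hc
    exact hP h (by simpa using hc) h1
  · exfalso
    rw [← mul_smul] at hc
    have := key _ hc
    rw [map_mul, act_mul, X.ρ_s (n + 1) hsw, act_swap_right hsw] at this
    have h2 := (S_act_supp (X.H_S hk hm) (supp_e (g := g) (show n + 1 < n + 2 by omega))).dot_e_eq
      (le_refl (n + 2))
    rw [this, e_self (by omega)] at h2
    exact one_ne_zero h2
  · exfalso
    rw [← mul_smul] at hc
    have := key _ hc
    rw [map_mul, act_mul, act_E hng hn, act_add, act_H_e hk le_rfl hm, add_eq_right] at this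
    have : (e 0 + e 1 : V g) = 0 := act_inj (X.ρ m) (by rw [this, act_zero])
    have := congrArg (· ⬝ᵥ e 0) this
    simp only [add_dotProduct, zero_dotProduct] at this
    rw [e_self (by omega), e_ne (by omega) (by omega)] at this
    exact absurd this (by decide)
  · exfalso
    rw [← mul_smul, ← mul_smul] at hc
    have := key _ hc
    rw [map_mul, map_mul, act_mul, act_mul, act_E hng hn, act_add _ (e 0 + e 1), hu,
      act_H_e hk le_rfl hm, X.ρ_s (n + 1) hsw, act_add, act_swap_right hsw,
      act_T_zero (ee_even (by omega) (by omega))] at this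
    · have := congrArg (· ⬝ᵥ e (n + 2)) this
      simp only [add_dotProduct] at this
      rw [e_self (by omega), e_ne (by omega) (by omega), w_ge (by omega) (by omega)] at this
      exact absurd this (by decide)
    · rw [dotProduct_add, w_ge (by omega) (by omega), w_ge (by omega) (by omega), add_zero]

end step

lemma P_all {k : ℕ} (hk : k + 4 ≤ g) : X.P (k + 4) := by
  induction k with
  | zero => exact X.P4
  | succ k ih => exact P_succ (n := k + 2) (by omega) (ih (by omega)) (by omega)

/-- The homomorphism `ρ` is injective on the subgroup generated by `b` and all `s i`. -/
lemma P_top : X.P g := by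
  have hg := X.hg
  obtain ⟨k, rfl⟩ := Nat.exists_eq_add_of_le' (show 4 ≤ g by omega)
  exact P_all le_rfl

end Setup
end OrthPres

namespace OrthPres
open Matrix
variable {g : ℕ}

/-! ### The relators hold in the orthogonal group -/

lemma T_braid {y z : V g} (hy : y ⬝ᵥ y = 0) (hz : z ⬝ᵥ z = 0) (h : y ⬝ᵥ z = 1) :
    (T y * T z) ^ 3 = 1 := by
  have h1 : T y * T z * T y = T (z + y) := by
    rw [← act_T_one hy (by rw [dotProduct_comm, h]), ← T_conj hz, T_inv]
  have h2 : T z * T y * T z = T (z + y) := by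
    rw [add_comm, ← act_T_one hz h, ← T_conj hy, T_inv]
  calc (T y * T z) ^ 3 = (T y * T z * T y) * (T z * T y * T z) := by
        simp only [pow_succ, pow_zero, one_mul, mul_assoc]
    _ = 1 := by rw [h1, h2, T_sq]

lemma T_comm_sq {y z : V g} (hy : y ⬝ᵥ y = 0) (hz : z ⬝ᵥ z = 0) (h : y ⬝ᵥ z = 0) :
    (T y * T z) ^ 2 = 1 := by
  rw [sq]
  nth_rewrite 2 [T_comm hy hz h]
  rw [mul_assoc, ← mul_assoc (T z), T_sq, one_mul, T_sq]

/-- The image of a generator in `O(g, ℤ/2)`: the transvection along `e (i - 1) + e i` for `a_i`,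
along `w 4` for `b`, and along `w (2 * i + 2)` for `b_i`. -/
def genImage (g : ℕ) : Fin g ⊕ Fin (g / 2) → O g :=
  Sum.elim (fun i => if i.val = 0 then T (w 4) else T (e (i.val - 1) + e i.val))
    (fun i => T (w (2 * i.val + 2)))

lemma lift_agen_zero (hg : 0 < g) : FreeGroup.lift (genImage g) (agen g 0) = T (w 4) := by
  simp [agen, hg, genImage]

lemma lift_agen {i j : ℕ} (h : j < g) (hj : j = i + 1) :
    FreeGroup.lift (genImage g) (agen g j) = T (e i + e j) := by
  subst hj
  simp [agen, h, genImage]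

lemma lift_bgen {i j : ℕ} (h : i < g / 2) (hj : j = 2 * i + 2) :
    FreeGroup.lift (genImage g) (bgen g i) = T (w j) := by
  subst hj
  simp [bgen, h, genImage]

lemma lift_rel (hg : 8 ≤ g) (heven : Even g) {r : FreeGroup (Fin g ⊕ Fin (g / 2))}
    (hr : r ∈ relsEven g) : FreeGroup.lift (genImage g) r = 1 := by
  have hee : ∀ i, i + 1 < g → (e i + e (i + 1) : V g) ⬝ᵥ (e i + e (i + 1)) = 0 :=
    fun i hi => ee_even (by omega) hi
  have hw4 : (w 4 : V g) ⬝ᵥ w 4 = 0 := w_even (by omega) (by decide)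
  have h2 : (w (2 * 0 + 2) : V g) = e 0 + e 1 := by
    rw [w_succ, w_succ, w_zero, zero_add]
  rcases hr with (((((((⟨i, hi, rfl⟩ | ⟨i, j, hi1, hj1, hi, hj, hij, rfl⟩) | ⟨i, hi1, hi, rfl⟩) |
    ⟨i, hi1, hi, h4, rfl⟩) | rfl) | rfl) | (rfl | rfl | rfl)) | ⟨i, hi2, hi, rfl⟩) | rfl
  · rw [map_pow]
    obtain rfl | ⟨i, rfl⟩ : i = 0 ∨ ∃ m, i = m + 1 := by
      rcases i with _ | m
      · exact Or.inl rfl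
      · exact Or.inr ⟨m, rfl⟩
    · rw [lift_agen_zero (by omega), sq, T_sq]
    · rw [lift_agen hi rfl, sq, T_sq]
  · obtain ⟨i, rfl⟩ := Nat.exists_eq_add_of_le' hi1
    obtain ⟨j, rfl⟩ := Nat.exists_eq_add_of_le' hj1
    rw [map_pow, map_mul, lift_agen hi rfl, lift_agen hj rfl]
    apply T_comm_sq (hee i hi) (hee j hj)
    simp (disch := omega) only [add_dotProduct, dotProduct_add, e_ne]; decide
  · obtain ⟨i, rfl⟩ := Nat.exists_eq_add_of_le' hi1
    rw [map_pow, map_mul, lift_agen (show i + 1 < g by omega) rfl, lift_agen hi rfl]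
    apply T_braid (hee i (by omega)) (hee (i + 1) hi)
    simp (disch := omega) only [add_dotProduct, dotProduct_add, e_ne, e_self]; decide
  · obtain ⟨i, rfl⟩ := Nat.exists_eq_add_of_le' hi1
    rw [map_pow, map_mul, lift_agen hi rfl, lift_agen_zero (by omega)]
    apply T_comm_sq (hee i hi) hw4
    rw [dotProduct_comm, w_dot_ee hi h4]
  · rw [map_pow, map_mul, lift_agen (i := 3) (by omega) rfl, lift_agen_zero (by omega)]
    apply T_braid (hee 3 (by omega)) hw4
    simp (disch := omega) only [add_dotProduct, e_w_lt, e_w_ge]; decide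
  · have ha : ∀ k, k + 1 < g →
        FreeGroup.lift (genImage g) (agen g (k + 1)) = T (e k + e (k + 1)) :=
      fun k hk => lift_agen hk rfl
    simp only [map_mul, map_inv, map_pow, lift_agen_zero (show 0 < g by omega),
      ha 0 (by omega), ha 1 (by omega), ha 2 (by omega), ha 3 (by omega), ha 4 (by omega),
      ha 5 (by omega)]
    have h6 := E6_pow hg
    have h7 := E7_pow hg
    simp only [Nat.reduceAdd] at h6 h7 ⊢
    rw [h6, h7, inv_one, one_mul]
  · rw [map_mul, map_inv, lift_bgen (i := 0) (by omega) rfl, lift_agen (i := 0) (by omega) rfl, h2,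
      mul_inv_cancel]
  · rw [map_mul, map_inv, lift_bgen (i := 1) (by omega) rfl, lift_agen_zero (by omega),
      mul_inv_cancel]
  · have hD := D6_pow (g := g) (j := 0) (by omega)
    rw [h2] at hD
    simp only [map_mul, map_inv, map_pow, lift_agen_zero (show 0 < g by omega),
      lift_agen (g := g) (i := 0) (j := 1) (by omega) rfl,
      lift_agen (g := g) (i := 1) (j := 2) (by omega) rfl,
      lift_agen (g := g) (i := 2) (j := 3) (by omega) rfl,
      lift_agen (g := g) (i := 3) (j := 4) (by omega) rfl,
      lift_agen (g := g) (i := 4) (j := 5) (by omega) rfl,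
      lift_bgen (g := g) (i := 2) (j := 6) (by omega) rfl]
    simp only [Nat.mul_zero, Nat.zero_add] at hD
    rw [hD, mul_inv_cancel]
  · obtain ⟨m, rfl⟩ := heven
    obtain ⟨j, rfl⟩ : ∃ j, i = j + 1 := ⟨i - 1, by omega⟩
    have hD := D6_pow (g := m + m) (j := j) (by omega)
    have hA := A5_pow (g := m + m) (j := j) (by omega)
    simp only [map_mul, map_inv, map_pow, map_zpow,
      lift_agen (g := m + m) (i := 2 * j + 1) (j := 2 * (j + 1)) (by omega) (by omega),
      lift_agen (g := m + m) (i := 2 * j + 2) (j := 2 * (j + 1) + 1) (by omega) (by omega),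
      lift_agen (g := m + m) (i := 2 * j + 3) (j := 2 * (j + 1) + 2) (by omega) (by omega),
      lift_agen (g := m + m) (i := 2 * j + 4) (j := 2 * (j + 1) + 3) (by omega) (by omega),
      lift_bgen (g := m + m) (i := j + 1 - 1) (j := 2 * j + 2) (by omega) (by omega),
      lift_bgen (g := m + m) (i := j + 1) (j := 2 * j + 4) (by omega) (by omega),
      lift_bgen (g := m + m) (i := j + 1 + 1) (j := 2 * j + 6) (by omega) (by omega)]
    rw [show 2 * (j + 1) = 2 * j + 2 by omega, show 2 * j + 2 + 1 = 2 * j + 3 by omega,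
      show 2 * j + 2 + 2 = 2 * j + 4 by omega, show 2 * j + 2 + 3 = 2 * j + 5 by omega, hD,
      show (-6 : ℤ) = -((6 : ℕ) : ℤ) by norm_num, _root_.zpow_neg, zpow_natCast, hA, inv_one, mul_one,
      mul_inv_cancel]
  · obtain ⟨m, rfl⟩ := heven
    obtain ⟨k, hk⟩ : ∃ k, m + m - 5 = k + 1 := ⟨m + m - 6, by omega⟩
    simp only [map_mul, map_inv, hk, lift_agen (g := m + m) (i := k) (j := k + 1) (by omega) rfl,
      lift_bgen (g := m + m) (i := (m + m - 2) / 2) (j := m + m) (by omega) (by omega)]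
    rw [← T_comm (w_even le_rfl ⟨m, rfl⟩) (hee k (by omega)) (w_dot_ee (by omega) (by omega)),
      mul_assoc (T _), mul_inv_cancel, mul_one, mul_inv_cancel]

/-! ### The presented group as a `Setup` -/

lemma mul_comm_of_sq {G : Type*} [Group G] {x y : G} (hx : x ^ 2 = 1) (hy : y ^ 2 = 1)
    (h : (x * y) ^ 2 = 1) : x * y = y * x := by
  rw [sq] at hx hy h
  have h' := eq_inv_of_mul_eq_one_left h
  rwa [_root_.mul_inv_rev, inv_eq_of_mul_eq_one_left hx, inv_eq_of_mul_eq_one_left hy] at h'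

lemma braid_of_cube {G : Type*} [Group G] {x y : G} (hx : x ^ 2 = 1) (hy : y ^ 2 = 1)
    (h : (x * y) ^ 3 = 1) : x * y * x = y * x * y := by
  rw [sq] at hx hy
  have h' : x * y * x * (y * x * y) = 1 := by
    rw [← h]; simp only [pow_succ, pow_zero, one_mul, mul_assoc]
  have hinv := eq_inv_of_mul_eq_one_left h'
  rwa [_root_.mul_inv_rev, _root_.mul_inv_rev, inv_eq_of_mul_eq_one_left hx, inv_eq_of_mul_eq_one_left hy,
    ← mul_assoc] at hinv

/-- The class of `aᵢ` (with `a₀ = b`) in the presented group. -/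
def acls (g i : ℕ) : PresentedGroup (relsEven g) := PresentedGroup.mk _ (agen g i)

/-- The class of `bᵢ` in the presented group. -/
def bcls (g i : ℕ) : PresentedGroup (relsEven g) := PresentedGroup.mk _ (bgen g i)

lemma acls_sq {i : ℕ} (h : i < g) : acls g i ^ 2 = 1 := by
  have := PresentedGroup.one_of_mem (rels := relsEven g) (x := agen g i ^ 2)
    (by iterate 8 apply Or.inl
        exact ⟨i, h, rfl⟩)
  rwa [map_pow] at this

lemma acls_comm {i j : ℕ} (hi : 1 ≤ i) (hj : j < g) (h : i + 1 < j) :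
    acls g i * acls g j = acls g j * acls g i := by
  apply mul_comm_of_sq (acls_sq (by omega)) (acls_sq hj)
  have := PresentedGroup.one_of_mem (rels := relsEven g) (x := (agen g i * agen g j) ^ 2)
    (by iterate 7 apply Or.inl
        exact Or.inr ⟨i, j, hi, by omega, by omega, hj, Or.inl h, rfl⟩)
  rwa [map_pow, map_mul] at this

lemma acls_braid {i : ℕ} (hi : 1 ≤ i) (h : i + 1 < g) :
    acls g i * acls g (i + 1) * acls g i = acls g (i + 1) * acls g i * acls g (i + 1) := by
  apply braid_of_cube (acls_sq (by omega)) (acls_sq h)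
  have := PresentedGroup.one_of_mem (rels := relsEven g) (x := (agen g i * agen g (i + 1)) ^ 3)
    (by iterate 6 apply Or.inl
        exact Or.inr ⟨i, hi, h, rfl⟩)
  rwa [map_pow, map_mul] at this

lemma acls_comm_zero {i : ℕ} (hi : 1 ≤ i) (h : i < g) (h4 : i ≠ 4) :
    acls g i * acls g 0 = acls g 0 * acls g i := by
  apply mul_comm_of_sq (acls_sq h) (acls_sq (by omega))
  have := PresentedGroup.one_of_mem (rels := relsEven g) (x := (agen g i * agen g 0) ^ 2)
    (by iterate 5 apply Or.inl
        exact Or.inr ⟨i, hi, h, h4, rfl⟩)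
  rwa [map_pow, map_mul] at this

lemma acls_braid_zero (h : 4 < g) :
    acls g 4 * acls g 0 * acls g 4 = acls g 0 * acls g 4 * acls g 0 := by
  apply braid_of_cube (acls_sq h) (acls_sq (by omega))
  have := PresentedGroup.one_of_mem (rels := relsEven g) (x := (agen g 4 * agen g 0) ^ 3)
    (by iterate 4 apply Or.inl
        exact Or.inr rfl)
  rwa [map_pow, map_mul] at this

lemma acls_e7 : (acls g 2 * acls g 3 * acls g 4 * acls g 5 * acls g 6 * acls g 0) ^ 12 =
    (acls g 1 * acls g 2 * acls g 3 * acls g 4 * acls g 5 * acls g 6 * acls g 0) ^ 9 := by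
  have := PresentedGroup.mk_eq_mk_of_mul_inv_mem (rels := relsEven g)
    (x := (agen g 2 * agen g 3 * agen g 4 * agen g 5 * agen g 6 * agen g 0) ^ 12)
    (y := (agen g 1 * agen g 2 * agen g 3 * agen g 4 * agen g 5 * agen g 6 * agen g 0) ^ 9)
    (by iterate 3 apply Or.inl
        exact Or.inr rfl)
  simp only [map_pow, map_mul] at this
  exact this

lemma bcls_zero : bcls g 0 = acls g 1 :=
  PresentedGroup.mk_eq_mk_of_mul_inv_mem (rels := relsEven g)
    (by iterate 2 apply Or.inl
        exact Or.inr (Or.inl rfl))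

lemma bcls_one : bcls g 1 = acls g 0 :=
  PresentedGroup.mk_eq_mk_of_mul_inv_mem (rels := relsEven g)
    (by iterate 2 apply Or.inl
        exact Or.inr (Or.inr (Or.inl rfl)))

lemma bcls_two : bcls g 2 =
    (acls g 1 * acls g 2 * acls g 3 * acls g 4 * acls g 5 * acls g 0) ^ 5 := by
  have := PresentedGroup.mk_eq_mk_of_mul_inv_mem (rels := relsEven g) (x := bgen g 2)
    (y := (agen g 1 * agen g 2 * agen g 3 * agen g 4 * agen g 5 * agen g 0) ^ 5)
    (by iterate 2 apply Or.inl
        exact Or.inr (Or.inr (Or.inr rfl)))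
  simp only [map_pow, map_mul] at this
  exact this

lemma bcls_succ {i : ℕ} (h2 : 2 ≤ i) (h : i ≤ (g - 4) / 2) : bcls g (i + 1) =
    (bcls g (i - 1) * acls g (2 * i) * acls g (2 * i + 1) * acls g (2 * i + 2) *
      acls g (2 * i + 3) * bcls g i) ^ 5 *
    (bcls g (i - 1) * acls g (2 * i) * acls g (2 * i + 1) * acls g (2 * i + 2) *
      acls g (2 * i + 3)) ^ (-6 : ℤ) := by
  have := PresentedGroup.mk_eq_mk_of_mul_inv_mem (rels := relsEven g) (x := bgen g (i + 1))
    (y := (bgen g (i - 1) * agen g (2 * i) * agen g (2 * i + 1) * agen g (2 * i + 2) *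
            agen g (2 * i + 3) * bgen g i) ^ 5 *
          (bgen g (i - 1) * agen g (2 * i) * agen g (2 * i + 1) * agen g (2 * i + 2) *
            agen g (2 * i + 3)) ^ (-6 : ℤ))
    (by apply Or.inl
        exact Or.inr ⟨i, h2, h, rfl⟩)
  simp only [map_pow, map_mul, map_zpow] at this
  exact this

/-- The homomorphism from the presented group to `O(g, ℤ/2)`. -/
def toO (hg : 8 ≤ g) (heven : Even g) : PresentedGroup (relsEven g) →* O g :=
  PresentedGroup.toGroup (f := genImage g) fun _ hr => lift_rel hg heven hr

lemma toO_mk (hg : 8 ≤ g) (heven : Even g) (x : FreeGroup (Fin g ⊕ Fin (g / 2))) :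
    toO hg heven (PresentedGroup.mk _ x) = FreeGroup.lift (genImage g) x := rfl

/-- The presented group, with the classes of `a₁, …, a_{g-1}` and `b`, as a `Setup`.  The index
shifts by one, since coordinates are numbered from `0`. -/
def presSetup (hg : 8 ≤ g) (heven : Even g) : Setup g (PresentedGroup (relsEven g)) where
  ρ := toO hg heven
  s i := acls g (i + 1)
  b := acls g 0
  hg := hg
  ρ_s i hi := by rw [acls, toO_mk, lift_agen hi rfl]
  ρ_b := by rw [acls, toO_mk, lift_agen_zero (by omega)]
  s_sq i hi := by rw [← sq, acls_sq hi]
  b_sq := by rw [← sq, acls_sq (by omega)]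
  s_comm i j hij hj := acls_comm (by omega) hj (by omega)
  s_braid i hi := acls_braid (by omega) (by omega)
  b_comm i hi h3 := (acls_comm_zero (by omega) hi (by omega)).symm
  b_braid := (acls_braid_zero (by omega)).symm
  e7 := acls_e7

lemma acls_mem (hg : 8 ≤ g) (heven : Even g) {i : ℕ} (hi : i < g) :
    acls g i ∈ (presSetup hg heven).H g := by
  rcases i with _ | i
  · exact (presSetup hg heven).b_mem (by omega)
  · exact (presSetup hg heven).s_mem hi

/-- The relators (7) and (8) express each `bᵢ` through `a₁, …, a_{g-1}, b`. -/
lemma bcls_mem (hg : 8 ≤ g) (heven : Even g) (i : ℕ) (hi : i < g / 2) :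
    bcls g i ∈ (presSetup hg heven).H g := by
  have ha : ∀ j, j < g → acls g j ∈ (presSetup hg heven).H g := fun j hj => acls_mem hg heven hj
  induction i using Nat.strong_induction_on with
  | _ i ih =>
    rcases i with _ | _ | _ | i
    · rw [bcls_zero]; exact ha 1 (by omega)
    · rw [bcls_one]; exact ha 0 (by omega)
    · rw [bcls_two]
      exact pow_mem (mul_mem (mul_mem (mul_mem (mul_mem (mul_mem (ha 1 (by omega))
        (ha 2 (by omega))) (ha 3 (by omega))) (ha 4 (by omega))) (ha 5 (by omega)))
        (ha 0 (by omega))) 5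
    · have hm := mul_mem (mul_mem (mul_mem (mul_mem (ih (i + 2 - 1) (by omega) (by omega))
        (ha (2 * (i + 2)) (by omega))) (ha (2 * (i + 2) + 1) (by omega)))
        (ha (2 * (i + 2) + 2) (by omega))) (ha (2 * (i + 2) + 3) (by omega))
      rw [bcls_succ (by omega) (by omega)]
      exact mul_mem (pow_mem (mul_mem hm (ih (i + 2) (by omega) (by omega))) 5) (zpow_mem hm _)

lemma H_eq_top (hg : 8 ≤ g) (heven : Even g) : (presSetup hg heven).H g = ⊤ := by
  rw [eq_top_iff, ← PresentedGroup.closure_range_of, Subgroup.closure_le]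
  rintro _ ⟨i | i, rfl⟩
  · have := acls_mem hg heven i.2
    rwa [acls, agen, dif_pos i.2] at this
  · have := bcls_mem hg heven i.1 i.2
    rwa [bcls, bgen, dif_pos i.2] at this

lemma toO_bijective (hg : 8 ≤ g) (heven : Even g) : Function.Bijective (toO hg heven) := by
  constructor
  · rw [injective_iff_map_eq_one]
    intro h hh
    exact Setup.P_top (X := presSetup hg heven) h (H_eq_top hg heven ▸ Subgroup.mem_top h) hh
  · intro A
    have hA : A ∈ S g := fun j hj => by rw [e_of_ge hj, act_zero]
    obtain ⟨h, -, hh⟩ := (presSetup hg heven).lift le_rfl hA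
    exact ⟨h, hh⟩

end OrthPres

/-- for even `g ≥ 8`, the group `O(g, ℤ/2)` is isomorphic to the group presented
by the generators `a₁, …, a_{g-1}, b, b₀, b₁, …, b_{(g-2)/2}` and the relators (1)–(9). -/
theorem stmt_4 (g : ℕ) (hg : 8 ≤ g) (heven : Even g) :
    Nonempty (PresentedGroup (relsEven g) ≃* Matrix.orthogonalGroup (Fin g) (ZMod 2)) :=
  ⟨MulEquiv.ofBijective (OrthPres.toO hg heven) (OrthPres.toO_bijective hg heven)⟩
end

section
/- For g = 1 and for every g ≥ 7, the abelianization of O(g, ℤ/2) (equivalently, the first integral group homology H₁(O(g, ℤ/2); ℤ)) is the trivial group. -/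
/-!
The group `O(g, ℤ/2)` contains, for every vector `v` with `v ⬝ᵥ v = 0`, the transvection
`x ↦ x + (v ⬝ᵥ x) v`. Write `eᵢ` for the standard basis vectors, and say that `v` has weight `w` if
it is a sum of `w` distinct basis vectors.

*Generation.* The transvections along vectors of weight 2 and 4 generate the group
(`mem_of_fixes`, which also covers `g = 1`, where there are none). If `A` is orthogonal and fixes
the `eᵢ` with `i` in a set `S`, and `k ∉ S`, then `v = A eₖ` has odd weight and vanishes on `S`.
Either `v = eₖ`, or `v` is not the indicator vector of the complement of `S`, because `A` fixes the
all-ones vector. In the latter case a transvection of weight 4, meeting the support of `v` in three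
points, lowers the weight of `v` by 2; a transposition finally carries weight 1 to `eₖ`
(`exists_move`). All the transvections used fix `eᵢ` for `i ∈ S`, so `S` can be enlarged.

*Conjugacy.* If `u ⬝ᵥ v = 1`, the transvections along `v` and `v + u` are conjugate, so they have
the same class in the abelianization. For `g ≥ 5` this gives a single class `t` for all vectors of
weight 2 and 4 (`cls_pair_eq`, `cls_quad_eq_pair`), and `t ^ 2 = 1`.

*An odd relation.* The product of the transvections along the seven nonzero vectors of a totally
isotropic 3-dimensional space is the identity (`orthTransv_fano`). For `g ≥ 7` the simplex code,
the dual of the Hamming code of length 7, is such a space, and its seven nonzero words all have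
weight 4. Hence `t ^ 7 = 1`, and so `t = 1` (`cls_pair_eq_one`).
-/

open Matrix

theorem two_eq_zero_vec {n : Type*} : (2 : n → ZMod 2) = 0 := by
  funext i; rfl

theorem add_self_vec {n : Type*} (x : n → ZMod 2) : x + x = 0 :=
  funext fun _ => CharTwo.add_self_eq_zero _

section

variable {n : Type*} [Fintype n] [DecidableEq n]

/-! ### Transvections -/


/-- The matrix of the transvection `x ↦ x + (v ⬝ᵥ x) v`. -/
def transv (v : n → ZMod 2) : Matrix n n (ZMod 2) := 1 + vecMulVec v v

theorem transv_mulVec (v x : n → ZMod 2) : transv v *ᵥ x = x + (v ⬝ᵥ x) • v := by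
  rw [transv, add_mulVec, one_mulVec, vecMulVec_mulVec]
  ext i; simp [mul_comm]

theorem transv_mem {v : n → ZMod 2} (hv : v ⬝ᵥ v = 0) : transv v ∈ orthogonalGroup n (ZMod 2) := by
  rw [mem_orthogonalGroup_iff]
  have h : (transv v)ᵀ = transv v := by
    simp [transv, transpose_add, transpose_vecMulVec]
  rw [h, ← Matrix.mulVec_injective.eq_iff]
  funext x
  rw [← mulVec_mulVec, transv_mulVec, transv_mulVec, one_mulVec]
  simp only [dotProduct_add, dotProduct_smul, hv, smul_zero, add_zero, add_assoc, add_self_vec]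

/-- The transvection along `v` as an element of the orthogonal group. It is orthogonal only for
`v ⬝ᵥ v = 0`; for all other `v` the value is `1` by convention. -/
noncomputable def orthTransv (v : n → ZMod 2) : orthogonalGroup n (ZMod 2) :=
  if hv : v ⬝ᵥ v = 0 then ⟨transv v, transv_mem hv⟩ else 1

theorem coe_orthTransv {v : n → ZMod 2} (hv : v ⬝ᵥ v = 0) : (orthTransv v : Matrix n n (ZMod 2)) = transv v := by
  simp [orthTransv, hv]

theorem orthTransv_mulVec {v : n → ZMod 2} (hv : v ⬝ᵥ v = 0) (x : n → ZMod 2) :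
    (orthTransv v : Matrix n n (ZMod 2)) *ᵥ x = x + (v ⬝ᵥ x) • v := by
  rw [coe_orthTransv hv, transv_mulVec]

theorem ext_mulVec {A B : orthogonalGroup n (ZMod 2)}
    (h : ∀ x, (A : Matrix n n (ZMod 2)) *ᵥ x = (B : Matrix n n (ZMod 2)) *ᵥ x) : A = B :=
  Subtype.ext (Matrix.mulVec_injective (funext h))

theorem coe_mul_mulVec (A B : orthogonalGroup n (ZMod 2)) (x : n → ZMod 2) :
    ((A * B : orthogonalGroup n (ZMod 2)) : Matrix n n (ZMod 2)) *ᵥ x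
      = (A : Matrix n n (ZMod 2)) *ᵥ ((B : Matrix n n (ZMod 2)) *ᵥ x) := by
  rw [mulVec_mulVec]; rfl

theorem dot_mulVec (A : orthogonalGroup n (ZMod 2)) (x y : n → ZMod 2) :
    ((A : Matrix n n (ZMod 2)) *ᵥ x) ⬝ᵥ ((A : Matrix n n (ZMod 2)) *ᵥ y) = x ⬝ᵥ y := by
  have h : (A : Matrix n n (ZMod 2))ᵀ * (A : Matrix n n (ZMod 2)) = 1 :=
    (mem_orthogonalGroup_iff' n (ZMod 2)).1 A.2
  rw [dotProduct_mulVec, vecMul_mulVec, ← dotProduct_mulVec, h, one_mulVec]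

/-- The transvection along `u` maps `v` to `v + u`, hence conjugates the transvection along `v` to
the one along `v + u`. -/
theorem orthTransv_conj {u v : n → ZMod 2} (hu : u ⬝ᵥ u = 0) (hv : v ⬝ᵥ v = 0) (huv : u ⬝ᵥ v = 1) :
    orthTransv (v + u) * orthTransv u = orthTransv u * orthTransv v := by
  have hvu : v ⬝ᵥ u = 1 := by rw [dotProduct_comm, huv]
  have h : (v + u) ⬝ᵥ (v + u) = 0 := by
    simp only [add_dotProduct, dotProduct_add, hu, hv, huv, hvu]; decide
  refine ext_mulVec fun x => ?_
  simp only [coe_mul_mulVec, orthTransv_mulVec hu, orthTransv_mulVec hv, orthTransv_mulVec h, add_dotProduct,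
    dotProduct_add, dotProduct_smul, hu, huv, hvu]
  generalize u ⬝ᵥ x = a
  generalize v ⬝ᵥ x = b
  ext i
  simp only [Pi.add_apply, Pi.smul_apply, smul_eq_mul]
  generalize x i = p
  generalize u i = q
  generalize v i = r
  revert a b p q r
  decide

/-- The seven transvections along the nonzero combinations of `a`, `b`, `c` have product `1` when
these vectors span a totally isotropic space: each map adds to `x` a multiple of its own vector
that depends on `x` only, and the total coefficient of each of `a`, `b`, `c` is even. -/
theorem orthTransv_fano {a b c : n → ZMod 2} (ha : a ⬝ᵥ a = 0) (hb : b ⬝ᵥ b = 0) (hc : c ⬝ᵥ c = 0)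
    (hab : a ⬝ᵥ b = 0) (hac : a ⬝ᵥ c = 0) (hbc : b ⬝ᵥ c = 0) :
    orthTransv a * (orthTransv b * (orthTransv c * (orthTransv (a + b) * (orthTransv (a + c) * (orthTransv (b + c) *
      orthTransv (a + b + c)))))) = 1 := by
  have hba := (dotProduct_comm b a).trans hab
  have hca := (dotProduct_comm c a).trans hac
  have hcb := (dotProduct_comm c b).trans hbc
  have h1 : (a + b) ⬝ᵥ (a + b) = 0 := by simp [*]
  have h2 : (a + c) ⬝ᵥ (a + c) = 0 := by simp [*]
  have h3 : (b + c) ⬝ᵥ (b + c) = 0 := by simp [*]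
  have h4 : (a + b + c) ⬝ᵥ (a + b + c) = 0 := by simp [*]
  refine ext_mulVec fun x => ?_
  simp only [coe_mul_mulVec, orthTransv_mulVec ha, orthTransv_mulVec hb, orthTransv_mulVec hc, orthTransv_mulVec h1,
    orthTransv_mulVec h2, orthTransv_mulVec h3, orthTransv_mulVec h4, add_dotProduct, dotProduct_add,
    dotProduct_smul, ha, hb, hc, hab, hac, hbc, hba, hca, hcb, smul_zero, add_zero]
  generalize a ⬝ᵥ x = r
  generalize b ⬝ᵥ x = s
  generalize c ⬝ᵥ x = t
  ext i
  have two : (2 : ZMod 2) = 0 := rfl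
  simp only [Pi.add_apply, Pi.smul_apply, smul_eq_mul, OneMemClass.coe_one, one_mulVec]
  linear_combination (a i * (2 * r + s + t) + b i * (r + 2 * s + t) + c i * (r + s + 2 * t)) * two

theorem pair_isotropic {i j : n} (hij : i ≠ j) :
    (Pi.single i 1 + Pi.single j 1 : n → ZMod 2) ⬝ᵥ (Pi.single i 1 + Pi.single j 1) = 0 := by
  simp [hij, hij.symm, CharTwo.add_self_eq_zero]

theorem quad_isotropic {i j k l : n} (hij : i ≠ j) (hik : i ≠ k) (hil : i ≠ l) (hjk : j ≠ k)
    (hjl : j ≠ l) (hkl : k ≠ l) :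
    (Pi.single i 1 + Pi.single j 1 + Pi.single k 1 + Pi.single l 1 : n → ZMod 2) ⬝ᵥ
      (Pi.single i 1 + Pi.single j 1 + Pi.single k 1 + Pi.single l 1) = 0 := by
  simp [hij, hik, hil, hjk, hjl, hkl, hij.symm, hik.symm, hil.symm, hjk.symm, hjl.symm, hkl.symm]
  decide

/-! ### Generation by transvections of weight 2 and 4 -/

/-- A vector `v` of odd weight vanishing on `S` can be moved to `eₖ` by elements of `H` fixing `eᵢ`
for all `i ∈ S`, provided that `v` is `eₖ` itself or vanishes somewhere outside `S`. The number `N`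
is the weight of `v`, on which the proof is by strong induction. -/
theorem exists_move (H : Subgroup (orthogonalGroup n (ZMod 2)))
    (h2 : ∀ i j : n, i ≠ j → orthTransv (Pi.single i 1 + Pi.single j 1) ∈ H)
    (h4 : ∀ i j k l : n, i ≠ j → i ≠ k → i ≠ l → j ≠ k → j ≠ l → k ≠ l →
      orthTransv (Pi.single i 1 + Pi.single j 1 + Pi.single k 1 + Pi.single l 1) ∈ H)
    (S : Finset n) (k : n) (hk : k ∉ S) (N : ℕ) :
    ∀ v : n → ZMod 2, (Finset.univ.filter (fun i => v i ≠ 0)).card = N → v ⬝ᵥ v = 1 →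
      (∀ i ∈ S, v i = 0) → (v = Pi.single k 1 ∨ ∃ m ∉ S, v m = 0) →
      ∃ B ∈ H, (∀ i ∈ S, (B : Matrix n n (ZMod 2)) *ᵥ Pi.single i 1 = Pi.single i 1) ∧
        (B : Matrix n n (ZMod 2)) *ᵥ v = Pi.single k 1 := by
  have z2 : ∀ z : ZMod 2, z ≠ 0 → z = 1 := by decide
  induction N using Nat.strong_induction_on with
  | _ N ih =>
  intro v hN hv hS hm
  by_cases hvk : v = Pi.single k 1
  · exact ⟨1, H.one_mem, fun i _ => one_mulVec _, hvk ▸ one_mulVec _⟩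
  obtain ⟨m, hmS, hvm⟩ := hm.resolve_left hvk
  set s := Finset.univ.filter (fun i => v i ≠ 0) with hs
  have hodd : (s.card : ZMod 2) = 1 := by
    rw [← hv, hs, Finset.card_filter, dotProduct]
    push_cast
    refine Finset.sum_congr rfl fun i _ => ?_
    generalize v i = z
    revert z; decide
  have hmem : ∀ i, i ∈ s ↔ v i = 1 := fun i => by
    simp only [hs, Finset.mem_filter, Finset.mem_univ, true_and]
    generalize v i = z
    revert z; decide
  have hne : ∀ i ∈ s, i ∉ S := fun i hi hiS => by
    rw [hmem, hS i hiS] at hi; exact zero_ne_one hi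
  have hms : m ∉ s := by rw [hmem, hvm]; exact zero_ne_one
  by_cases h3 : 2 < s.card
  · obtain ⟨a, ha, b, hb, c, hc, hab, hac, hbc⟩ := Finset.two_lt_card.1 h3
    have ham : a ≠ m := fun h => hms (h ▸ ha)
    have hbm : b ≠ m := fun h => hms (h ▸ hb)
    have hcm : c ≠ m := fun h => hms (h ▸ hc)
    -- `u` meets the support of `v` in `a`, `b`, `c`: adding it trades three points for one.
    have huH := h4 a b c m hab hac ham hbc hbm hcm
    set u : n → ZMod 2 := Pi.single a 1 + Pi.single b 1 + Pi.single c 1 + Pi.single m 1 with hu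
    have huu : u ⬝ᵥ u = 0 := by
      simp [hu, hab, hac, hbc, ham, hbm, hcm, hab.symm, hac.symm, hbc.symm, ham.symm, hbm.symm,
        hcm.symm]
      decide
    have huv : u ⬝ᵥ v = 1 := by
      simp [hu, (hmem a).1 ha, (hmem b).1 hb, (hmem c).1 hc, hvm]
      decide
    have huS : ∀ i ∈ S, u i = 0 := fun i hi => by
      have h1 : i ≠ a := fun h => hne a ha (h ▸ hi)
      have h2 : i ≠ b := fun h => hne b hb (h ▸ hi)
      have h3 : i ≠ c := fun h => hne c hc (h ▸ hi)
      have h4 : i ≠ m := fun h => hmS (h ▸ hi)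
      simp [hu, h1, h2, h3, h4]
    have hmul : (orthTransv u : Matrix n n (ZMod 2)) *ᵥ v = v + u := by
      rw [orthTransv_mulVec huu, huv, one_smul]
    have hsub : Finset.univ.filter (fun i => (v + u) i ≠ 0) ⊆ insert m (s \ {a, b, c}) := by
      intro i hi
      simp only [Finset.mem_filter, Finset.mem_univ, true_and] at hi
      rw [Finset.mem_insert, Finset.mem_sdiff]
      by_contra! hcon
      obtain ⟨him, hcon⟩ := hcon
      apply hi
      by_cases his : i ∈ s
      · have := hcon his
        have h1 := (hmem i).1 his
        simp only [Finset.mem_insert, Finset.mem_singleton] at this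
        rcases this with rfl | rfl | rfl <;>
          simp [*, Ne.symm hab, Ne.symm hac, Ne.symm hbc, CharTwo.add_self_eq_zero]
      · have h1 : i ≠ a := fun h => his (h ▸ ha)
        have h2 : i ≠ b := fun h => his (h ▸ hb)
        have h3 : i ≠ c := fun h => his (h ▸ hc)
        have h0 : v i = 0 := by
          by_contra h0; exact his ((hmem i).2 (z2 _ h0))
        simp [hu, h0, h1, h2, h3, him]
    have hcard : (Finset.univ.filter (fun i => (v + u) i ≠ 0)).card < N := by
      have e1 := Finset.card_le_card hsub
      have e2 := Finset.card_insert_le m (s \ {a, b, c})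
      have e3 : ({a, b, c} : Finset n).card = 3 := Finset.card_eq_three.2 ⟨a, b, c, hab, hac, hbc, rfl⟩
      have e4 : (s \ {a, b, c}).card = s.card - 3 := by
        rw [Finset.card_sdiff_of_subset, e3]
        intro i hi
        simp only [Finset.mem_insert, Finset.mem_singleton] at hi
        rcases hi with rfl | rfl | rfl <;> assumption
      omega
    obtain ⟨B, hB, hBS, hBv⟩ := ih _ hcard (v + u) rfl
      (by rw [← hmul, dot_mulVec, hv]) (fun i hi => by simp [hS i hi, huS i hi])
      (Or.inr ⟨a, hne a ha, by
        simp [hu, (hmem a).1 ha, hab, hac, ham, CharTwo.add_self_eq_zero]⟩)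
    refine ⟨B * orthTransv u, H.mul_mem hB huH, fun i hi => ?_, ?_⟩
    · rw [coe_mul_mulVec, orthTransv_mulVec huu, dotProduct_single, huS i hi]
      simpa using hBS i hi
    · rw [coe_mul_mulVec, hmul, hBv]
  · have h1 : s.card = 1 := by
      have : s.card ≤ 2 := by omega
      interval_cases hsc : s.card
      · exact absurd hodd (by decide)
      · rfl
      · exact absurd hodd (by decide)
    obtain ⟨j, hj⟩ := Finset.card_eq_one.1 h1
    have hvj : v = Pi.single j 1 := by
      funext i
      by_cases hij : i = j
      · subst hij
        rw [Pi.single_eq_same]; exact (hmem i).1 (by simp [hj])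
      · rw [Pi.single_eq_of_ne hij]
        by_contra h0
        exact hij (by simpa [hj] using (hmem i).2 (z2 _ h0))
    have hjk : j ≠ k := fun h => hvk (h ▸ hvj)
    have hjS : j ∉ S := hne j (by simp [hj])
    have huu : (Pi.single j 1 + Pi.single k 1 : n → ZMod 2) ⬝ᵥ (Pi.single j 1 + Pi.single k 1) = 0 := by
      simp [hjk, hjk.symm, CharTwo.add_self_eq_zero]
    refine ⟨_, h2 j k hjk, fun i hi => ?_, ?_⟩
    · have h1 : i ≠ j := fun h => hjS (h ▸ hi)
      have h2 : i ≠ k := fun h => hk (h ▸ hi)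
      rw [orthTransv_mulVec huu]
      simp [h1, h2]
    · rw [orthTransv_mulVec huu, hvj]
      simp [hjk, ← add_assoc, add_self_vec]

/-- An orthogonal matrix over `ℤ/2` fixes the all-ones vector, since that vector represents the
linear form `x ↦ x ⬝ᵥ x`. -/
theorem mulVec_one_vec (A : orthogonalGroup n (ZMod 2)) : (A : Matrix n n (ZMod 2)) *ᵥ 1 = 1 := by
  have key : ∀ x : n → ZMod 2, x ⬝ᵥ x = 1 ⬝ᵥ x := fun x => by
    simp only [dotProduct]
    refine Finset.sum_congr rfl fun i _ => ?_
    simp only [Pi.one_apply]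
    generalize x i = z
    revert z; decide
  refine dotProduct_eq _ _ fun y => ?_
  have hy : (A : Matrix n n (ZMod 2)) *ᵥ (((A⁻¹ : orthogonalGroup n (ZMod 2)) : Matrix n n (ZMod 2)) *ᵥ y) = y := by
    rw [← coe_mul_mulVec]; simp
  have h := dot_mulVec A 1 (((A⁻¹ : orthogonalGroup n (ZMod 2)) : Matrix n n (ZMod 2)) *ᵥ y)
  rw [hy, ← key, dot_mulVec, key] at h
  exact h

/-- A subgroup containing the transvections of weight 2 and 4 contains every `A` that fixes the
basis vectors outside `S`; for `S` the whole index set this is no condition on `A`. -/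
theorem mem_of_fixes (H : Subgroup (orthogonalGroup n (ZMod 2)))
    (h2 : ∀ i j : n, i ≠ j → orthTransv (Pi.single i 1 + Pi.single j 1) ∈ H)
    (h4 : ∀ i j k l : n, i ≠ j → i ≠ k → i ≠ l → j ≠ k → j ≠ l → k ≠ l →
      orthTransv (Pi.single i 1 + Pi.single j 1 + Pi.single k 1 + Pi.single l 1) ∈ H)
    (S : Finset n) (A : orthogonalGroup n (ZMod 2))
    (hA : ∀ i ∉ S, (A : Matrix n n (ZMod 2)) *ᵥ Pi.single i 1 = Pi.single i 1) : A ∈ H := by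
  induction S using Finset.induction_on generalizing A with
  | empty =>
    have : A = 1 := by
      apply Subtype.ext
      ext i j
      have := congrFun (hA j (by simp)) i
      simpa [Matrix.one_apply, Pi.single_apply] using this
    rw [this]; exact H.one_mem
  | insert k S hkS ih =>
    set v := (A : Matrix n n (ZMod 2)) *ᵥ Pi.single k 1 with hv
    have hinj : Function.Injective ((A : Matrix n n (ZMod 2)) *ᵥ ·) := fun x y hxy => by
      have := congrArg (((A⁻¹ : orthogonalGroup n (ZMod 2)) : Matrix n n (ZMod 2)) *ᵥ ·) hxy
      simpa only [← coe_mul_mulVec, inv_mul_cancel, OneMemClass.coe_one, one_mulVec] using this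
    have hvS : ∀ i ∈ (insert k S)ᶜ, v i = 0 := fun i hi => by
      have hi' := Finset.mem_compl.1 hi
      have hik : i ≠ k := fun h => hi' (h ▸ Finset.mem_insert_self _ _)
      have := dot_mulVec A (Pi.single i 1) (Pi.single k 1)
      rw [hA i hi', ← hv] at this
      simpa [hik] using this
    have hor : v = Pi.single k 1 ∨ ∃ m ∉ (insert k S)ᶜ, v m = 0 := by
      by_contra! hcon
      obtain ⟨hne, hcon⟩ := hcon
      -- Here `v` is the indicator vector of `insert k S`, which is the all-ones vector minus fixed
      -- basis vectors; so `A` fixes `v`, and `A v = v = A eₖ` contradicts `v ≠ eₖ`.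
      have hall : v + ∑ i ∈ (insert k S)ᶜ, Pi.single i 1 = 1 := by
        funext j
        rw [Pi.add_apply, Finset.sum_apply]
        simp only [Pi.single_apply, Finset.sum_ite_eq]
        by_cases hj : j ∈ (insert k S)ᶜ
        · rw [if_pos hj, hvS j hj, zero_add, Pi.one_apply]
        · have := hcon j hj
          rw [if_neg hj, add_zero, Pi.one_apply]
          revert this
          generalize v j = z
          revert z; decide
      have hfix : (A : Matrix n n (ZMod 2)) *ᵥ (∑ i ∈ (insert k S)ᶜ, Pi.single i 1) = ∑ i ∈ (insert k S)ᶜ, Pi.single i 1 := by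
        rw [mulVec_sum]
        exact Finset.sum_congr rfl fun i hi => hA i (Finset.mem_compl.1 hi)
      have hAv : (A : Matrix n n (ZMod 2)) *ᵥ v = v := by
        have h1 := mulVec_one_vec A
        rw [← hall, mulVec_add, hfix] at h1
        exact add_right_cancel h1
      exact hne (hinj (hAv.trans hv))
    obtain ⟨B, hB, hBS, hBv⟩ := exists_move H h2 h4 (insert k S)ᶜ k (by simp) _ v rfl
      (by rw [hv, dot_mulVec]; simp) hvS hor
    have hBA : B * A ∈ H := by
      refine ih _ fun i hi => ?_
      rw [coe_mul_mulVec]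
      by_cases hik : i = k
      · rw [hik, ← hv, hBv]
      · have hi' : i ∉ insert k S := by simp [hik, hi]
        rw [hA i hi', hBS i (Finset.mem_compl.2 hi')]
    exact (H.mul_mem_cancel_left hB).1 hBA

/-! ### Classes in the abelianization -/

/-- The class of the transvection along `v` in the abelianization. -/
noncomputable def cls (v : n → ZMod 2) : Abelianization (orthogonalGroup n (ZMod 2)) :=
  Abelianization.of (orthTransv v)

theorem cls_add {u v : n → ZMod 2} (hu : u ⬝ᵥ u = 0) (hv : v ⬝ᵥ v = 0) (huv : u ⬝ᵥ v = 1) :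
    cls (v + u) = cls v := by
  have h := congrArg Abelianization.of (orthTransv_conj hu hv huv)
  rw [map_mul, map_mul, mul_comm] at h
  exact mul_left_cancel h

theorem cls_mul_self {v : n → ZMod 2} (hv : v ⬝ᵥ v = 0) : cls v * cls v = 1 := by
  rw [cls, ← map_mul, ← map_one Abelianization.of]
  congr 1
  refine ext_mulVec fun x => ?_
  rw [coe_mul_mulVec, orthTransv_mulVec hv, orthTransv_mulVec hv]
  simp [hv, add_assoc, add_self_vec]

theorem cls_pair_step {i j k : n} (hij : i ≠ j) (hik : i ≠ k) :
    cls (Pi.single i 1 + Pi.single j 1) = cls (Pi.single i 1 + Pi.single k 1) := by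
  by_cases hjk : j = k
  · rw [hjk]
  rw [← cls_add (pair_isotropic hjk) (pair_isotropic hij)
    (by simp [hij, hik, hjk])]
  congr 1
  linear_combination Pi.single j 1 * two_eq_zero_vec (n := n)

theorem cls_pair_eq {i j k l : n} (hij : i ≠ j) (hkl : k ≠ l) :
    cls (Pi.single i 1 + Pi.single j 1) = cls (Pi.single k 1 + Pi.single l 1) := by
  by_cases hik : i = k
  · subst hik; exact cls_pair_step hij hkl
  rw [cls_pair_step hij hik, add_comm, cls_pair_step (Ne.symm hik) hkl]

/-- With a fifth index `m` available, adding `eⱼ + eₖ + eₗ + eₘ` turns weight 4 into weight 2. -/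
theorem cls_quad_eq {i j k l m : n} (hij : i ≠ j) (hik : i ≠ k) (hil : i ≠ l) (hjk : j ≠ k)
    (hjl : j ≠ l) (hkl : k ≠ l) (him : i ≠ m) (hjm : j ≠ m) (hkm : k ≠ m) (hlm : l ≠ m) :
    cls (Pi.single i 1 + Pi.single j 1 + Pi.single k 1 + Pi.single l 1)
      = cls (Pi.single i 1 + Pi.single m 1) := by
  rw [← cls_add (quad_isotropic hjk hjl hjm hkl hkm hlm)
    (quad_isotropic hij hik hil hjk hjl hkl) (by
      simp [hij, hik, hil, hjk, hjl, hkl, hjk.symm, hjl.symm, hkl.symm, him,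
        hjm, hkm, hlm]
      decide)]
  congr 1
  linear_combination
    (Pi.single j 1 + Pi.single k 1 + Pi.single l 1) * two_eq_zero_vec (n := n)

theorem cls_quad_eq_pair (hn : 5 ≤ Fintype.card n) {i j k l p q : n} (hij : i ≠ j) (hik : i ≠ k)
    (hil : i ≠ l) (hjk : j ≠ k) (hjl : j ≠ l) (hkl : k ≠ l) (hpq : p ≠ q) :
    cls (Pi.single i 1 + Pi.single j 1 + Pi.single k 1 + Pi.single l 1)
      = cls (Pi.single p 1 + Pi.single q 1) := by
  obtain ⟨m, hm⟩ : ∃ m, m ∉ ({i, j, k, l} : Finset n) := by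
    by_contra! h
    have h1 := Finset.card_le_card (fun x _ => h x : (Finset.univ : Finset n) ⊆ {i, j, k, l})
    have h2 : ({i, j, k, l} : Finset n).card ≤ 4 := Finset.card_le_four
    rw [Finset.card_univ] at h1
    omega
  simp only [Finset.mem_insert, Finset.mem_singleton, not_or] at hm
  obtain ⟨h1, h2, h3, h4⟩ := hm
  rw [cls_quad_eq hij hik hil hjk hjl hkl (Ne.symm h1) (Ne.symm h2) (Ne.symm h3) (Ne.symm h4)]
  exact cls_pair_eq (Ne.symm h1) hpq

theorem cls_pair_eq_one (hn : 7 ≤ Fintype.card n) {p q : n} (hpq : p ≠ q) :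
    cls (Pi.single p 1 + Pi.single q 1) = 1 := by
  obtain ⟨f⟩ : Nonempty (Fin 7 ↪ n) :=
    Function.Embedding.nonempty_of_card_le (by simpa using hn)
  have hf : ∀ i j, i ≠ j → f i ≠ f j := fun i j h => f.injective.ne h
  set e : Fin 7 → n → ZMod 2 := fun i => Pi.single (f i) 1 with he
  have hdot : ∀ i j, e i ⬝ᵥ e j = if i = j then 1 else 0 := fun i j => by
    simp [he, Pi.single_apply, eq_comm]
  set t := cls (Pi.single p 1 + Pi.single q 1) with ht
  have hq : ∀ i j k l : Fin 7, i ≠ j → i ≠ k → i ≠ l → j ≠ k → j ≠ l → k ≠ l →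
      cls (e i + e j + e k + e l) = t := fun i j k l h1 h2 h3 h4 h5 h6 =>
    cls_quad_eq_pair (by omega) (hf _ _ h1) (hf _ _ h2) (hf _ _ h3) (hf _ _ h4) (hf _ _ h5)
      (hf _ _ h6) hpq
  have two := two_eq_zero_vec (n := n)
  -- The words of the simplex code: number the coordinates `1, …, 7` (here shifted down by one);
  -- the three generators are the sets of numbers with a given binary digit equal to 1.
  have eab : (e 0 + e 2 + e 4 + e 6) + (e 1 + e 2 + e 5 + e 6) = e 0 + e 1 + e 4 + e 5 := by
    linear_combination (e 2 + e 6) * two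
  have eac : (e 0 + e 2 + e 4 + e 6) + (e 3 + e 4 + e 5 + e 6) = e 0 + e 2 + e 3 + e 5 := by
    linear_combination (e 4 + e 6) * two
  have ebc : (e 1 + e 2 + e 5 + e 6) + (e 3 + e 4 + e 5 + e 6) = e 1 + e 2 + e 3 + e 4 := by
    linear_combination (e 5 + e 6) * two
  have eabc : (e 0 + e 1 + e 4 + e 5) + (e 3 + e 4 + e 5 + e 6) = e 0 + e 1 + e 3 + e 6 := by
    linear_combination (e 4 + e 5) * two
  have key := orthTransv_fano (a := e 0 + e 2 + e 4 + e 6) (b := e 1 + e 2 + e 5 + e 6)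
    (c := e 3 + e 4 + e 5 + e 6)
    (by simp only [add_dotProduct, dotProduct_add, hdot]; decide)
    (by simp only [add_dotProduct, dotProduct_add, hdot]; decide)
    (by simp only [add_dotProduct, dotProduct_add, hdot]; decide)
    (by simp only [add_dotProduct, dotProduct_add, hdot]; decide)
    (by simp only [add_dotProduct, dotProduct_add, hdot]; decide)
    (by simp only [add_dotProduct, dotProduct_add, hdot]; decide)
  rw [eab, eac, ebc, eabc] at key
  have h7 := congrArg Abelianization.of key
  simp only [map_mul, map_one] at h7
  change cls _ * (cls _ * (cls _ * (cls _ * (cls _ * (cls _ * cls _))))) = 1 at h7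
  rw [hq 0 2 4 6, hq 1 2 5 6, hq 3 4 5 6, hq 0 1 4 5, hq 0 2 3 5, hq 1 2 3 4, hq 0 1 3 6] at h7
  any_goals decide
  have hsq : t * t = 1 := cls_mul_self (pair_isotropic hpq)
  simpa [hsq] using h7

end

/-- for `g = 1` and for every `g ≥ 7`, the abelianization of `O(g, ℤ/2)`
(equivalently `H₁(O(g, ℤ/2); ℤ)`) is the trivial group. -/
theorem stmt_5 (g : ℕ) (hg : g = 1 ∨ 7 ≤ g) :
    Subsingleton (Abelianization (Matrix.orthogonalGroup (Fin g) (ZMod 2))) := by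
  have h2 : ∀ i j : Fin g, i ≠ j → cls (Pi.single i 1 + Pi.single j 1) = 1 := by
    rcases hg with rfl | hg
    · exact fun i j h => absurd (Subsingleton.elim i j) h
    · exact fun i j h => cls_pair_eq_one (by simpa using hg) h
  have h4 : ∀ i j k l : Fin g, i ≠ j → i ≠ k → i ≠ l → j ≠ k → j ≠ l → k ≠ l →
      cls (Pi.single i 1 + Pi.single j 1 + Pi.single k 1 + Pi.single l 1) = 1 := by
    rcases hg with rfl | hg
    · exact fun i j _ _ h => absurd (Subsingleton.elim i j) h
    · intro i j k l hij hik hil hjk hjl hkl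
      rw [cls_quad_eq_pair (by simp; omega) hij hik hil hjk hjl hkl hij, h2 i j hij]
  have hall : ∀ A : orthogonalGroup (Fin g) (ZMod 2), Abelianization.of A = 1 := fun A =>
    mem_of_fixes Abelianization.of.ker h2 h4 Finset.univ A (by simp)
  refine subsingleton_of_forall_eq 1 fun x => ?_
  obtain ⟨A, rfl⟩ := QuotientGroup.mk_surjective x
  exact hall A
end
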